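/- Let d ≥ 2 and assume K ∈ L¹(T^d; ℝ^d) is divergence-free in the sense of distributions and K = ∇·V in distributions for some V ∈ L^∞(T^d; ℝ^{d×d}). Let λ > 1 and let μ₀ be a smooth probability density on T^d with 1/λ ≤ μ₀ ≤ λ. Then the equation ∂_t ρ̄_t = −∇·((K∗ρ̄_t) ρ̄_t) + Δρ̄_t on ℝ⁺ × T^d with ρ̄(0) = μ₀ has, within the class of bounded solutions, a unique solution ρ̄; this solution is smooth on ℝ⁺ × T^d and satisfies 1/λ ≤ ρ̄(t,x) ≤ λ for all t ≥ 0 and x ∈ T^d. -/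

import Mathlib

open MeasureTheory Real Set

noncomputable section

/-- The fundamental domain `[0,1]^d` of the torus `T^d = ℝ^d/ℤ^d`. -/
def cube (d : ℕ) : Set (Fin d → ℝ) := Set.Icc 0 1

/-- A function on `ℝ^d` is `ℤ^d`-periodic, i.e. is a function on the torus `T^d`. -/
def Per {d : ℕ} {E : Type*} (f : (Fin d → ℝ) → E) : Prop :=
  ∀ (k : Fin d → ℤ) (x : Fin d → ℝ), f (x + fun i => (k i : ℝ)) = f x

/-- The partial derivative `∂_α f`. -/
def pdv {d : ℕ} (α : Fin d) (f : (Fin d → ℝ) → ℝ) (x : Fin d → ℝ) : ℝ :=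
  fderiv ℝ f x (Pi.single α 1)

/-- Convolution on the torus: `(f ∗ g)(x) = ∫_{T^d} f(x−y) g(y) dy`. -/
def tconv {d : ℕ} (f g : (Fin d → ℝ) → ℝ) (x : Fin d → ℝ) : ℝ :=
  ∫ y in cube d, f (x - y) * g y

/-- `∇·K = 0` in the sense of distributions on the torus:
`∫ K·∇φ = 0` for all smooth periodic test functions `φ`. -/
def DistDivFree {d : ℕ} (K : (Fin d → ℝ) → (Fin d → ℝ)) : Prop :=
  ∀ φ : (Fin d → ℝ) → ℝ, ContDiff ℝ (⊤ : ℕ∞) φ → Per φ →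
    (∫ x in cube d, ∑ α, K x α * pdv α φ x) = 0

/-- `K = ∇·V` in the sense of distributions on the torus:
`∫ K_α φ = −Σ_β ∫ V_{α,β} ∂_β φ` for all smooth periodic test functions `φ`. -/
def IsDistDivOf {d : ℕ} (K : (Fin d → ℝ) → (Fin d → ℝ))
    (V : (Fin d → ℝ) → Fin d → Fin d → ℝ) : Prop :=
  ∀ (α : Fin d) (φ : (Fin d → ℝ) → ℝ), ContDiff ℝ (⊤ : ℕ∞) φ → Per φ →
    (∫ x in cube d, K x α * φ x) = -∑ β, ∫ x in cube d, V x α β * pdv β φ x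

/-- Weak formulation of the McKean–Vlasov equation
`∂_t ρ = −∇·((K∗ρ)ρ) + Δρ` on `ℝ⁺ × T^d`: tested against smooth periodic `φ`,
`∫ ρ_t φ − ∫ ρ_0 φ = ∫₀ᵗ ∫ ρ_s ((K∗ρ_s)·∇φ + Δφ)`. -/
def WeakMKV {d : ℕ} (K : (Fin d → ℝ) → (Fin d → ℝ)) (ρ : ℝ → (Fin d → ℝ) → ℝ) : Prop :=
  ∀ φ : (Fin d → ℝ) → ℝ, ContDiff ℝ (⊤ : ℕ∞) φ → Per φ → ∀ t, 0 ≤ t →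
    (∫ x in cube d, ρ t x * φ x) - (∫ x in cube d, ρ 0 x * φ x)
      = ∫ s in (0:ℝ)..t, ∫ x in cube d, ρ s x *
          ((∑ α, tconv (fun y => K y α) (ρ s) x * pdv α φ x)
            + ∑ α, pdv α (pdv α φ) x)

section

open scoped Topology ContDiff

namespace MKV

/-- Space-time points. -/
abbrev Pt (d : ℕ) := ℝ × (Fin d → ℝ)
/-- Bounded continuous functions on space-time. -/
abbrev X (d : ℕ) := BoundedContinuousFunction (Pt d) ℝ

variable {d : ℕ}

/-- Data of a kernel operator `w ↦ ∫ m p o * w (A p o)`. -/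
structure Ker (d : ℕ) (Ω : Type) [MeasurableSpace Ω] (ν : Measure Ω) where
  m : Pt d → Ω → ℝ
  A : Pt d → Ω → Pt d
  g : Ω → ℝ
  hg : Integrable g ν
  hm : ∀ o, Continuous fun p => m p o
  hA : ∀ o, Continuous fun p => A p o
  mm : ∀ p, AEStronglyMeasurable (m p) ν
  mA : ∀ p, Measurable (A p)
  hb : ∀ p, ∀ᵐ o ∂ν, |m p o| ≤ g o

namespace Ker
variable {Ω : Type} [MeasurableSpace Ω] {ν : Measure Ω} (k : Ker d Ω ν)

lemma meas (w : X d) (p : Pt d) :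
    AEStronglyMeasurable (fun o => k.m p o * w (k.A p o)) ν :=
  (k.mm p).mul ((w.continuous.measurable.comp (k.mA p)).aestronglyMeasurable)

lemma bd (w : X d) (p : Pt d) : ∀ᵐ o ∂ν, ‖k.m p o * w (k.A p o)‖ ≤ k.g o * ‖w‖ := by
  filter_upwards [k.hb p] with o h
  rw [norm_mul]
  have h1 := w.norm_coe_le_norm (k.A p o)
  have h2 : ‖k.m p o‖ ≤ k.g o := h
  have h3 := norm_nonneg (k.m p o)
  gcongr
  exact h3.trans h2

lemma integrable (w : X d) (p : Pt d) : Integrable (fun o => k.m p o * w (k.A p o)) ν :=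
  (k.hg.mul_const ‖w‖).mono' (k.meas w p) (k.bd w p)

lemma int_bd (w : X d) (p : Pt d) : ‖∫ o, k.m p o * w (k.A p o) ∂ν‖ ≤ (∫ o, k.g o ∂ν) * ‖w‖ := by
  rw [← integral_mul_const]
  exact norm_integral_le_of_norm_le (k.hg.mul_const _) (k.bd w p)

lemma cont (w : X d) : Continuous fun p => ∫ o, k.m p o * w (k.A p o) ∂ν := by
  refine continuous_of_dominated (k.meas w) (k.bd w) (k.hg.mul_const _) ?_
  filter_upwards with o
  exact (k.hm o).mul (w.continuous.comp (k.hA o))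

/-- The operator. -/
def op : X d →L[ℝ] X d :=
  LinearMap.mkContinuous
    { toFun := fun w => BoundedContinuousFunction.ofNormedAddCommGroup
        (fun p => ∫ o, k.m p o * w (k.A p o) ∂ν) (k.cont w) _ (k.int_bd w)
      map_add' := by
        intro v w
        ext p
        simp only [BoundedContinuousFunction.coe_ofNormedAddCommGroup,
          BoundedContinuousFunction.coe_add, Pi.add_apply, mul_add]
        exact integral_add (k.integrable v p) (k.integrable w p)
      map_smul' := by
        intro c w
        ext p
        simp only [BoundedContinuousFunction.coe_ofNormedAddCommGroup,
          BoundedContinuousFunction.coe_smul, smul_eq_mul, RingHom.id_apply]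
        rw [← integral_const_mul]
        congr 1; ext o; ring } (∫ o, |k.g o| ∂ν) (by
      intro w
      refine (BoundedContinuousFunction.norm_le (by positivity)).2 fun p => ?_
      refine (k.int_bd w p).trans ?_
      gcongr
      · exact k.hg
      · exact k.hg.abs
      · exact le_abs_self _)

lemma op_apply (w : X d) (p : Pt d) : k.op w p = ∫ o, k.m p o * w (k.A p o) ∂ν := rfl

end Ker

/-- spatial translation -/
def tau (h : Fin d → ℝ) : X d →L[ℝ] X d :=
  LinearMap.mkContinuous
    { toFun := fun w => w.compContinuous ⟨fun p : Pt d => (p.1, p.2 + h), by fun_prop⟩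
      map_add' := fun v w => by ext p; rfl
      map_smul' := fun c w => by ext p; rfl } 1 (by
      intro w
      rw [one_mul]
      exact (BoundedContinuousFunction.norm_le (norm_nonneg _)).2 fun p => w.norm_coe_le_norm _)

@[simp] lemma tau_apply (h : Fin d → ℝ) (w : X d) (p : Pt d) : tau h w p = w (p.1, p.2 + h) := rfl

lemma tau_zero (w : X d) : tau 0 w = w := by ext p; simp

lemma tau_tau (h k : Fin d → ℝ) (w : X d) : tau h (tau k w) = tau (h + k) w := by
  ext p; simp [add_assoc]

lemma tau_mul (h : Fin d → ℝ) (v w : X d) : tau h (v * w) = tau h v * tau h w := by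
  ext p; simp

/-- smooth vectors of the translation group -/
def Sm (u : X d) : Prop := ContDiff ℝ ∞ (fun h => tau h u)

/-- spatial derivative of a smooth vector -/
def D (i : Fin d) (u : X d) : X d := fderiv ℝ (fun h => tau h u) 0 (Pi.single i 1)

lemma Sm.differentiable {u : X d} (hu : Sm u) : Differentiable ℝ (fun h => tau h u) :=
  ContDiff.differentiable hu (by simp)

lemma Sm.tau_D {u : X d} (hu : Sm u) (i : Fin d) (h : Fin d → ℝ) :
    tau h (D i u) = fderiv ℝ (fun h => tau h u) h (Pi.single i 1) := by
  have h1 : HasFDerivAt (fun k => tau k u) (fderiv ℝ (fun h => tau h u) 0) 0 :=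
    (hu.differentiable 0).hasFDerivAt
  have h2 : HasFDerivAt (fun k => tau h (tau k u)) ((tau h).comp (fderiv ℝ (fun h => tau h u) 0)) 0 :=
    (tau h).hasFDerivAt.comp 0 h1
  have h3 : HasFDerivAt (fun k => tau (h + k) u) (fderiv ℝ (fun h => tau h u) h) 0 := by
    have := (hu.differentiable (h + 0)).hasFDerivAt
    have h4 := (hasFDerivAt_comp_add_left (f := fun h => tau h u) (x := 0) h).2 this
    simpa using h4
  simp only [tau_tau] at h2
  have := h2.unique h3
  rw [← this]; rfl

lemma Sm.dd {u : X d} (hu : Sm u) (i : Fin d) : Sm (D i u) := by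
  unfold Sm
  simp only [hu.tau_D i]
  exact (ContDiff.fderiv_right (m := ∞) hu (by simp)).clm_apply contDiff_const

lemma Sm.add {u v : X d} (hu : Sm u) (hv : Sm v) : Sm (u + v) := by
  unfold Sm
  simp only [map_add]
  exact ContDiff.add hu hv

lemma Sm.zero : Sm (0 : X d) := by
  unfold Sm
  simp only [map_zero]
  exact contDiff_const

lemma Sm.neg {u : X d} (hu : Sm u) : Sm (-u) := by
  unfold Sm
  simp only [map_neg]
  exact ContDiff.neg hu

lemma Sm.sum {ι : Type} (s : Finset ι) {u : ι → X d} (hu : ∀ i ∈ s, Sm (u i)) :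
    Sm (∑ i ∈ s, u i) := by
  unfold Sm
  simp only [map_sum]
  exact ContDiff.sum hu

lemma Sm.mul {u v : X d} (hu : Sm u) (hv : Sm v) : Sm (u * v) := by
  unfold Sm
  simp only [tau_mul]
  exact ContDiff.mul hu hv

/-- commuting with translations -/
def Comm (L : X d →L[ℝ] X d) : Prop := ∀ h w, L (tau h w) = tau h (L w)

lemma Sm.clm {u : X d} (hu : Sm u) {L : X d →L[ℝ] X d} (hL : Comm L) : Sm (L u) := by
  unfold Sm
  simp only [← hL _ _]
  exact L.contDiff.comp hu

lemma D_add {u v : X d} (hu : Sm u) (hv : Sm v) (i : Fin d) : D i (u + v) = D i u + D i v := by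
  unfold D
  simp only [map_add]
  rw [fderiv_fun_add (hu.differentiable 0) (hv.differentiable 0)]; rfl

lemma D_neg {u : X d} (i : Fin d) : D i (-u) = - D i u := by
  unfold D
  simp only [map_neg]
  rw [fderiv_fun_neg]; rfl

lemma D_sum {ι : Type} (s : Finset ι) {u : ι → X d} (hu : ∀ j ∈ s, Sm (u j)) (i : Fin d) :
    D i (∑ j ∈ s, u j) = ∑ j ∈ s, D i (u j) := by
  unfold D
  simp only [map_sum]
  rw [fderiv_fun_sum (fun j hj => (hu j hj).differentiable 0)]; simp

lemma D_mul {u v : X d} (hu : Sm u) (hv : Sm v) (i : Fin d) :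
    D i (u * v) = D i u * v + u * D i v := by
  unfold D
  simp only [tau_mul]
  rw [fderiv_fun_mul (hu.differentiable 0) (hv.differentiable 0)]
  simp only [tau_zero, add_apply, smul_apply, smul_eq_mul]
  ring

lemma D_clm {u : X d} (hu : Sm u) {L : X d →L[ℝ] X d} (hL : Comm L) (i : Fin d) :
    D i (L u) = L (D i u) := by
  unfold D
  simp only [← hL _ _]
  have := (L.hasFDerivAt (x := tau 0 u)).comp (0 : Fin d → ℝ) (hu.differentiable 0).hasFDerivAt
  have h2 := this.fderiv
  change fderiv ℝ (⇑L ∘ fun h => tau h u) 0 _ = _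
  rw [h2]; rfl

/-- evaluation functional -/
def ev (p : Pt d) : X d →L[ℝ] ℝ := BoundedContinuousFunction.evalCLM ℝ p

@[simp] lemma ev_apply (p : Pt d) (w : X d) : ev p w = w p := rfl

lemma Sm.contDiff_slice {u : X d} (hu : Sm u) (t : ℝ) : ContDiff ℝ ∞ (fun x => u (t, x)) := by
  have : (fun x => u (t, x)) = fun x => ev (t, 0) (tau x u) := by
    ext x; simp
  rw [this]
  exact (ev (t, 0)).contDiff.comp hu

lemma Sm.hasFDerivAt_slice {u : X d} (hu : Sm u) (t : ℝ) (x : Fin d → ℝ) :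
    HasFDerivAt (fun x => u (t, x))
      (∑ i, (D i u (t, x)) • ContinuousLinearMap.proj (R := ℝ) (φ := fun _ : Fin d => ℝ) i) x := by
  have e : (fun x => u (t, x)) = fun x => ev (t, 0) (tau x u) := by
    ext x; simp
  rw [e]
  have h := (ev (t, 0)).hasFDerivAt.comp x (hu.differentiable x).hasFDerivAt
  refine h.congr_fderiv ?_
  symm
  refine ContinuousLinearMap.ext fun v => ?_
  have hv : v = ∑ i, v i • (Pi.single i (1:ℝ) : Fin d → ℝ) := by
    ext j; simp [Finset.sum_apply, Pi.single_apply]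
  conv_rhs => rw [hv]
  rw [map_sum]
  simp only [sum_apply, map_smul]
  refine Finset.sum_congr rfl fun i _ => ?_
  have := hu.tau_D i x
  simp only [ContinuousLinearMap.comp_apply, ← this, smul_apply]
  simp [mul_comm]

lemma Sm.pdv_eq {u : X d} (hu : Sm u) (t : ℝ) (x : Fin d → ℝ) (i : Fin d) :
    pdv i (fun x => u (t, x)) x = D i u (t, x) := by
  unfold pdv
  rw [(hu.hasFDerivAt_slice t x).fderiv]
  simp [sum_apply, Pi.single_apply]

end MKV

end

section
open scoped Topology ContDiff
namespace MKV
variable {d : ℕ}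

lemma taylor2 {E : Type*} [NormedAddCommGroup E] [NormedSpace ℝ E] {f : E → ℝ}
    (hf : ContDiff ℝ ∞ f) {C : ℝ} (hC : ∀ x, ‖fderiv ℝ (fderiv ℝ f) x‖ ≤ C) (y k : E) :
    ‖f (y + k) - f y - fderiv ℝ f y k‖ ≤ C * ‖k‖ ^ 2 := by
  have hd : Differentiable ℝ f := hf.differentiable (by simp)
  have hd1 : ContDiff ℝ ∞ (fderiv ℝ f) := ContDiff.fderiv_right (m := ∞) hf (by simp)
  have hd2 : Differentiable ℝ (fderiv ℝ f) := hd1.differentiable (by simp)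
  have hC0 : 0 ≤ C := le_trans (by positivity) (hC y)
  have h1 : ∀ z ∈ Metric.closedBall y ‖k‖, ‖fderiv ℝ f z - fderiv ℝ f y‖ ≤ C * ‖k‖ := by
    intro z hz
    have := Convex.norm_image_sub_le_of_norm_fderiv_le (𝕜 := ℝ) (f := fderiv ℝ f) (s := univ)
      (fun x _ => hd2 x) (fun x _ => hC x) convex_univ (mem_univ y) (mem_univ z)
    refine this.trans ?_
    rw [mem_closedBall_iff_norm] at hz
    gcongr
  have h2 := Convex.norm_image_sub_le_of_norm_fderiv_le' (𝕜 := ℝ) (f := f)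
    (φ := fderiv ℝ f y) (fun x _ => hd x) h1 (convex_closedBall y ‖k‖)
    (x := y) (y := y + k) (by simp) (by simp)
  simp only [add_sub_cancel_left] at h2
  calc _ ≤ _ := h2
    _ = _ := by ring

lemma hasFDerivAt_of_quad {E F : Type*} [NormedAddCommGroup E] [NormedSpace ℝ E]
    [NormedAddCommGroup F] [NormedSpace ℝ F] {f : E → F} {f' : E →L[ℝ] F} {x : E} {C : ℝ}
    (h : ∀ k, ‖f (x + k) - f x - f' k‖ ≤ C * ‖k‖ ^ 2) : HasFDerivAt f f' x := by
  rw [hasFDerivAt_iff_isLittleO_nhds_zero]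
  have h1 : (fun k => f (x + k) - f x - f' k) =O[𝓝 0] fun k : E => ‖k‖ ^ 2 := by
    refine Asymptotics.IsBigO.of_bound C (Filter.Eventually.of_forall fun k => ?_)
    simpa using h k
  refine h1.trans_isLittleO ?_
  have : (fun k : E => ‖k‖ ^ 2) =o[𝓝 0] fun k => ‖k‖ ^ 1 :=
    (Asymptotics.isLittleO_pow_pow (by norm_num : 1 < 2)).comp_tendsto (tendsto_norm_zero)
  simp only [pow_one] at this
  exact this.of_norm_right

/-- admissible nonlinearities -/
def Nice (ψ : ℝ → ℝ) : Prop := ContDiff ℝ ∞ ψ ∧ HasCompactSupport ψ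

lemma Nice.deriv {ψ : ℝ → ℝ} (h : Nice ψ) : Nice (deriv ψ) :=
  ⟨(contDiff_infty_iff_deriv.1 h.1).2, h.2.deriv⟩

lemma Nice.bdd {ψ : ℝ → ℝ} (h : Nice ψ) : ∃ C, ∀ x, ‖ψ x‖ ≤ C :=
  h.2.exists_bound_of_continuous h.1.continuous

/-- Nemytskii operator -/
def nem (ψ : ℝ → ℝ) (h : Nice ψ) (v : X d) : X d :=
  BoundedContinuousFunction.ofNormedAddCommGroup (fun p => ψ (v p))
    (h.1.continuous.comp v.continuous) (Classical.choose h.bdd)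
    (fun _ => Classical.choose_spec h.bdd _)

@[simp] lemma nem_apply (ψ : ℝ → ℝ) (h : Nice ψ) (v : X d) (p : Pt d) : nem ψ h v p = ψ (v p) := rfl

lemma tau_nem (ψ : ℝ → ℝ) (h : Nice ψ) (v : X d) (k : Fin d → ℝ) :
    tau k (nem ψ h v) = nem ψ h (tau k v) := by ext p; simp

lemma nem_quad (ψ : ℝ → ℝ) (h : Nice ψ) : ∃ C, 0 ≤ C ∧ ∀ a b,
    ‖ψ (a + b) - ψ a - _root_.deriv ψ a * b‖ ≤ C * ‖b‖ ^ 2 := by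
  obtain ⟨C, hC⟩ := h.deriv.deriv.bdd
  refine ⟨C, (norm_nonneg _).trans (hC 0), fun a b => ?_⟩
  have hd1 : Differentiable ℝ (_root_.deriv ψ) := h.deriv.1.differentiable (by simp)
  have h2 : ∀ x, ‖fderiv ℝ (fderiv ℝ ψ) x‖ ≤ C := by
    intro x
    refine le_trans (le_of_eq ?_) (hC x)
    have e : fderiv ℝ ψ = fun x => ContinuousLinearMap.toSpanSingleton ℝ (_root_.deriv ψ x) := by
      ext x; simp
    have : fderiv ℝ (fderiv ℝ ψ) x = (ContinuousLinearMap.toSpanSingleton ℝ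
      (ContinuousLinearMap.toSpanSingleton ℝ (_root_.deriv (_root_.deriv ψ) x)) : ℝ →L[ℝ] ℝ →L[ℝ] ℝ) := by
      rw [e]
      have := (ContinuousLinearMap.toSpanSingletonCLE (𝕜 := ℝ) (E := ℝ)).toContinuousLinearMap.hasFDerivAt.comp x (hd1 x).hasFDerivAt
      have h3 := this.fderiv
      refine Eq.trans h3 ?_
      ext; simp
    rw [this, ContinuousLinearMap.norm_toSpanSingleton, ContinuousLinearMap.norm_toSpanSingleton]
  have := taylor2 h.1 h2 a b
  rw [fderiv_eq_smul_deriv] at this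
  rwa [smul_eq_mul, mul_comm b] at this

lemma nem_hasFDerivAt (ψ : ℝ → ℝ) (h : Nice ψ) (v : X d) :
    HasFDerivAt (nem ψ h) (ContinuousLinearMap.mul ℝ (X d) (nem _ h.deriv v)) v := by
  obtain ⟨C, hC0, hC⟩ := nem_quad ψ h
  refine hasFDerivAt_of_quad (C := C) fun k => ?_
  refine (BoundedContinuousFunction.norm_le (by positivity)).2 fun p => ?_
  refine le_trans (hC (v p) (k p)) ?_
  have := k.norm_coe_le_norm p
  gcongr

lemma nem_contDiff (ψ : ℝ → ℝ) (h : Nice ψ) : ContDiff ℝ ∞ (nem (d := d) ψ h) := by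
  rw [contDiff_infty]
  intro n
  induction n generalizing ψ with
  | zero =>
    have : Differentiable ℝ (nem (d := d) ψ h) := fun v => (nem_hasFDerivAt ψ h v).differentiableAt
    exact contDiff_zero.2 this.continuous
  | succ n ih =>
    refine contDiff_succ_iff_hasFDerivAt.2 ⟨_, ?_, nem_hasFDerivAt ψ h⟩
    have hb : IsBoundedLinearMap ℝ (fun v : X d => ContinuousLinearMap.mul ℝ (X d) v) :=
      (ContinuousLinearMap.mul ℝ (X d)).isBoundedLinearMap
    exact hb.contDiff.comp (ih _ h.deriv)

lemma Sm.nem {u : X d} (hu : Sm u) (ψ : ℝ → ℝ) (h : Nice ψ) : Sm (nem ψ h u) := by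
  unfold Sm
  simp only [tau_nem]
  exact (nem_contDiff ψ h).comp hu

lemma D_nem {u : X d} (hu : Sm u) (ψ : ℝ → ℝ) (h : Nice ψ) (i : Fin d) :
    D i (MKV.nem ψ h u) = MKV.nem _ h.deriv u * D i u := by
  unfold D
  simp only [tau_nem]
  have := (nem_hasFDerivAt ψ h (tau 0 u)).comp (0 : Fin d → ℝ) (hu.differentiable 0).hasFDerivAt
  change fderiv ℝ (MKV.nem ψ h ∘ fun h => tau h u) 0 _ = _
  rw [this.fderiv, tau_zero]; rfl

/-! periodic functions -/

lemma exists_cube (x : Fin d → ℝ) : ∃ k : Fin d → ℤ, (x + fun i => (k i : ℝ)) ∈ cube d := by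
  refine ⟨fun i => -⌊x i⌋, ?_, ?_⟩
  · intro i
    have := Int.floor_le (x i)
    simpa using this
  · intro i
    have := Int.lt_floor_add_one (x i)
    simp; linarith

lemma isCompact_cube : IsCompact (cube d) := isCompact_Icc

lemma per_bdd {E : Type*} [NormedAddCommGroup E] {f : (Fin d → ℝ) → E} (hc : Continuous f)
    (hp : Per f) : ∃ C, ∀ x, ‖f x‖ ≤ C := by
  obtain ⟨C, hC⟩ := (isCompact_cube (d := d)).exists_bound_of_continuousOn hc.continuousOn
  refine ⟨C, fun x => ?_⟩
  obtain ⟨k, hk⟩ := exists_cube x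
  rw [← hp k x]
  exact hC _ hk

lemma Per.fderiv {E : Type*} [NormedAddCommGroup E] [NormedSpace ℝ E] {f : (Fin d → ℝ) → E}
    (hp : Per f) : Per (fderiv ℝ f) := by
  intro k x
  rw [← fderiv_comp_add_right]
  congr 1
  ext y
  rw [hp k y]

lemma Per.pdv {f : (Fin d → ℝ) → ℝ} (hp : Per f) (i : Fin d) : Per (pdv i f) := by
  intro k x
  unfold _root_.pdv
  rw [Per.fderiv hp k x]

lemma contDiff_pdv {f : (Fin d → ℝ) → ℝ} (hf : ContDiff ℝ ∞ f) (i : Fin d) :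
    ContDiff ℝ ∞ (pdv i f) :=
  (ContDiff.fderiv_right (m := ∞) hf (by simp)).clm_apply contDiff_const

/-- smooth periodic function -/
def SP (f : (Fin d → ℝ) → ℝ) : Prop := ContDiff ℝ ∞ f ∧ Per f

lemma SP.dv {f : (Fin d → ℝ) → ℝ} (hf : SP f) (i : Fin d) : SP (pdv i f) :=
  ⟨contDiff_pdv hf.1 i, Per.pdv hf.2 i⟩

/-- a smooth periodic function as an element of `X`. -/
def pX (f : (Fin d → ℝ) → ℝ) (hf : SP f) : X d :=
  BoundedContinuousFunction.ofNormedAddCommGroup (fun p => f p.2)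
    (hf.1.continuous.comp continuous_snd) (Classical.choose (per_bdd hf.1.continuous hf.2))
    (fun _ => Classical.choose_spec (per_bdd hf.1.continuous hf.2) _)

@[simp] lemma pX_apply (f : (Fin d → ℝ) → ℝ) (hf : SP f) (p : Pt d) : pX f hf p = f p.2 := rfl

lemma fderiv_eq_sum (f : (Fin d → ℝ) → ℝ) (x v : Fin d → ℝ) :
    fderiv ℝ f x v = ∑ i, v i * pdv i f x := by
  have hv : v = ∑ i, v i • (Pi.single i (1:ℝ) : Fin d → ℝ) := by
    ext j; simp [Finset.sum_apply, Pi.single_apply]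
  conv_lhs => rw [hv]
  rw [map_sum]
  simp [pdv]

lemma pX_hasFDerivAt (f : (Fin d → ℝ) → ℝ) (hf : SP f) (h : Fin d → ℝ) :
    HasFDerivAt (fun h => tau h (pX f hf))
      (∑ i, (ContinuousLinearMap.smulRightL ℝ (Fin d → ℝ) (X d)
        (ContinuousLinearMap.proj (R := ℝ) (φ := fun _ : Fin d => ℝ) i)) (tau h (pX _ (hf.dv i)))) h := by
  have hd1 : ContDiff ℝ ∞ (fderiv ℝ f) := ContDiff.fderiv_right (m := ∞) hf.1 (by simp)
  have hd2 : ContDiff ℝ ∞ (fderiv ℝ (fderiv ℝ f)) := ContDiff.fderiv_right (m := ∞) hd1 (by simp)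
  obtain ⟨C, hC⟩ := per_bdd hd2.continuous (Per.fderiv (Per.fderiv hf.2))
  have hC0 : 0 ≤ C := le_trans (by positivity) (hC 0)
  refine hasFDerivAt_of_quad (C := C) fun k => ?_
  refine (BoundedContinuousFunction.norm_le (by positivity)).2 fun p => ?_
  refine le_trans (le_of_eq ?_) (taylor2 hf.1 hC (p.2 + h) k)
  rw [fderiv_eq_sum]
  simp [sum_apply, BoundedContinuousFunction.coe_sum, add_assoc]

lemma pX_sm (f : (Fin d → ℝ) → ℝ) (hf : SP f) : Sm (pX f hf) := by
  unfold Sm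
  rw [contDiff_infty]
  intro n
  induction n generalizing f with
  | zero =>
    have : Differentiable ℝ (fun h => tau h (pX f hf)) :=
      fun v => (pX_hasFDerivAt f hf v).differentiableAt
    exact contDiff_zero.2 this.continuous
  | succ n ih =>
    refine contDiff_succ_iff_hasFDerivAt.2 ⟨_, ?_, pX_hasFDerivAt f hf⟩
    refine ContDiff.sum fun i _ => ?_
    exact ContinuousLinearMap.contDiff _ |>.comp (ih _ (hf.dv i))

lemma D_pX (f : (Fin d → ℝ) → ℝ) (hf : SP f) (i : Fin d) : D i (pX f hf) = pX _ (hf.dv i) := by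
  ext p
  rw [← (pX_sm f hf).pdv_eq p.1 p.2 i]
  rfl

end MKV

end

section
set_option linter.unusedVariables false
open scoped Topology ContDiff
namespace MKV
variable {d : ℕ}

/-- One-dimensional Gaussian density -/
def g1 (s : ℝ) : ℝ := (√(2 * π))⁻¹ * rexp (-s ^ 2 / 2)

lemma g1_eq : g1 = ProbabilityTheory.gaussianPDFReal 0 1 := by
  ext s; simp [g1, ProbabilityTheory.gaussianPDFReal]

lemma g1_integrable : Integrable g1 := by
  rw [g1_eq]; exact ProbabilityTheory.integrable_gaussianPDFReal 0 1

lemma g1_integral : ∫ s, g1 s = 1 := by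
  rw [g1_eq]; exact ProbabilityTheory.integral_gaussianPDFReal_eq_one 0 (by norm_num)

lemma g1_nonneg (s : ℝ) : 0 ≤ g1 s := by unfold g1; positivity

lemma g1_integrable_abs : Integrable fun s => |s| * g1 s := by
  have h := (integrable_mul_exp_neg_mul_sq (b := 1/2) (by norm_num)).abs.const_mul (√(2 * π))⁻¹
  refine h.congr (Filter.Eventually.of_forall fun s => ?_)
  simp only [g1, abs_mul, abs_exp]
  rw [show -(1/2 : ℝ) * s ^ 2 = -s^2/2 by ring]
  ring

/-- standard Gaussian density -/
def G (y : Fin d → ℝ) : ℝ := ∏ i, g1 (y i)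

lemma G_nonneg (y : Fin d → ℝ) : 0 ≤ G y := Finset.prod_nonneg fun i _ => g1_nonneg _

lemma G_integrable : Integrable (G (d := d)) :=
  Integrable.fintype_prod (f := fun _ => g1) fun _ => g1_integrable

lemma G_integral : ∫ y : Fin d → ℝ, G y = 1 := by
  unfold G
  rw [integral_fintype_prod_volume_eq_prod (fun _ => g1)]
  simp [g1_integral]

lemma G_eq (y : Fin d → ℝ) : G y = (√(2 * π))⁻¹ ^ d * rexp (-(∑ i, y i ^ 2) / 2) := by
  unfold G g1
  rw [Finset.prod_mul_distrib, ← exp_sum, Finset.prod_const, Finset.card_univ, Fintype.card_fin,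
    ← Finset.sum_div, Finset.sum_neg_distrib]

lemma G_contDiff : ContDiff ℝ ∞ (G (d := d)) := by
  have : G (d := d) = fun y => (√(2 * π))⁻¹ ^ d * rexp (-(∑ i, y i ^ 2) / 2) := funext G_eq
  rw [this]
  fun_prop

lemma G_cont : Continuous (G (d := d)) := G_contDiff.continuous

lemma G_fderiv (y : Fin d → ℝ) (i : Fin d) : fderiv ℝ G y (Pi.single i 1) = - (y i * G y) := by
  have h0 : HasFDerivAt (G (d := d)) (fderiv ℝ G y) y :=
    (G_contDiff.differentiable (by simp) y).hasFDerivAt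
  have h1 : HasDerivAt (fun s : ℝ => y + s • (Pi.single i 1 : Fin d → ℝ)) (Pi.single i 1) 0 := by
    simpa using ((hasDerivAt_id (0:ℝ)).smul_const (Pi.single i 1 : Fin d → ℝ)).const_add y
  have h2 : HasDerivAt (fun s : ℝ => G (y + s • (Pi.single i 1 : Fin d → ℝ)))
      (fderiv ℝ G y (Pi.single i 1)) 0 := by
    have h0' : HasFDerivAt (G (d := d)) (fderiv ℝ G y) (y + (0:ℝ) • (Pi.single i 1 : Fin d → ℝ)) := by
      simpa using h0
    exact HasFDerivAt.comp_hasDerivAt (l := G (d := d)) (f := fun s : ℝ => y + s • (Pi.single i 1 : Fin d → ℝ)) 0 h0' h1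
  have h3 : (fun s : ℝ => G (y + s • (Pi.single i 1 : Fin d → ℝ))) =
      fun s : ℝ => G y * rexp (-(2 * s * y i + s ^ 2) / 2) := by
    ext s
    rw [G_eq, G_eq, mul_assoc, ← exp_add]
    congr 2
    have : ∑ j, (y + s • (Pi.single i 1 : Fin d → ℝ)) j ^ 2 = ∑ j, y j ^ 2 + (2 * s * y i + s ^ 2) := by
      have e : ∀ j, (y + s • (Pi.single i 1 : Fin d → ℝ)) j ^ 2
        = y j ^ 2 + if j = i then (2 * s * y i + s ^ 2) else 0 := by
        intro j
        by_cases h : j = i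
        · subst h; simp; ring
        · simp [h]
      simp_rw [e, Finset.sum_add_distrib]
      simp
    rw [this]; ring
  rw [h3] at h2
  have h4 : HasDerivAt (fun s : ℝ => G y * rexp (-(2 * s * y i + s ^ 2) / 2)) (-(y i * G y)) 0 := by
    have h5 : HasDerivAt (fun s : ℝ => -(2 * s * y i + s ^ 2) / 2) (- y i) 0 := by
      have a1 : HasDerivAt (fun s : ℝ => s) 1 0 := hasDerivAt_id 0
      have := ((((a1.const_mul 2).mul_const (y i)).add (a1.pow 2)).neg).div_const 2
      refine HasDerivAt.congr_deriv this ?_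
      simp; ring
    have := (h5.exp).const_mul (G y)
    refine HasDerivAt.congr_deriv this ?_
    simp; ring
  exact h2.unique h4

lemma yG_integrable (i : Fin d) : Integrable fun y : Fin d → ℝ => |y i| * G y := by
  have h := Integrable.fintype_prod (ι := Fin d) (μ := fun _ => (volume : Measure ℝ))
    (f := fun j s => (if j = i then |s| else 1) * g1 s) (fun j => by
      by_cases hj : j = i
      · simpa [hj] using g1_integrable_abs
      · simpa [hj] using g1_integrable)
  refine h.congr (Filter.Eventually.of_forall fun y => ?_)
  simp only [G, Finset.prod_mul_distrib, Finset.prod_ite_eq', Finset.mem_univ, if_true]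

lemma ygm (w : X d) (s r : ℝ) (x : Fin d → ℝ) : Continuous fun y : Fin d → ℝ => w (s, x + r • y) := by
  fun_prop

lemma int_G_mul (w : X d) (s r : ℝ) (x : Fin d → ℝ) :
    Integrable fun y : Fin d → ℝ => G y * w (s, x + r • y) :=
  G_integrable.mul_bdd (c := ‖w‖) (ygm w s r x).aestronglyMeasurable
    (Filter.Eventually.of_forall fun y => w.norm_coe_le_norm _)

lemma yG_integrable' (i : Fin d) : Integrable fun y : Fin d → ℝ => y i * G y := by
  refine (yG_integrable i).mono' ?_ (Filter.Eventually.of_forall fun y => ?_)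
  · exact ((continuous_apply i).mul G_cont).aestronglyMeasurable
  · rw [norm_mul, norm_of_nonneg (G_nonneg y)]; rfl

lemma int_yG_mul (w : X d) (s r : ℝ) (x : Fin d → ℝ) (i : Fin d) :
    Integrable fun y : Fin d → ℝ => (y i * G y) * w (s, x + r • y) :=
  (yG_integrable' i).mul_bdd (c := ‖w‖) (ygm w s r x).aestronglyMeasurable
    (Filter.Eventually.of_forall fun y => w.norm_coe_le_norm _)

/-- Gaussian integration by parts -/
lemma gauss_ibp {w : X d} (hw : Sm w) (s r : ℝ) (x : Fin d → ℝ) (i : Fin d) :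
    ∫ y : Fin d → ℝ, (y i * G y) * w (s, x + r • y) =
      r * ∫ y : Fin d → ℝ, G y * D i w (s, x + r • y) := by
  have hfd : ∀ y : Fin d → ℝ, HasFDerivAt (fun y : Fin d → ℝ => w (s, x + r • y))
      ((∑ i, (D i w (s, x + r • y)) • ContinuousLinearMap.proj (R := ℝ) (φ := fun _ : Fin d => ℝ) i).comp
        (r • ContinuousLinearMap.id ℝ (Fin d → ℝ))) y := by
    intro y
    have h1 : HasFDerivAt (fun y : Fin d → ℝ => x + r • y) (r • ContinuousLinearMap.id ℝ (Fin d → ℝ)) y :=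
      ((hasFDerivAt_id y).const_smul r).const_add x
    exact (hw.hasFDerivAt_slice s (x + r • y)).comp y h1
  have hfe : ∀ y : Fin d → ℝ, fderiv ℝ (fun y : Fin d → ℝ => w (s, x + r • y)) y (Pi.single i 1)
      = r * D i w (s, x + r • y) := by
    intro y
    rw [(hfd y).fderiv]
    simp [sum_apply, Pi.single_apply, mul_comm]
  have key := integral_mul_fderiv_eq_neg_fderiv_mul_of_integrable (μ := (volume : Measure (Fin d → ℝ)))
    (f := G) (g := fun y => w (s, x + r • y)) (v := Pi.single i 1) ?_ ?_ ?_ ?_ ?_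
  · simp only [hfe, G_fderiv] at key
    rw [← integral_neg] at key
    simp only [neg_mul, neg_neg] at key
    rw [← key, ← integral_const_mul]
    congr 1; ext y; ring
  · simp only [G_fderiv, neg_mul]
    exact (int_yG_mul w s r x i).neg
  · simp only [hfe]
    refine ((int_G_mul (D i w) s r x).const_mul r).congr (Filter.Eventually.of_forall fun y => ?_)
    simp only; ring
  · exact int_G_mul w s r x
  · exact fun y _ => G_contDiff.differentiable (by simp) y
  · exact fun y _ => (hfd y).differentiableAt

/-- heat flow -/
def H (g : X d) (τ s : ℝ) (x : Fin d → ℝ) : ℝ := ∫ y : Fin d → ℝ, G y * g (s, x + √(2 * τ) • y)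

lemma H_cont (g : X d) : Continuous fun q : ℝ × ℝ × (Fin d → ℝ) => H g q.1 q.2.1 q.2.2 := by
  unfold H
  refine continuous_of_dominated (bound := fun y => G y * ‖g‖) ?_ ?_ (G_integrable.mul_const _) ?_
  · intro q
    exact (int_G_mul g q.2.1 _ q.2.2).aestronglyMeasurable
  · intro q
    refine Filter.Eventually.of_forall fun y => ?_
    rw [norm_mul, norm_of_nonneg (G_nonneg y)]
    exact mul_le_mul_of_nonneg_left (g.norm_coe_le_norm _) (G_nonneg y)
  · refine Filter.Eventually.of_forall fun y => ?_
    fun_prop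

lemma H_cont' (g : X d) {Y : Type*} [TopologicalSpace Y] {a b : Y → ℝ} {c : Y → Fin d → ℝ}
    (ha : Continuous a) (hb : Continuous b) (hc : Continuous c) :
    Continuous fun q => H g (a q) (b q) (c q) :=
  (H_cont g).comp (ha.prodMk (hb.prodMk hc))

lemma H_zero (g : X d) (s : ℝ) (x : Fin d → ℝ) : H g 0 s x = g (s, x) := by
  unfold H
  simp [integral_mul_const, G_integral]

lemma H_bound (g : X d) (τ s : ℝ) (x : Fin d → ℝ) : |H g τ s x| ≤ ‖g‖ := by
  have := norm_integral_le_of_norm_le (f := fun y : Fin d → ℝ => G y * g (s, x + √(2 * τ) • y))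
    (G_integrable.mul_const ‖g‖) (Filter.Eventually.of_forall fun y => by
    rw [norm_mul, norm_of_nonneg (G_nonneg y)]
    exact mul_le_mul_of_nonneg_left (g.norm_coe_le_norm _) (G_nonneg y))
  rwa [integral_mul_const, G_integral, one_mul] at this

/-- Laplacian -/
def Lap (u : X d) : X d := ∑ i, D i (D i u)

lemma Sm.lap {u : X d} (hu : Sm u) : Sm (Lap u) := Sm.sum _ fun i _ => (hu.dd i).dd i

lemma H_sum (g : Fin d → X d) (τ s : ℝ) (x : Fin d → ℝ) :
    H (∑ i, g i) τ s x = ∑ i, H (g i) τ s x := by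
  unfold H
  rw [← integral_finsetSum]
  · simp [Finset.mul_sum, BoundedContinuousFunction.coe_sum]
  · intro i _; exact int_G_mul _ _ _ _

lemma H_hasDerivAt {g : X d} (hg : Sm g) (s : ℝ) (x : Fin d → ℝ) (τ : ℝ) (hτ : 0 < τ) :
    HasDerivAt (fun τ => H g τ s x) (H (Lap g) τ s x) τ := by
  have hsq : ∀ a : ℝ, 0 < a → HasDerivAt (fun a => √(2 * a)) (1 / √(2 * a)) a := by
    intro a ha
    have := (((hasDerivAt_id a).const_mul 2).sqrt (by simp; exact ha.ne'))
    refine HasDerivAt.congr_deriv this ?_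
    have : √(2 * a) ≠ 0 := by positivity
    simp only [id]; field_simp
  have key := hasDerivAt_integral_of_dominated_loc_of_deriv_le (𝕜 := ℝ)
    (μ := (volume : Measure (Fin d → ℝ))) (x₀ := τ) (s := Ioi (τ / 2))
    (F := fun τ y => G y * g (s, x + √(2 * τ) • y))
    (F' := fun τ y => (1 / √(2 * τ)) * ∑ i, (y i * G y) * D i g (s, x + √(2 * τ) • y))
    (bound := fun y => (1 / √τ) * ∑ i, (|y i| * G y) * ‖D i g‖)
    (Ioi_mem_nhds (by linarith)) ?_ ?_ ?_ ?_ ?_ ?_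
  · refine key.2.congr_deriv ?_
    rw [integral_const_mul, integral_finsetSum _ (fun i _ => int_yG_mul _ _ _ _ _)]
    unfold Lap
    rw [H_sum, Finset.mul_sum]
    refine Finset.sum_congr rfl fun i _ => ?_
    rw [gauss_ibp (hg.dd i)]
    unfold H
    have : √(2 * τ) ≠ 0 := by positivity
    field_simp
  · exact Filter.Eventually.of_forall fun a => (int_G_mul _ _ _ _).aestronglyMeasurable
  · exact int_G_mul _ _ _ _
  · exact ((integrable_finsetSum _ fun i _ => int_yG_mul _ _ _ _ i).const_mul _).aestronglyMeasurable
  · refine Filter.Eventually.of_forall fun y a ha => ?_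
    rw [norm_mul]
    have ha' : τ / 2 < a := ha
    have h1 : ‖1 / √(2 * a)‖ ≤ 1 / √τ := by
      rw [norm_of_nonneg (by positivity)]
      have : √τ ≤ √(2 * a) := Real.sqrt_le_sqrt (by linarith)
      have : 0 < √τ := by positivity
      gcongr
    refine mul_le_mul h1 ?_ (norm_nonneg _) (by positivity)
    refine norm_sum_le_of_le _ fun i _ => ?_
    rw [norm_mul, norm_mul, norm_of_nonneg (G_nonneg y)]
    have := (D i g).norm_coe_le_norm (s, x + √(2 * a) • y)
    have h2 := G_nonneg y
    have : ‖y i‖ = |y i| := rfl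
    rw [this]
    gcongr
  · exact (integrable_finsetSum _ fun i _ => (yG_integrable i).mul_const _).const_mul _
  · refine Filter.Eventually.of_forall fun y a ha => ?_
    have ha' : 0 < a := by have : τ / 2 < a := ha; linarith
    have h1 : HasDerivAt (fun a : ℝ => x + √(2 * a) • y) ((1 / √(2 * a)) • y) a :=
      ((hsq a ha').smul_const y).const_add x
    have h2 := (hg.hasFDerivAt_slice s (x + √(2 * a) • y)).comp_hasDerivAt a h1
    have h3 := h2.const_mul (G y)
    refine h3.congr_deriv ?_
    simp only [sum_apply, smul_apply, ContinuousLinearMap.proj_apply, Pi.smul_apply, smul_eq_mul,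
      Finset.mul_sum]
    exact Finset.sum_congr rfl fun i _ => by ring

lemma heat {g : X d} (hg : Sm g) (s : ℝ) (x : Fin d → ℝ) (τ : ℝ) (hτ : 0 ≤ τ) :
    ∫ r in (0:ℝ)..τ, H (Lap g) r s x = H g τ s x - g (s, x) := by
  rw [← H_zero g s x]
  refine intervalIntegral.integral_eq_sub_of_hasDerivAt_of_le hτ
    (f := fun τ => H g τ s x) ?_ ?_ ?_
  · exact (H_cont' g continuous_id continuous_const continuous_const).continuousOn
  · exact fun a ha => H_hasDerivAt hg s x a ha.1
  · exact (H_cont' _ continuous_id continuous_const continuous_const).intervalIntegrable _ _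

end MKV

end

section
set_option linter.unusedVariables false
open scoped Topology ContDiff
namespace MKV
variable {d : ℕ}

lemma Ker.comm {Ω : Type} [MeasurableSpace Ω] {ν : Measure Ω} (k : Ker d Ω ν)
    (h1 : ∀ p h o, k.m (p.1, p.2 + h) o = k.m p o)
    (h2 : ∀ p h o, k.A (p.1, p.2 + h) o = ((k.A p o).1, (k.A p o).2 + h)) : Comm k.op := by
  intro h w
  ext p
  simp only [tau_apply, Ker.op_apply, h1, h2]

/-- clamp -/
def cl (T t : ℝ) : ℝ := max 0 (min t T)

lemma cl_cont (T : ℝ) : Continuous (cl T) := by unfold cl; fun_prop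
lemma cl_nonneg (T t : ℝ) : 0 ≤ cl T t := le_max_left _ _
lemma cl_le {T : ℝ} (hT : 0 ≤ T) (t : ℝ) : cl T t ≤ T := max_le hT (min_le_right _ _)
lemma cl_eq {T t : ℝ} (h0 : 0 ≤ t) (h1 : t ≤ T) : cl T t = t := by simp [cl, h0, h1]

/-- heat semigroup kernel -/
def Sker (d : ℕ) (T : ℝ) : Ker d (Fin d → ℝ) volume where
  m _ y := G y
  A p y := (0, p.2 + √(2 * cl T p.1) • y)
  g := G
  hg := G_integrable
  hm _ := continuous_const
  hA y := by have := cl_cont T; fun_prop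
  mm _ := G_cont.aestronglyMeasurable
  mA p := by apply Continuous.measurable; fun_prop
  hb p := Filter.Eventually.of_forall fun y => by rw [abs_of_nonneg (G_nonneg y)]

/-- measure on the parameters -/
abbrev nu (d : ℕ) : Measure (ℝ × (Fin d → ℝ)) := (volume.restrict (Ioo (0:ℝ) 1)).prod volume

lemma nu_ae : ∀ᵐ z ∂(nu d), z.1 ∈ Ioo (0:ℝ) 1 := by
  have h : ∀ᵐ s ∂(volume.restrict (Ioo (0:ℝ) 1)), s ∈ Ioo (0:ℝ) 1 := ae_restrict_mem measurableSet_Ioo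
  exact Measure.quasiMeasurePreserving_fst.ae h

/-- Duhamel kernel -/
def Qker (d : ℕ) (T : ℝ) (hT : 0 ≤ T) : Ker d (ℝ × (Fin d → ℝ)) (nu d) where
  m p z := cl T p.1 * G z.2
  A p z := (cl T p.1 * (1 - z.1), p.2 + √(2 * (cl T p.1 * z.1)) • z.2)
  g z := T * G z.2
  hg := by
    have := Integrable.mul_prod (μ := volume.restrict (Ioo (0:ℝ) 1)) (f := fun _ : ℝ => T)
      (integrable_const T) (G_integrable (d := d))
    exact this
  hm z := by have := cl_cont T; fun_prop
  hA y := by have := cl_cont T; fun_prop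
  mm _ := by
    apply Continuous.aestronglyMeasurable
    have := G_cont (d := d); fun_prop
  mA p := by apply Continuous.measurable; fun_prop
  hb p := Filter.Eventually.of_forall fun z => by
    rw [abs_mul, abs_of_nonneg (G_nonneg _), abs_of_nonneg (cl_nonneg _ _)]
    exact mul_le_mul_of_nonneg_right (cl_le hT _) (G_nonneg _)

lemma sqrt_inv_int : Integrable (fun s : ℝ => (√s)⁻¹) (volume.restrict (Ioo (0:ℝ) 1)) := by
  have h : IntervalIntegrable (fun s : ℝ => s ^ (-(1/2) : ℝ)) volume 0 1 :=
    intervalIntegral.intervalIntegrable_rpow' (by norm_num)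
  rw [intervalIntegrable_iff_integrableOn_Ioo_of_le (by norm_num)] at h
  refine h.congr_fun (fun s hs => ?_) measurableSet_Ioo
  show s ^ (-(1/2) : ℝ) = (√s)⁻¹
  rw [Real.sqrt_eq_rpow, Real.rpow_neg hs.1.le]

/-- Duhamel kernel with a derivative -/
def Bker (d : ℕ) (T : ℝ) (hT : 0 ≤ T) (i : Fin d) : Ker d (ℝ × (Fin d → ℝ)) (nu d) where
  m p z := √(cl T p.1 / 2) * (√z.1)⁻¹ * (z.2 i * G z.2)
  A p z := (cl T p.1 * (1 - z.1), p.2 + √(2 * (cl T p.1 * z.1)) • z.2)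
  g z := (√(T / 2) * (√z.1)⁻¹) * (|z.2 i| * G z.2)
  hg := Integrable.mul_prod (sqrt_inv_int.const_mul _) (yG_integrable i)
  hm z := by have := cl_cont T; fun_prop
  hA y := by have := cl_cont T; fun_prop
  mm p := by
    have h1 : Measurable fun z : ℝ × (Fin d → ℝ) => √(cl T p.1 / 2) * (√z.1)⁻¹ := by fun_prop
    have h2 : Continuous fun z : ℝ × (Fin d → ℝ) => (z.2 i * G z.2) := by
      have := G_cont (d := d); fun_prop
    exact (h1.mul h2.measurable).aestronglyMeasurable
  mA p := by apply Continuous.measurable; fun_prop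
  hb p := Filter.Eventually.of_forall fun z => by
    rw [abs_mul, abs_mul (z.2 i), abs_of_nonneg (G_nonneg _), abs_of_nonneg (by positivity)]
    have := cl_le hT p.1
    have := G_nonneg z.2
    gcongr

/-- convolution kernel -/
def Kker (k : (Fin d → ℝ) → ℝ) (hk : IntegrableOn k (cube d)) :
    Ker d (Fin d → ℝ) (volume.restrict (cube d)) where
  m _ y := k y
  A p y := (p.1, p.2 - y)
  g y := |k y|
  hg := hk.abs
  hm _ := continuous_const
  hA y := by fun_prop
  mm _ := hk.aestronglyMeasurable
  mA p := by apply Continuous.measurable; fun_prop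
  hb p := Filter.Eventually.of_forall fun y => le_rfl

lemma S_comm (T : ℝ) : Comm (Sker d T).op :=
  Ker.comm _ (fun _ _ _ => rfl) (fun p h o => by
    simp only [Sker, Prod.mk.injEq, true_and]; abel)

lemma Q_comm (T : ℝ) (hT : 0 ≤ T) : Comm (Qker d T hT).op :=
  Ker.comm _ (fun _ _ _ => rfl) (fun p h o => by
    simp only [Qker, Prod.mk.injEq, true_and]; abel)

lemma B_comm (T : ℝ) (hT : 0 ≤ T) (i : Fin d) : Comm (Bker d T hT i).op :=
  Ker.comm _ (fun _ _ _ => rfl) (fun p h o => by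
    simp only [Bker, Prod.mk.injEq, true_and]; abel)

lemma K_comm (k : (Fin d → ℝ) → ℝ) (hk : IntegrableOn k (cube d)) : Comm (Kker k hk).op :=
  Ker.comm _ (fun _ _ _ => rfl) (fun p h o => by
    simp only [Kker, Prod.mk.injEq, true_and]; abel)

lemma S_apply (T : ℝ) (f : X d) (t : ℝ) (x : Fin d → ℝ) :
    (Sker d T).op f (t, x) = H f (cl T t) 0 x := rfl

lemma Q_apply (T : ℝ) (hT : 0 ≤ T) (q : X d) (t : ℝ) (x : Fin d → ℝ) :
    (Qker d T hT).op q (t, x) = ∫ s in (0:ℝ)..(cl T t), H q (cl T t - s) s x := by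
  rw [Ker.op_apply, integral_prod _ ((Qker d T hT).integrable q (t, x))]
  have h1 : ∫ a in Ioo (0:ℝ) 1, ∫ y : Fin d → ℝ, (Qker d T hT).m (t, x) (a, y) *
      q ((Qker d T hT).A (t, x) (a, y)) =
      ∫ a in (0:ℝ)..1, cl T t * H q (cl T t * a) (cl T t - cl T t * a) x := by
    rw [intervalIntegral.integral_of_le zero_le_one, integral_Ioc_eq_integral_Ioo]
    congr 1; ext a
    unfold H
    rw [← integral_const_mul]
    congr 1; ext y
    simp only [Qker, mul_assoc, mul_sub, mul_one]
  rw [h1]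
  rw [intervalIntegral.integral_const_mul,
    intervalIntegral.mul_integral_comp_mul_left (f := fun a => H q a (cl T t - a) x)]
  have := intervalIntegral.integral_comp_sub_left (a := 0) (b := cl T t)
    (f := fun a => H q a (cl T t - a) x) (cl T t)
  simp only [sub_sub_cancel, sub_self, sub_zero] at this
  rw [this]; simp

lemma B_eq_Q (T : ℝ) (hT : 0 ≤ T) (i : Fin d) {w : X d} (hw : Sm w) :
    (Bker d T hT i).op w = (Qker d T hT).op (D i w) := by
  ext ⟨t, x⟩
  rw [Ker.op_apply, integral_prod _ ((Bker d T hT i).integrable w (t, x)),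
    Ker.op_apply, integral_prod _ ((Qker d T hT).integrable (D i w) (t, x))]
  refine setIntegral_congr_fun measurableSet_Ioo fun a ha => ?_
  simp only [Bker, Qker]
  have hc := cl_nonneg T t
  set c := cl T t
  have e1 : ∀ y : Fin d → ℝ, √(c / 2) * (√a)⁻¹ * (y i * G y) * w (c * (1 - a), x + √(2 * (c * a)) • y)
     = (√(c / 2) * (√a)⁻¹) * ((y i * G y) * w (c * (1 - a), x + √(2 * (c * a)) • y)) := by
    intro y; ring
  have e2 : ∀ y : Fin d → ℝ, c * G y * D i w (c * (1 - a), x + √(2 * (c * a)) • y)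
     = c * (G y * D i w (c * (1 - a), x + √(2 * (c * a)) • y)) := by
    intro y; ring
  simp_rw [e1, e2]
  rw [integral_const_mul, integral_const_mul, gauss_ibp hw, ← mul_assoc]
  congr 1
  have ha0 : 0 < a := ha.1
  have : √(2 * (c * a)) = √ (2 * c) * √a := by rw [← mul_assoc, Real.sqrt_mul (by positivity)]
  have h3 : √(c/2) * √(2 * c) = c := by
    rw [← Real.sqrt_mul (by positivity), show c / 2 * (2 * c) = c * c by ring, Real.sqrt_mul_self hc]
  have h4 : √a ≠ 0 := by positivity
  rw [this]
  calc _ = (√(c/2) * √(2 * c)) * ((√a)⁻¹ * √a) := by ring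
    _ = c := by rw [h3, inv_mul_cancel₀ h4, mul_one]

lemma B_small (T : ℝ) (hT : 0 ≤ T) (i : Fin d) : ∃ C, 0 ≤ C ∧ ∀ γ : ℝ, 0 < γ → ∀ (w : X d) (L : ℝ), 0 ≤ L →
    (∀ s, 0 ≤ s → s ≤ T → ∀ z, |w (s, z)| ≤ L * rexp (γ * s)) →
    ∀ t x, |(Bker d T hT i).op w (t, x)| ≤ L * rexp (γ * cl T t) * (C * γ ^ (-(1/4) : ℝ)) := by
  have hI : Integrable (fun s : ℝ => s ^ (-(3/4) : ℝ)) (volume.restrict (Ioo (0:ℝ) 1)) := by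
    have h : IntervalIntegrable (fun s : ℝ => s ^ (-(3/4) : ℝ)) volume 0 1 :=
      intervalIntegral.intervalIntegrable_rpow' (by norm_num)
    rw [intervalIntegrable_iff_integrableOn_Ioo_of_le (by norm_num)] at h
    exact h
  have hJ := Integrable.mul_prod hI (yG_integrable i)
  refine ⟨(∫ z, z.1 ^ (-(3/4) : ℝ) * (|z.2 i| * G z.2) ∂(nu d)) * T ^ (1/4 : ℝ), ?_, ?_⟩
  · refine mul_nonneg (integral_nonneg_of_ae ?_) (by positivity)
    filter_upwards [nu_ae] with z hz
    have := G_nonneg z.2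
    have := hz.1.le
    positivity
  intro γ hγ w L hL hw t x
  rw [Ker.op_apply]
  have hc := cl_nonneg T t
  have hcT := cl_le hT t
  have := norm_integral_le_of_norm_le (μ := nu d)
    (f := fun o => (Bker d T hT i).m (t, x) o * w ((Bker d T hT i).A (t, x) o))
    (hJ.mul_const (L * rexp (γ * cl T t) * (T ^ (1/4 : ℝ) * γ ^ (-(1/4) : ℝ)))) ?_
  · rw [integral_mul_const] at this
    refine this.trans (le_of_eq ?_)
    ring
  filter_upwards [nu_ae] with z hz
  obtain ⟨a, y⟩ := z
  have ha0 : 0 < a := hz.1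
  have ha1 : a < 1 := hz.2
  simp only [Bker]
  set c := cl T t
  have hs := hw (c * (1 - a)) (mul_nonneg hc (by linarith)) (by nlinarith) (x + √(2 * (c * a)) • y)
  have hG := G_nonneg y
  rw [norm_mul, norm_mul, norm_mul (y i), norm_of_nonneg hG, norm_of_nonneg (by positivity)]
  have hk : √(c/2) * rexp (-(γ * c * a)) ≤ (T ^ (1/4 : ℝ) * γ ^ (-(1/4) : ℝ)) * a ^ (-(1/4) : ℝ) := by
    have e : (T ^ (1/4 : ℝ) * γ ^ (-(1/4) : ℝ)) * a ^ (-(1/4) : ℝ) = (T / (γ * a)) ^ (1/4 : ℝ) := by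
      rw [Real.div_rpow hT (by positivity), Real.mul_rpow hγ.le ha0.le, Real.rpow_neg hγ.le,
        Real.rpow_neg ha0.le, div_eq_mul_inv (T ^ _), mul_inv, mul_assoc]
    rw [e]
    have h4 : (√(c/2) * rexp (-(γ * c * a))) ^ 4 ≤ T / (γ * a) := by
      rw [mul_pow, ← Real.exp_nat_mul, show √(c/2) ^ 4 = (√(c/2)^2)^2 by ring, Real.sq_sqrt (by positivity)]
      rw [le_div_iff₀ (by positivity)]
      have h5 : γ * c * a * rexp (((4:ℕ):ℝ) * -(γ * c * a)) ≤ 1 := by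
        have h6 := Real.add_one_le_exp (γ * c * a)
        have h7 : rexp (((4:ℕ):ℝ) * -(γ * c * a)) ≤ rexp (-(γ * c * a)) := by
          apply Real.exp_le_exp.2
          have : 0 ≤ γ * c * a := by positivity
          push_cast; linarith
        calc _ ≤ rexp (γ * c * a) * rexp (-(γ * c * a)) := by
              gcongr; linarith
          _ = 1 := by rw [← Real.exp_add]; simp
      calc _ = (c / 4) * (γ * c * a * rexp (((4:ℕ):ℝ) * -(γ * c * a))) := by ring
        _ ≤ (c/4) * 1 := by gcongr
        _ ≤ T := by linarith
    calc _ = ((√(c/2) * rexp (-(γ * c * a))) ^ 4) ^ (1/4 : ℝ) := by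
          rw [← Real.rpow_natCast, ← Real.rpow_mul (by positivity)]; norm_num
      _ ≤ _ := Real.rpow_le_rpow (by positivity) h4 (by norm_num)
  have he : rexp (γ * (c * (1 - a))) = rexp (γ * c) * rexp (-(γ * c * a)) := by
    rw [← Real.exp_add]; congr 1; ring
  have hs2 : (√a)⁻¹ * a ^ (-(1/4) : ℝ) = a ^ (-(3/4) : ℝ) := by
    rw [Real.sqrt_eq_rpow, ← Real.rpow_neg ha0.le, ← Real.rpow_add ha0]; norm_num
  rw [he] at hs
  calc √(c / 2) * (√a)⁻¹ * (‖y i‖ * G y) * ‖w (c * (1 - a), x + √(2 * (c * a)) • y)‖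
      ≤ √(c / 2) * (√a)⁻¹ * (‖y i‖ * G y) * (L * (rexp (γ * c) * rexp (-(γ * c * a)))) := by
        gcongr; exact hs
    _ = (√(c / 2) * rexp (-(γ * c * a))) * ((√a)⁻¹ * (‖y i‖ * G y) * (L * rexp (γ * c))) := by ring
    _ ≤ ((T ^ (1/4 : ℝ) * γ ^ (-(1/4) : ℝ)) * a ^ (-(1/4) : ℝ)) *
        ((√a)⁻¹ * (‖y i‖ * G y) * (L * rexp (γ * c))) := by gcongr
    _ = ((√a)⁻¹ * a ^ (-(1/4) : ℝ)) * (‖y i‖ * G y) * ((L * rexp (γ * c)) * (T ^ (1/4 : ℝ) * γ ^ (-(1/4) : ℝ))) := by ring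
    _ = _ := by rw [hs2]; rfl

end MKV

end

section
set_option linter.unusedVariables false
open scoped Topology ContDiff NNReal
namespace MKV
variable {d : ℕ}

lemma inv_smooth {E : Type*} [NormedAddCommGroup E] [NormedSpace ℝ E] [CompleteSpace E]
    (M : E → E) (hM : ContDiff ℝ ∞ M) (hL : ∀ x y, ‖M x - M y‖ ≤ 1/2 * ‖x - y‖) :
    ∃ g : E → E, ContDiff ℝ ∞ g ∧ (∀ y, g y + M (g y) = y) ∧ ∀ x, g (x + M x) = x := by
  set Φ : E → E := fun x => x + M x with hΦ
  have hA : ApproximatesLinearOn Φ ((ContinuousLinearEquiv.refl ℝ E : E ≃L[ℝ] E) : E →L[ℝ] E) univ (1/2 : ℝ≥0) := by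
    intro x _ y _
    have := hL x y
    simp only [hΦ, ContinuousLinearEquiv.coe_refl, ContinuousLinearMap.id_apply]
    rw [show x + M x - (y + M y) - (x - y) = M x - M y by abel]
    simpa using this
  have hc : Subsingleton E ∨ (1/2 : ℝ≥0) < ‖((ContinuousLinearEquiv.refl ℝ E).symm : E →L[ℝ] E)‖₊⁻¹ := by
    rcases subsingleton_or_nontrivial E with h | h
    · exact Or.inl h
    · right
      have : ‖((ContinuousLinearEquiv.refl ℝ E).symm : E →L[ℝ] E)‖₊ = 1 := by
        ext; simp
      rw [this]; 
      rw [← NNReal.coe_lt_coe]; norm_num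
  set e := hA.toHomeomorph Φ hc with he
  have hee : ∀ x, e x = x + M x := fun x => rfl
  have hd : ∀ a, ∃ L : E ≃L[ℝ] E, (L : E →L[ℝ] E) = fderiv ℝ Φ a := by
    intro a
    have h1 : ‖fderiv ℝ M a‖ ≤ 1/2 := by
      have := norm_fderiv_le_of_lipschitz ℝ (f := M) (x₀ := a) (C := (1/2 : ℝ≥0))
        (LipschitzWith.of_dist_le_mul fun x y => by simpa [dist_eq_norm] using hL x y)
      simpa using this
    have h2 : ‖-fderiv ℝ M a‖ < 1 := by rw [norm_neg]; linarith
    refine ⟨ContinuousLinearEquiv.unitsEquiv ℝ E (Units.oneSub _ h2), ?_⟩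
    have h3 : fderiv ℝ Φ a = 1 + fderiv ℝ M a := by
      exact ((hasFDerivAt_id a).add (hM.differentiable (by simp) a).hasFDerivAt).fderiv
    rw [h3]
    ext x
    simp [ContinuousLinearEquiv.unitsEquiv_apply]
  choose L hL' using hd
  have hΦs : ContDiff ℝ ∞ Φ := contDiff_id.add hM
  refine ⟨e.symm, ?_, ?_, ?_⟩
  · refine e.contDiff_symm (f₀' := L) (fun a => ?_) hΦs
    rw [hL' a]
    exact (hΦs.differentiable (by simp) a).hasFDerivAt
  · intro y
    rw [← hee]; simp
  · intro x
    rw [← hee]; simp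

end MKV

end

section
set_option linter.unusedVariables false
open scoped Topology ContDiff NNReal
namespace MKV
variable {d : ℕ}

/-- nonlinear flux -/
def NN (k : Fin d → (Fin d → ℝ) → ℝ) (hk : ∀ b, IntegrableOn (k b) (cube d)) (χ : ℝ → ℝ) (hχ : Nice χ)
    (b : Fin d) (u : X d) : X d := (Kker (k b) (hk b)).op (nem χ hχ u) * nem χ hχ u

section
variable (k : Fin d → (Fin d → ℝ) → ℝ) (hk : ∀ b, IntegrableOn (k b) (cube d)) (χ : ℝ → ℝ) (hχ : Nice χ)

lemma NN_tau (b : Fin d) (u : X d) (h : Fin d → ℝ) :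
    NN k hk χ hχ b (tau h u) = tau h (NN k hk χ hχ b u) := by
  unfold NN
  rw [tau_mul, tau_nem, ← K_comm, tau_nem]

lemma NN_contDiff (b : Fin d) : ContDiff ℝ ∞ (NN k hk χ hχ b) := by
  unfold NN
  exact ((Kker (k b) (hk b)).op.contDiff.comp (nem_contDiff χ hχ)).mul (nem_contDiff χ hχ)

lemma NN_sm (b : Fin d) {u : X d} (hu : Sm u) : Sm (NN k hk χ hχ b u) := by
  unfold NN
  exact ((hu.nem χ hχ).clm (K_comm _ _)).mul (hu.nem χ hχ)

lemma Nice.lip (hχ : Nice χ) : ∃ C, 0 ≤ C ∧ ∀ a b, |χ a - χ b| ≤ C * |a - b| := by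
  obtain ⟨C, hC⟩ := hχ.deriv.bdd
  refine ⟨C, (norm_nonneg _).trans (hC 0), fun a b => ?_⟩
  have := Convex.norm_image_sub_le_of_norm_deriv_le (f := χ) (C := C) (s := univ) (x := b) (y := a)
    (fun x _ => (hχ.1.differentiable (by simp)) x) (fun x _ => hC x) convex_univ trivial trivial
  simpa using this

lemma K_local (b : (Fin d → ℝ) → ℝ) (hb : IntegrableOn b (cube d)) (w : X d) (s R : ℝ)
    (hw : ∀ z, |w (s, z)| ≤ R) (z : Fin d → ℝ) :
    |(Kker b hb).op w (s, z)| ≤ (∫ y in cube d, |b y|) * R := by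
  rw [Ker.op_apply, ← integral_mul_const]
  refine norm_integral_le_of_norm_le (f := fun y => (Kker b hb).m (s, z) y * w ((Kker b hb).A (s, z) y))
    (hb.abs.mul_const R) (Filter.Eventually.of_forall fun y => ?_)
  show ‖b y * w (s, z - y)‖ ≤ _
  rw [norm_mul]
  exact mul_le_mul_of_nonneg_left (hw _) (norm_nonneg _)

lemma NN_lip (b : Fin d) : ∃ L, 0 ≤ L ∧ ∀ (u u' : X d) (s R : ℝ), (∀ z, |u (s, z) - u' (s, z)| ≤ R) →
    ∀ z, |NN k hk χ hχ b u (s, z) - NN k hk χ hχ b u' (s, z)| ≤ L * R := by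
  obtain ⟨C, hC⟩ := hχ.bdd
  obtain ⟨C', hC'0, hC'⟩ := Nice.lip χ hχ
  have hC0 : 0 ≤ C := (norm_nonneg _).trans (hC 0)
  set J := ∫ y in cube d, |k b y| with hJ
  have hJ0 : 0 ≤ J := integral_nonneg fun _ => abs_nonneg _
  refine ⟨(J * C') * C + (J * C) * C', by positivity, fun u u' s R hR z => ?_⟩
  have h1 : ∀ z, |(nem χ hχ u - nem χ hχ u') (s, z)| ≤ C' * R := fun z => by
    show |χ _ - χ _| ≤ _
    exact (hC' _ _).trans (mul_le_mul_of_nonneg_left (hR z) hC'0)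
  have h2 := K_local (k b) (hk b) _ s _ h1 z
  have h3 := K_local (k b) (hk b) (nem χ hχ u') s C (fun z => hC _) z
  have h4 : |nem χ hχ u (s, z)| ≤ C := hC _
  have h5 := h1 z
  rw [map_sub] at h2
  simp only [BoundedContinuousFunction.sub_apply] at h2 h5
  simp only [NN, BoundedContinuousFunction.mul_apply]
  set a := (Kker (k b) (hk b)).op (nem χ hχ u) (s, z)
  set a' := (Kker (k b) (hk b)).op (nem χ hχ u') (s, z)
  set e := nem χ hχ u (s, z)
  set e' := nem χ hχ u' (s, z)
  calc |a * e - a' * e'| = |(a - a') * e + a' * (e - e')| := by congr 1; ring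
    _ ≤ |a - a'| * |e| + |a'| * |e - e'| := by
      refine (abs_add_le _ _).trans ?_; rw [abs_mul, abs_mul]
    _ ≤ (J * (C' * R)) * C + (J * C) * (C' * R) := by
      gcongr
      exact (abs_nonneg _).trans h2
    _ = _ := by ring
end

/-- exponential weight in time -/
def kap (d : ℕ) (T γ : ℝ) (hT : 0 ≤ T) : X d :=
  BoundedContinuousFunction.ofNormedAddCommGroup (fun p => rexp (γ * cl T p.1))
    (by have := cl_cont T; fun_prop) (rexp (|γ| * T)) (fun p => by
      rw [norm_of_nonneg (exp_pos _).le]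
      apply exp_le_exp.2
      exact mul_le_mul (le_abs_self _) (cl_le hT _) (cl_nonneg _ _) (abs_nonneg _))

@[simp] lemma kap_apply (T γ : ℝ) (hT : 0 ≤ T) (p : Pt d) : kap d T γ hT p = rexp (γ * cl T p.1) := rfl

lemma tau_kap (T γ : ℝ) (hT : 0 ≤ T) (h : Fin d → ℝ) : tau h (kap d T γ hT) = kap d T γ hT := by
  ext p; simp

lemma kap_mul (T γ : ℝ) (hT : 0 ≤ T) : kap d T γ hT * kap d T (-γ) hT = 1 := by
  ext p; simp [← Real.exp_add]

lemma kap_mul' (T γ : ℝ) (hT : 0 ≤ T) : kap d T (-γ) hT * kap d T γ hT = 1 := by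
  ext p; simp [← Real.exp_add]

lemma solve (k : Fin d → (Fin d → ℝ) → ℝ) (hk : ∀ b, IntegrableOn (k b) (cube d)) (χ : ℝ → ℝ)
    (hχ : Nice χ) (T : ℝ) (hT : 0 ≤ T) (f : (Fin d → ℝ) → ℝ) (hf : SP f) :
    ∃ u : X d, Sm u ∧ (∀ n : Fin d → ℤ, tau (fun i => (n i : ℝ)) u = u) ∧
      u = (Sker d T).op (pX f hf) - ∑ b, (Bker d T hT b).op (NN k hk χ hχ b u) := by
  choose L hL0 hL using fun b => NN_lip k hk χ hχ b
  choose C hC0 hC using fun b : Fin d => B_small T hT b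
  obtain ⟨γ, hγ, hγ2⟩ : ∃ γ : ℝ, 0 < γ ∧ (∑ b, L b * C b) * γ ^ (-(1/4) : ℝ) ≤ 1/2 := by
    have h1 : Filter.Tendsto (fun γ : ℝ => (∑ b, L b * C b) * γ ^ (-(1/4) : ℝ)) Filter.atTop (𝓝 ((∑ b, L b * C b) * 0)) :=
      (tendsto_rpow_neg_atTop (by norm_num)).const_mul _
    rw [mul_zero] at h1
    have h2 := (h1.eventually (Iic_mem_nhds (show (0:ℝ) < 1/2 by norm_num))).and (Filter.eventually_gt_atTop 0)
    obtain ⟨γ, h3, h4⟩ := h2.exists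
    exact ⟨γ, h4, h3⟩
  set κ := kap d T γ hT with hκ
  set κ' := kap d T (-γ) hT with hκ'
  set M : X d → X d := fun v => κ' * ∑ b, (Bker d T hT b).op (NN k hk χ hχ b (κ * v)) with hM
  have hMs : ContDiff ℝ ∞ M := by
    refine contDiff_const.mul (ContDiff.sum fun b _ => (Bker d T hT b).op.contDiff.comp
      ((NN_contDiff k hk χ hχ b).comp (contDiff_const.mul contDiff_id)))
  have hMt : ∀ v h, M (tau h v) = tau h (M v) := by
    intro v h
    simp only [hM, tau_mul, map_sum, ← B_comm T hT _ h, ← NN_tau, tau_kap, hκ, hκ']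
  have hMl : ∀ v v', ‖M v - M v'‖ ≤ 1/2 * ‖v - v'‖ := by
    intro v v'
    rw [BoundedContinuousFunction.norm_le (by positivity)]
    rintro ⟨t, x⟩
    have e : (M v - M v') (t, x) = rexp (-γ * cl T t) *
        ∑ b, (Bker d T hT b).op (NN k hk χ hχ b (κ * v) - NN k hk χ hχ b (κ * v')) (t, x) := by
      simp only [hM, BoundedContinuousFunction.sub_apply, BoundedContinuousFunction.mul_apply, map_sub,
        BoundedContinuousFunction.sum_apply, hκ', kap_apply, Finset.sum_sub_distrib]
      ring
    rw [e, norm_mul, norm_of_nonneg (exp_pos _).le]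
    have h1 : ∀ b, |(Bker d T hT b).op (NN k hk χ hχ b (κ * v) - NN k hk χ hχ b (κ * v')) (t, x)| ≤
        L b * ‖v - v'‖ * rexp (γ * cl T t) * (C b * γ ^ (-(1/4) : ℝ)) := by
      intro b
      refine hC b γ hγ _ (L b * ‖v - v'‖) (mul_nonneg (hL0 b) (norm_nonneg _)) (fun s hs hsT z => ?_) t x
      have := hL b (κ * v) (κ * v') s (‖v - v'‖ * rexp (γ * s)) (fun z => ?_) z
      · rw [mul_assoc]; exact this
      · simp only [BoundedContinuousFunction.mul_apply, hκ, kap_apply, cl_eq hs hsT]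
        rw [← mul_sub, abs_mul, abs_of_pos (exp_pos _), mul_comm]
        gcongr
        exact (v - v').norm_coe_le_norm (s, z)
    have h2 : ‖∑ b, (Bker d T hT b).op (NN k hk χ hχ b (κ * v) - NN k hk χ hχ b (κ * v')) (t, x)‖ ≤
      rexp (γ * cl T t) * ‖v - v'‖ * ((∑ b, L b * C b) * γ ^ (-(1/4) : ℝ)) := by
      refine (norm_sum_le _ _).trans ((Finset.sum_le_sum fun b _ => h1 b).trans (le_of_eq ?_))
      rw [Finset.sum_mul, Finset.mul_sum]
      exact Finset.sum_congr rfl fun b _ => by ring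
    calc _ ≤ rexp (-γ * cl T t) * (rexp (γ * cl T t) * ‖v - v'‖ * (1/2)) := by
          gcongr
          refine h2.trans ?_
          gcongr
      _ = (rexp (-γ * cl T t) * rexp (γ * cl T t)) * (1/2 * ‖v - v'‖) := by ring
      _ = _ := by rw [← Real.exp_add]; simp
  obtain ⟨g, hg, hg1, hg2⟩ := inv_smooth M hMs hMl
  have key : ∀ F : X d, ∀ h, tau h (g (κ' * (Sker d T).op F)) = g (κ' * (Sker d T).op (tau h F)) := by
    intro F h
    rw [← hg2 (tau h _), hMt, ← map_add, hg1, tau_mul, ← S_comm, hκ', tau_kap]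
  set v := g (κ' * (Sker d T).op (pX f hf)) with hv
  have hvs : Sm v := by
    unfold Sm
    simp only [hv, key]
    exact hg.comp (contDiff_const.mul ((Sker d T).op.contDiff.comp (pX_sm f hf)))
  have hκs : Sm κ := by
    unfold Sm
    simp only [hκ, tau_kap]
    exact contDiff_const
  refine ⟨κ * v, hκs.mul hvs, fun n => ?_, ?_⟩
  · rw [tau_mul, hκ, tau_kap, hv, key]
    congr 4
    ext p
    exact hf.2 n p.2
  · have h1 := hg1 (κ' * (Sker d T).op (pX f hf))
    rw [← hv] at h1
    have h2 : κ * (v + M v) = (Sker d T).op (pX f hf) := by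
      rw [h1, ← mul_assoc, hκ, kap_mul, one_mul]
    rw [← h2, mul_add]
    simp only [hM]
    rw [← mul_assoc, hκ, kap_mul, one_mul]
    abel

end MKV

end

section
set_option linter.unusedVariables false
open scoped Topology ContDiff NNReal
namespace MKV
variable {d : ℕ}

lemma triangle (Ψ : ℝ → ℝ → ℝ) (hΨ : Continuous fun p : ℝ × ℝ => Ψ p.1 p.2) (t : ℝ) (ht : 0 ≤ t) :
    ∫ s in (0:ℝ)..t, ∫ r in (0:ℝ)..s, Ψ s r = ∫ r in (0:ℝ)..t, ∫ s in r..t, Ψ s r := by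
  set S : Set (ℝ × ℝ) := {p | p.2 ≤ p.1} with hS
  have hSm : MeasurableSet S := (isClosed_le continuous_snd continuous_fst).measurableSet
  have h1 : ∀ s ∈ Ioc 0 t, ∫ r in (0:ℝ)..s, Ψ s r =
      ∫ r in Ioc 0 t, S.indicator (fun p => Ψ p.1 p.2) (s, r) := by
    intro s hs
    rw [intervalIntegral.integral_of_le hs.1.le]
    have : (fun r => S.indicator (fun p => Ψ p.1 p.2) (s, r)) = (Iic s).indicator (fun r => Ψ s r) := by
      ext r; simp [hS, indicator]
    rw [this, setIntegral_indicator measurableSet_Iic, Ioc_inter_Iic, min_eq_right hs.2]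
  have h2 : ∀ r ∈ Ioc 0 t, ∫ s in r..t, Ψ s r =
      ∫ s in Ioc 0 t, S.indicator (fun p => Ψ p.1 p.2) (s, r) := by
    intro r hr
    rw [intervalIntegral.integral_of_le hr.2, ← integral_Icc_eq_integral_Ioc]
    have : (fun s => S.indicator (fun p => Ψ p.1 p.2) (s, r)) = (Ici r).indicator (fun s => Ψ s r) := by
      ext r; simp [hS, indicator]
    rw [this, setIntegral_indicator measurableSet_Ici]
    congr 2
    ext s; simp only [mem_Icc, mem_inter_iff, mem_Ioc, mem_Ici]
    constructor
    · rintro ⟨a, b⟩; exact ⟨⟨hr.1.trans_le a, b⟩, a⟩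
    · rintro ⟨⟨a, b⟩, c⟩; exact ⟨c, b⟩
  rw [intervalIntegral.integral_of_le ht, intervalIntegral.integral_of_le ht,
    setIntegral_congr_fun measurableSet_Ioc h1, setIntegral_congr_fun measurableSet_Ioc h2]
  refine integral_integral_swap (f := fun s r => S.indicator (fun p => Ψ p.1 p.2) (s, r)) ?_
  have : Integrable (fun p : ℝ × ℝ => Ψ p.1 p.2) ((volume.restrict (Ioc 0 t)).prod (volume.restrict (Ioc 0 t))) := by
    rw [Measure.prod_restrict]
    refine IntegrableOn.mono_set (t := Icc 0 t ×ˢ Icc 0 t) ?_ (prod_mono Ioc_subset_Icc_self Ioc_subset_Icc_self)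
    exact hΨ.continuousOn.integrableOn_compact (isCompact_Icc.prod isCompact_Icc)
  exact this.indicator hSm

lemma Lap_clm {u : X d} (hu : Sm u) {L : X d →L[ℝ] X d} (hL : Comm L) : Lap (L u) = L (Lap u) := by
  unfold Lap
  rw [map_sum]
  refine Finset.sum_congr rfl fun i _ => ?_
  rw [D_clm hu hL, D_clm (hu.dd i) hL]

lemma Lap_add {u v : X d} (hu : Sm u) (hv : Sm v) : Lap (u + v) = Lap u + Lap v := by
  unfold Lap
  rw [← Finset.sum_add_distrib]
  refine Finset.sum_congr rfl fun i _ => ?_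
  rw [D_add hu hv, D_add (hu.dd i) (hv.dd i)]

lemma duhamel (T : ℝ) (hT : 0 ≤ T) {F q : X d} (hF : Sm F) (hq : Sm q) (u : X d)
    (hu : u = (Sker d T).op F + (Qker d T hT).op q) (t : ℝ) (ht : 0 ≤ t) (htT : t ≤ T) (x : Fin d → ℝ) :
    u (t, x) = F (0, x) + ∫ s in (0:ℝ)..t, (Lap u + q) (s, x) := by
  have hL : Lap u = (Sker d T).op (Lap F) + (Qker d T hT).op (Lap q) := by
    rw [hu, Lap_add (hF.clm (S_comm T)) (hq.clm (Q_comm T hT)), Lap_clm hF (S_comm T), Lap_clm hq (Q_comm T hT)]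
  have e1 : ∫ s in (0:ℝ)..t, (Lap u + q) (s, x) = (∫ s in (0:ℝ)..t, H (Lap F) s 0 x) +
      (∫ s in (0:ℝ)..t, ∫ r in (0:ℝ)..s, H (Lap q) (s - r) r x) + ∫ s in (0:ℝ)..t, q (s, x) := by
    have c1 : Continuous fun s => H (Lap F) s 0 x := H_cont' _ continuous_id continuous_const continuous_const
    have c3 : Continuous fun s => q (s, x) := q.continuous.comp (by fun_prop)
    have c2 : IntervalIntegrable (fun s => (Qker d T hT).op (Lap q) (s, x)) volume 0 t :=
      (((Qker d T hT).op (Lap q)).continuous.comp (by fun_prop : Continuous fun s : ℝ => (s, x))).intervalIntegrable _ _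
    have e2 : ∫ s in (0:ℝ)..t, ∫ r in (0:ℝ)..s, H (Lap q) (s - r) r x =
        ∫ s in (0:ℝ)..t, (Qker d T hT).op (Lap q) (s, x) := by
      refine intervalIntegral.integral_congr fun s hs => ?_
      rw [uIcc_of_le ht] at hs
      rw [Q_apply, cl_eq hs.1 (hs.2.trans htT)]
    rw [e2, ← intervalIntegral.integral_add (c1.intervalIntegrable _ _) c2,
      ← intervalIntegral.integral_add ((c1.intervalIntegrable _ _).add c2) (c3.intervalIntegrable _ _)]
    refine intervalIntegral.integral_congr fun s hs => ?_
    rw [uIcc_of_le ht] at hs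
    simp only [hL, BoundedContinuousFunction.add_apply]
    rw [S_apply, cl_eq hs.1 (hs.2.trans htT)]
  have e3 : ∫ s in (0:ℝ)..t, ∫ r in (0:ℝ)..s, H (Lap q) (s - r) r x =
      ∫ r in (0:ℝ)..t, (H q (t - r) r x - q (r, x)) := by
    rw [triangle (fun s r => H (Lap q) (s - r) r x) (H_cont' _ (by fun_prop) (by fun_prop) continuous_const) t ht]
    refine intervalIntegral.integral_congr fun r hr => ?_
    rw [uIcc_of_le ht] at hr
    rw [← heat hq r x (t - r) (by linarith [hr.2]),
      intervalIntegral.integral_comp_sub_right (fun s => H (Lap q) s r x) r, sub_self]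
  have c4 : Continuous fun r => H q (t - r) r x := H_cont' _ (by fun_prop) continuous_id continuous_const
  have c3 : Continuous fun s => q (s, x) := q.continuous.comp (by fun_prop)
  rw [e1, e3, heat hF 0 x t ht, intervalIntegral.integral_sub (c4.intervalIntegrable _ _) (c3.intervalIntegrable _ _)]
  rw [hu, BoundedContinuousFunction.add_apply, S_apply, Q_apply, cl_eq ht htT]
  ring

/-- the solution in integrated form -/
lemma solve2 (k : Fin d → (Fin d → ℝ) → ℝ) (hk : ∀ b, IntegrableOn (k b) (cube d)) (χ : ℝ → ℝ)
    (hχ : Nice χ) (T : ℝ) (hT : 0 ≤ T) (f : (Fin d → ℝ) → ℝ) (hf : SP f) :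
    ∃ u : X d, Sm u ∧ (∀ n : Fin d → ℤ, tau (fun i => (n i : ℝ)) u = u) ∧
      ∀ t, 0 ≤ t → t ≤ T → ∀ x, u (t, x) = f x +
        ∫ s in (0:ℝ)..t, (Lap u - ∑ b, D b (NN k hk χ hχ b u)) (s, x) := by
  obtain ⟨u, hu, hp, he⟩ := solve k hk χ hχ T hT f hf
  refine ⟨u, hu, hp, fun t ht htT x => ?_⟩
  have hq : Sm (-∑ b, D b (NN k hk χ hχ b u)) :=
    (Sm.sum _ fun b _ => (NN_sm k hk χ hχ b hu).dd b).neg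
  have := duhamel T hT (pX_sm f hf) hq u ?_ t ht htT x
  · rw [this, sub_eq_add_neg]; rfl
  · rw [map_neg, map_sum, ← sub_eq_add_neg]
    conv_lhs => rw [he]
    congr 1
    exact Finset.sum_congr rfl fun b _ => B_eq_Q T hT b (NN_sm k hk χ hχ b hu)

end MKV

end

section
set_option linter.unusedVariables false
open scoped Topology ContDiff NNReal
namespace MKV
variable {d : ℕ}

lemma Sm.line {v : X d} (hv : Sm v) (t : ℝ) (x : Fin d → ℝ) (b : Fin d) (a : ℝ) :
    HasDerivAt (fun a : ℝ => v (t, x + a • Pi.single b (1:ℝ))) (D b v (t, x + a • Pi.single b (1:ℝ))) a := by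
  have h1 := hv.hasFDerivAt_slice t (x + a • Pi.single b (1:ℝ))
  have h2 : HasDerivAt (fun a : ℝ => x + a • (Pi.single b (1:ℝ) : Fin d → ℝ)) (Pi.single b (1:ℝ)) a := by
    simpa using ((hasDerivAt_id a).smul_const (Pi.single b (1:ℝ) : Fin d → ℝ)).const_add x
  refine HasDerivAt.congr_deriv (HasFDerivAt.comp_hasDerivAt (l := fun x => v (t, x)) a h1 h2) ?_
  simp [Finset.sum_apply, Pi.single_apply]

lemma second_test {v : X d} (hv : Sm v) (t : ℝ) (x : Fin d → ℝ) (hmax : ∀ y, v (t, y) ≤ v (t, x)) (b : Fin d) :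
    D b v (t, x) = 0 ∧ D b (D b v) (t, x) ≤ 0 := by
  set θ := fun a : ℝ => v (t, x + a • Pi.single b (1:ℝ)) with hθ
  have hm : IsLocalMax θ 0 := Filter.Eventually.of_forall fun a => by simpa [hθ] using hmax _
  have hd : deriv θ = fun a => D b v (t, x + a • Pi.single b (1:ℝ)) := by
    ext a; exact (hv.line t x b a).deriv
  have hd2 : deriv (deriv θ) 0 = D b (D b v) (t, x) := by
    rw [hd, ((hv.dd b).line t x b 0).deriv]; simp
  have h0 : deriv θ 0 = 0 := hm.deriv_eq_zero
  refine ⟨by rw [hd] at h0; simpa using h0, ?_⟩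
  by_contra hpos
  push Not at hpos
  rw [← hd2] at hpos
  have hmin := isLocalMin_of_deriv_deriv_pos hpos h0 (hv.line t x b 0).continuousAt
  have hc : θ =ᶠ[𝓝 0] fun _ => θ 0 := by
    filter_upwards [hm, hmin] with a h1 h2 using le_antisymm h1 h2
  have : deriv (deriv θ) 0 = 0 := by
    rw [(hc.deriv).deriv_eq]; simp
  linarith

lemma tau_per {v : X d} (hp : ∀ n : Fin d → ℤ, tau (fun i => (n i : ℝ)) v = v) (t : ℝ) :
    Per fun x => v (t, x) := fun n x => by
  have := DFunLike.congr_fun (hp n) (t, x)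
  simpa using this

lemma maxp {v : X d} (hv : Sm v) (hp : ∀ n : Fin d → ℤ, tau (fun i => (n i : ℝ)) v = v) (c : Fin d → X d)
    (T : ℝ) (hT : 0 ≤ T) (f : (Fin d → ℝ) → ℝ) (A : ℝ) (hA : ∀ x, f x ≤ A)
    (he : ∀ t, 0 ≤ t → t ≤ T → ∀ x, v (t, x) = f x + ∫ s in (0:ℝ)..t, (Lap v - ∑ b, c b * D b v) (s, x))
    (t : ℝ) (ht : 0 ≤ t) (htT : t ≤ T) (x : Fin d → ℝ) : v (t, x) ≤ A := by
  have main : ∀ ε, 0 < ε → v (t, x) - ε * t ≤ A := by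
    intro ε hε
    have hcont : Continuous fun p : Pt d => v p - ε * p.1 := by have := v.continuous; fun_prop
    obtain ⟨⟨t0, x0⟩, ⟨ht0, hx0⟩, hmax⟩ := (isCompact_Icc.prod (isCompact_cube (d := d))).exists_isMaxOn
      (⟨(0, 0), ⟨⟨le_rfl, hT⟩, ⟨le_rfl, zero_le_one⟩⟩⟩ : (Icc 0 T ×ˢ cube d).Nonempty) hcont.continuousOn
    have hM : ∀ s, 0 ≤ s → s ≤ T → ∀ y, v (s, y) - ε * s ≤ v (t0, x0) - ε * t0 := by
      intro s hs hsT y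
      obtain ⟨n, hn⟩ := exists_cube y
      have := hmax (show (s, y + fun i => (n i : ℝ)) ∈ Icc 0 T ×ˢ cube d from ⟨⟨hs, hsT⟩, hn⟩)
      simp only [mem_ofPred_eq] at this
      have h2 := tau_per hp s n y
      simp only at h2
      rwa [h2] at this
    refine (hM t ht htT x).trans ?_
    rcases ht0.1.eq_or_lt with h | h
    · have : v (t0, x0) = f x0 := by
        rw [he t0 ht0.1 ht0.2, ← show (0:ℝ) = t0 from h]; simp
      rw [this, ← show (0:ℝ) = t0 from h]; simpa using hA x0
    · exfalso
      have htest := second_test hv t0 x0 (fun y => by linarith [hM t0 ht0.1 ht0.2 y])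
      set r := fun s => (Lap v - ∑ b, c b * D b v) (s, x0) with hr
      have hrc : Continuous r := (Lap v - ∑ b, c b * D b v).continuous.comp (by fun_prop)
      have hr0 : r t0 ≤ 0 := by
        simp only [hr, Lap, BoundedContinuousFunction.sub_apply, BoundedContinuousFunction.sum_apply,
          BoundedContinuousFunction.mul_apply, (htest _).1, mul_zero, Finset.sum_const_zero, sub_zero]
        exact Finset.sum_nonpos fun b _ => (htest b).2
      have hnear : ∀ᶠ s in 𝓝[<] t0, r s < ε ∧ 0 < s := by
        apply mem_nhdsWithin_of_mem_nhds
        exact (hrc.continuousAt.eventually (gt_mem_nhds (lt_of_le_of_lt hr0 hε))).and (lt_mem_nhds h)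
      obtain ⟨l, hl, hl2⟩ := (mem_nhdsLT_iff_exists_Ioo_subset).1 hnear
      obtain ⟨s, hs1, hs2⟩ := exists_between (mem_Iio.1 hl)
      have hs0 : 0 < s := (hl2 ⟨hs1, hs2⟩).2
      have h1 : v (t0, x0) - v (s, x0) = ∫ a in s..t0, r a := by
        rw [he t0 ht0.1 ht0.2, he s hs0.le (hs2.le.trans ht0.2)]
        rw [add_sub_add_left_eq_sub]
        exact intervalIntegral.integral_interval_sub_left (hrc.intervalIntegrable _ _) (hrc.intervalIntegrable _ _)
      have h2 : ∫ a in s..t0, r a < ∫ a in s..t0, ε := by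
        refine intervalIntegral.integral_lt_integral_of_continuousOn_of_le_of_exists_lt hs2 hrc.continuousOn
          continuousOn_const (fun a ha => ?_) ⟨t0, ⟨hs2.le, le_rfl⟩, lt_of_le_of_lt hr0 hε⟩
        rcases ha.2.eq_or_lt with h3 | h3
        · rw [h3]; linarith
        · exact (hl2 ⟨hs1.trans ha.1, h3⟩).1.le
      rw [intervalIntegral.integral_const, smul_eq_mul] at h2
      have h3 := hM s hs0.le (hs2.le.trans ht0.2) x0
      nlinarith
  refine le_of_forall_pos_le_add fun δ hδ => ?_
  have h1 := main (δ / (t + 1)) (by positivity)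
  have h2 : δ / (t + 1) * t ≤ δ := by
    rw [div_mul_eq_mul_div, div_le_iff₀ (by positivity)]; nlinarith
  linarith

lemma div_free (K : (Fin d → ℝ) → (Fin d → ℝ)) (hk : ∀ b, IntegrableOn (fun y => K y b) (cube d))
    (hdiv : DistDivFree K) {w : X d} (hw : Sm w) (hp : ∀ n : Fin d → ℤ, tau (fun i => (n i : ℝ)) w = w) :
    ∑ b, (Kker _ (hk b)).op (D b w) = 0 := by
  ext ⟨t, x⟩
  simp only [BoundedContinuousFunction.sum_apply, Ker.op_apply, BoundedContinuousFunction.coe_zero, Pi.zero_apply]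
  rw [← integral_finsetSum _ fun b _ => (Kker _ (hk b)).integrable (D b w) (t, x)]
  have h1 := hdiv (fun y => - w (t, x - y)) ?_ ?_
  · rw [← h1]
    congr 1; ext y
    refine Finset.sum_congr rfl fun b _ => ?_
    show K y b * D b w (t, x - y) = K y b * pdv b (fun y => - w (t, x - y)) y
    congr 1
    have h2 : HasFDerivAt (fun y : Fin d → ℝ => x - y) (-(ContinuousLinearMap.id ℝ (Fin d → ℝ))) y :=
      (hasFDerivAt_id y).const_sub x
    have h3 := ((hw.hasFDerivAt_slice t (x - y)).comp y h2).neg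
    unfold pdv
    have h4 : (fun y => - w (t, x - y)) = -((fun x => w (t, x)) ∘ fun y => x - y) := by ext; rfl
    rw [h4, h3.fderiv]
    simp [Pi.single_apply]
  · exact ((hw.contDiff_slice t).comp (contDiff_const.sub contDiff_id)).neg
  · intro n y
    have := tau_per hp t (fun i => - n i) (x - y)
    simp only at this ⊢
    rw [← this]
    congr 3
    ext i
    simp; ring

lemma exists_cut (lam : ℝ) (h : 1 < lam) : ∃ χ : ℝ → ℝ, Nice χ ∧ ∀ r, 1 / lam ≤ r → r ≤ lam → χ r = r := by
  let b : ContDiffBump (0 : ℝ) := ⟨lam, lam + 1, by linarith, by linarith⟩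
  refine ⟨fun r => r * b r, ⟨contDiff_id.mul b.contDiff, b.hasCompactSupport.mul_left⟩, fun r h1 h2 => ?_⟩
  have h3 : 0 < 1 / lam := by positivity
  show r * b r = r
  rw [b.one_of_mem_closedBall, mul_one]
  rw [Metric.mem_closedBall, dist_zero_right, Real.norm_eq_abs, abs_of_pos (by linarith)]
  exact h2

lemma nem_per {u : X d} (hp : ∀ n : Fin d → ℤ, tau (fun i => (n i : ℝ)) u = u) (χ : ℝ → ℝ) (hχ : Nice χ) :
    ∀ n : Fin d → ℤ, tau (fun i => (n i : ℝ)) (nem χ hχ u) = nem χ hχ u := fun n => by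
  rw [tau_nem, hp]

lemma X_mul_neg (a b : X d) : a * -b = -(a * b) := by ext; simp

lemma solve3 (K : (Fin d → ℝ) → (Fin d → ℝ)) (hk : ∀ b, IntegrableOn (fun y => K y b) (cube d))
    (hdiv : DistDivFree K) (lam : ℝ) (hl : 1 < lam) (T : ℝ) (hT : 0 ≤ T) (f : (Fin d → ℝ) → ℝ) (hf : SP f)
    (hb : ∀ x, 1 / lam ≤ f x ∧ f x ≤ lam) :
    ∃ u : X d, Sm u ∧ (∀ n : Fin d → ℤ, tau (fun i => (n i : ℝ)) u = u) ∧
      (∀ t, 0 ≤ t → t ≤ T → ∀ x, 1 / lam ≤ u (t, x) ∧ u (t, x) ≤ lam) ∧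
      ∀ t, 0 ≤ t → t ≤ T → ∀ x, u (t, x) = f x +
        ∫ s in (0:ℝ)..t, (Lap u - ∑ b, (Kker _ (hk b)).op u * D b u) (s, x) := by
  obtain ⟨χ, hχ, hχ1⟩ := exists_cut lam hl
  obtain ⟨u, hu, hp, he⟩ := solve2 _ hk χ hχ T hT f hf
  have hw := hu.nem χ hχ
  have e1 : ∑ b, D b (NN _ hk χ hχ b u) = ∑ b, (Kker _ (hk b)).op (nem χ hχ u) * D b (nem χ hχ u) := by
    have : ∀ b, D b (NN _ hk χ hχ b u) = (Kker _ (hk b)).op (D b (nem χ hχ u)) * nem χ hχ u +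
        (Kker _ (hk b)).op (nem χ hχ u) * D b (nem χ hχ u) := fun b => by
      unfold NN
      rw [D_mul (hw.clm (K_comm _ _)) hw, D_clm hw (K_comm _ _)]
    simp only [this, Finset.sum_add_distrib, ← Finset.sum_mul, div_free K hk hdiv hw (nem_per hp χ hχ), zero_mul, zero_add]
  have e2 : ∑ b, D b (NN _ hk χ hχ b u) =
      ∑ b, ((Kker _ (hk b)).op (nem χ hχ u) * nem _ hχ.deriv u) * D b u := by
    rw [e1]
    exact Finset.sum_congr rfl fun b _ => by rw [D_nem hu, mul_assoc]
  have hbd : ∀ t, 0 ≤ t → t ≤ T → ∀ x, 1 / lam ≤ u (t, x) ∧ u (t, x) ≤ lam := by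
    intro t ht htT x
    constructor
    · have := maxp (v := -u) hu.neg (fun n => by rw [map_neg, hp]) (fun b => ((Kker _ (hk b)).op (nem χ hχ u) * nem _ hχ.deriv u)) T hT
        (fun x => - f x) (-(1 / lam)) (fun x => by linarith [(hb x).1]) ?_ t ht htT x
      · simp only [BoundedContinuousFunction.coe_neg, Pi.neg_apply] at this; linarith
      · intro t ht htT x
        have e3 : Lap (-u) - ∑ b, ((Kker _ (hk b)).op (nem χ hχ u) * nem _ hχ.deriv u) * D b (-u) =
          -(Lap u - ∑ b, D b (NN _ hk χ hχ b u)) := by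
          rw [e2]
          simp only [Lap, D_neg, X_mul_neg, Finset.sum_neg_distrib]
          abel
        rw [e3]
        simp only [BoundedContinuousFunction.coe_neg, Pi.neg_apply]
        rw [intervalIntegral.integral_neg, he t ht htT x]
        ring
    · refine maxp hu hp (fun b => ((Kker _ (hk b)).op (nem χ hχ u) * nem _ hχ.deriv u)) T hT
        f lam (fun x => (hb x).2) ?_ t ht htT x
      rw [← e2]; exact he
  refine ⟨u, hu, hp, hbd, fun t ht htT x => ?_⟩
  rw [he t ht htT x, e1]
  congr 1
  refine intervalIntegral.integral_congr fun s hs => ?_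
  rw [uIcc_of_le ht] at hs
  have hs2 := hs.2.trans htT
  have e4 : ∀ x, nem χ hχ u (s, x) = u (s, x) := fun x => hχ1 _ (hbd s hs.1 hs2 x).1 (hbd s hs.1 hs2 x).2
  simp only [BoundedContinuousFunction.sub_apply, BoundedContinuousFunction.sum_apply,
          BoundedContinuousFunction.mul_apply]
  congr 1
  refine Finset.sum_congr rfl fun b _ => ?_
  congr 1
  · rw [Ker.op_apply, Ker.op_apply]
    congr 1; ext y
    show _ * nem χ hχ u (s, x - y) = _ * u (s, x - y)
    rw [e4]
  · rw [← hw.pdv_eq, ← hu.pdv_eq]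
    congr 1; ext y; exact e4 y

end MKV

end

section
set_option linter.unusedVariables false
open scoped Topology ContDiff NNReal
namespace MKV
variable {d : ℕ}

/-- evaluation at time `t` -/
def Eker (d : ℕ) (t : ℝ) : Ker d Unit (Measure.dirac ()) where
  m _ _ := 1
  A p _ := (t, p.2)
  g _ := 1
  hg := integrable_const _
  hm _ := continuous_const
  hA _ := by fun_prop
  mm _ := aestronglyMeasurable_const
  mA _ := measurable_const
  hb _ := Filter.Eventually.of_forall fun _ => by simp

/-- time integration up to `t` -/
def Iker (d : ℕ) (t : ℝ) : Ker d ℝ (volume.restrict (Ioo (0:ℝ) 1)) where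
  m _ _ := t
  A p a := (t * a, p.2)
  g _ := |t|
  hg := integrable_const _
  hm _ := continuous_const
  hA _ := by fun_prop
  mm _ := aestronglyMeasurable_const
  mA _ := by apply Continuous.measurable; fun_prop
  hb _ := Filter.Eventually.of_forall fun _ => le_rfl

lemma E_apply (t : ℝ) (f : X d) (p : Pt d) : (Eker d t).op f p = f (t, p.2) := by
  rw [Ker.op_apply]; simp [Eker]

lemma I_apply (t : ℝ) (f : X d) (p : Pt d) : (Iker d t).op f p = ∫ s in (0:ℝ)..t, f (s, p.2) := by
  rw [Ker.op_apply]
  show ∫ a in Ioo (0:ℝ) 1, t * f (t * a, p.2) = _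
  rw [← integral_Ioc_eq_integral_Ioo, ← intervalIntegral.integral_of_le zero_le_one,
    intervalIntegral.integral_const_mul, intervalIntegral.mul_integral_comp_mul_left (f := fun s => f (s, p.2))]
  simp

lemma E_comm (t : ℝ) : Comm (Eker d t).op :=
  Ker.comm _ (fun _ _ _ => rfl) (fun p h o => rfl)
lemma I_comm (t : ℝ) : Comm (Iker d t).op :=
  Ker.comm _ (fun _ _ _ => rfl) (fun p h o => rfl)

/-- `g` is the time derivative of `f` on `[0,T]` -/
def Rel (T : ℝ) (f g : X d) : Prop := ∀ t, 0 ≤ t → t ≤ T → (Eker d t).op f = (Eker d 0).op f + (Iker d t).op g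

lemma Rel_iff {T : ℝ} {f g : X d} : Rel T f g ↔ ∀ t, 0 ≤ t → t ≤ T → ∀ x,
    f (t, x) = f (0, x) + ∫ s in (0:ℝ)..t, g (s, x) := by
  constructor
  · intro h t ht htT x
    have := DFunLike.congr_fun (h t ht htT) (t, x)
    simpa [E_apply, I_apply] using this
  · intro h t ht htT
    ext p
    simpa [E_apply, I_apply] using h t ht htT p.2

lemma Rel.add {T : ℝ} {f g f' g' : X d} (h : Rel T f g) (h' : Rel T f' g') : Rel T (f + f') (g + g') := by
  intro t ht htT
  rw [map_add, map_add, map_add, h t ht htT, h' t ht htT]; abel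

lemma Rel.neg {T : ℝ} {f g : X d} (h : Rel T f g) : Rel T (-f) (-g) := by
  intro t ht htT
  rw [map_neg, map_neg, map_neg, h t ht htT]; abel

lemma Rel.D {T : ℝ} {f g : X d} (hf : Sm f) (hg : Sm g) (h : Rel T f g) (i : Fin d) : Rel T (D i f) (D i g) := by
  intro t ht htT
  have := congrArg (MKV.D i) (h t ht htT)
  rwa [D_add (hf.clm (E_comm _)) (hg.clm (I_comm _)), D_clm hf (E_comm _), D_clm hf (E_comm _), D_clm hg (I_comm _)] at this

lemma time_cont (g : X d) (x : Fin d → ℝ) : Continuous fun s => g (s, x) := g.continuous.comp (by fun_prop)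

lemma Rel.K {T : ℝ} {f g : X d} (h : Rel T f g) (k : (Fin d → ℝ) → ℝ) (hk : IntegrableOn k (cube d)) :
    Rel T ((Kker k hk).op f) ((Kker k hk).op g) := by
  intro t ht htT
  have e1 : ∀ t, (Eker d t).op ((Kker k hk).op f) = (Kker k hk).op ((Eker d t).op f) := by
    intro t; ext p
    rw [E_apply, Ker.op_apply, Ker.op_apply]
    simp only [E_apply]; rfl
  have e2 : (Iker d t).op ((Kker k hk).op g) = (Kker k hk).op ((Iker d t).op g) := by
    ext p
    simp only [Ker.op_apply, ← integral_const_mul]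
    refine (integral_integral_swap (f := fun a y => t * (k y * g (t * a, p.2 - y))) ?_).trans ?_
    · have h1 : Integrable (fun z : ℝ × (Fin d → ℝ) => |t| * (|k z.2| * ‖g‖)) ((volume.restrict (Ioo (0:ℝ) 1)).prod (volume.restrict (cube d))) :=
        ((hk.abs.mul_const ‖g‖).comp_snd (volume.restrict (Ioo (0:ℝ) 1))).const_mul |t|
      refine h1.mono' ?_ (Filter.Eventually.of_forall fun z => ?_)
      · refine AEStronglyMeasurable.mul aestronglyMeasurable_const (AEStronglyMeasurable.mul ?_ ?_)
        · exact hk.aestronglyMeasurable.comp_snd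
        · apply Continuous.aestronglyMeasurable
          exact g.continuous.comp (by fun_prop)
      · simp only [Function.uncurry, norm_mul, Real.norm_eq_abs]
        have := g.norm_coe_le_norm (t * z.1, p.2 - z.2)
        gcongr
        exact this
    · congr 1; ext y
      congr 1; ext a
      show t * (k y * g (t * a, p.2 - y)) = k y * (t * g (t * a, p.2 - y))
      ring
  rw [e1, e1, e2, ← map_add, h t ht htT]

lemma Rel.mul {T : ℝ} {f g f' g' : X d} (h : Rel T f g) (h' : Rel T f' g') : Rel T (f * f') (g * f' + f * g') := by
  rw [Rel_iff] at *
  intro t ht htT x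
  set a := fun t => f (0, x) + ∫ s in (0:ℝ)..t, g (s, x) with ha
  set b := fun t => f' (0, x) + ∫ s in (0:ℝ)..t, g' (s, x) with hb
  have hda : ∀ t, HasDerivAt a (g (t, x)) t := fun t =>
    ((time_cont g x).integral_hasStrictDerivAt 0 t).hasDerivAt.const_add _
  have hdb : ∀ t, HasDerivAt b (g' (t, x)) t := fun t =>
    ((time_cont g' x).integral_hasStrictDerivAt 0 t).hasDerivAt.const_add _
  have := intervalIntegral.integral_deriv_mul_eq_sub (a := 0) (b := t) (fun s _ => hda s) (fun s _ => hdb s)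
    ((time_cont g x).intervalIntegrable _ _) ((time_cont g' x).intervalIntegrable _ _)
  have e : ∫ s in (0:ℝ)..t, (g * f' + f * g') (s, x) = a t * b t - a 0 * b 0 := by
    rw [← this]
    refine intervalIntegral.integral_congr fun s hs => ?_
    rw [uIcc_of_le ht] at hs
    simp only [BoundedContinuousFunction.add_apply, BoundedContinuousFunction.mul_apply]
    rw [h s hs.1 (hs.2.trans htT) x, h' s hs.1 (hs.2.trans htT) x]
  rw [e]
  simp only [BoundedContinuousFunction.mul_apply]
  rw [h t ht htT x, h' t ht htT x]
  simp [ha, hb]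

/-- `n` times differentiable in time -/
def R (T : ℝ) : ℕ → X d → Prop
  | 0, f => Sm f
  | n + 1, f => Sm f ∧ ∃ g, R T n g ∧ Rel T f g

lemma R.sm {T : ℝ} {n : ℕ} {f : X d} (h : R T n f) : Sm f := by
  cases n with
  | zero => exact h
  | succ n => exact h.1

lemma R.mono {T : ℝ} {n : ℕ} {f : X d} (h : R T (n + 1) f) : R T n f := by
  induction n generalizing f with
  | zero => exact h.1
  | succ n ih => obtain ⟨h1, g, h2, h3⟩ := h; exact ⟨h1, g, ih h2, h3⟩

lemma R.add {T : ℝ} {n : ℕ} {f f' : X d} (h : R T n f) (h' : R T n f') : R T n (f + f') := by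
  induction n generalizing f f' with
  | zero => exact Sm.add h h'
  | succ n ih =>
    obtain ⟨h1, g, h2, h3⟩ := h
    obtain ⟨h1', g', h2', h3'⟩ := h'
    exact ⟨h1.add h1', g + g', ih h2 h2', h3.add h3'⟩

lemma R.neg {T : ℝ} {n : ℕ} {f : X d} (h : R T n f) : R T n (-f) := by
  induction n generalizing f with
  | zero => exact Sm.neg h
  | succ n ih =>
    obtain ⟨h1, g, h2, h3⟩ := h
    exact ⟨h1.neg, -g, ih h2, h3.neg⟩

lemma R.zero {T : ℝ} {n : ℕ} : R T n (0 : X d) := by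
  induction n with
  | zero => exact Sm.zero
  | succ n ih => exact ⟨Sm.zero, 0, ih, fun t _ _ => by simp⟩

lemma R.sum {T : ℝ} {n : ℕ} {f : Fin d → X d} (h : ∀ i, R T n (f i)) : R T n (∑ i, f i) := by
  refine Finset.sum_induction _ (R T n) (fun a b ha hb => ha.add hb) R.zero (fun i _ => h i)

lemma R.D {T : ℝ} {n : ℕ} {f : X d} (h : R T n f) (i : Fin d) : R T n (D i f) := by
  induction n generalizing f with
  | zero => exact Sm.dd h i
  | succ n ih =>
    obtain ⟨h1, g, h2, h3⟩ := h
    exact ⟨h1.dd i, MKV.D i g, ih h2, h3.D h1 h2.sm i⟩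

lemma R.K {T : ℝ} {n : ℕ} {f : X d} (h : R T n f) (k : (Fin d → ℝ) → ℝ) (hk : IntegrableOn k (cube d)) :
    R T n ((Kker k hk).op f) := by
  induction n generalizing f with
  | zero => exact Sm.clm h (K_comm _ _)
  | succ n ih =>
    obtain ⟨h1, g, h2, h3⟩ := h
    exact ⟨h1.clm (K_comm _ _), _, ih h2, h3.K k hk⟩

lemma R.mul {T : ℝ} {n : ℕ} {f f' : X d} (h : R T n f) (h' : R T n f') : R T n (f * f') := by
  induction n generalizing f f' with
  | zero => exact Sm.mul h h'
  | succ n ih =>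
    have hm := h.mono
    have hm' := h'.mono
    obtain ⟨h1, g, h2, h3⟩ := h
    obtain ⟨h1', g', h2', h3'⟩ := h'
    exact ⟨h1.mul h1', _, (ih h2 hm').add (ih hm h2'), h3.mul h3'⟩

lemma R_all {T : ℝ} {u : X d} (hu : Sm u) {k : Fin d → (Fin d → ℝ) → ℝ} (hk : ∀ b, IntegrableOn (k b) (cube d))
    (h : Rel T u (Lap u - ∑ b, (Kker _ (hk b)).op u * D b u)) (n : ℕ) : R T n u := by
  induction n with
  | zero => exact hu
  | succ n ih =>
    refine ⟨hu, _, ?_, h⟩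
    rw [sub_eq_add_neg]
    exact (R.sum fun i => (ih.D i).D i).add (R.sum fun b => (ih.K _ (hk b)).mul (ih.D b)).neg

lemma I_joint_cont (g : X d) : Continuous fun p : ℝ × (Fin d → ℝ) => ∫ s in (0:ℝ)..p.1, g (s, p.2) := by
  exact intervalIntegral.continuous_parametric_intervalIntegral_of_continuous
    (f := fun (p : ℝ × (Fin d → ℝ)) s => g (s, p.2)) (g.continuous.comp (by fun_prop)) continuous_fst

lemma Rel.hasFDerivWithinAt {T : ℝ} {f g : X d} (hf : Sm f) (hg : Sm g) (h : Rel T f g) (p : Pt d)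
    (hp : p ∈ Icc 0 T ×ˢ (univ : Set (Fin d → ℝ))) :
    HasFDerivWithinAt (fun p : Pt d => f p)
      ((g p • ContinuousLinearMap.id ℝ ℝ).coprod
        (∑ i, (MKV.D i f p) • ContinuousLinearMap.proj (R := ℝ) (φ := fun _ : Fin d => ℝ) i))
      (Icc 0 T ×ˢ (univ : Set (Fin d → ℝ))) p := by
  have key := HasStrictFDerivAt.hasFDerivAt (hasStrictFDerivAt_uncurry_coprod (𝕜 := ℝ) (u := p)
    (f := fun t x => f (0, x) + ∫ s in (0:ℝ)..t, g (s, x))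
    (f₁ := fun t x => g (t, x) • ContinuousLinearMap.id ℝ ℝ)
    (f₂ := fun t x => ∑ i, (MKV.D i f (0, x) + ∫ s in (0:ℝ)..t, MKV.D i g (s, x)) •
      ContinuousLinearMap.proj (R := ℝ) (φ := fun _ : Fin d => ℝ) i) ?_ ?_ ?_ ?_)
  · have e1 : ∀ q ∈ Icc 0 T ×ˢ (univ : Set (Fin d → ℝ)), f q = f (0, q.2) + ∫ s in (0:ℝ)..q.1, g (s, q.2) :=
      fun q hq => Rel_iff.1 h q.1 hq.1.1 hq.1.2 q.2
    refine (key.hasFDerivWithinAt.congr (fun q hq => e1 q hq) (e1 p hp)).congr_fderiv ?_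
    have e2 : ∀ i, MKV.D i f p = MKV.D i f (0, p.2) + ∫ s in (0:ℝ)..p.1, MKV.D i g (s, p.2) :=
      fun i => Rel_iff.1 (h.D hf hg i) p.1 hp.1.1 hp.1.2 p.2
    simp only [e2]
    rfl
  · refine Filter.Eventually.of_forall fun q => ?_
    have := (((time_cont g q.2).integral_hasStrictDerivAt 0 q.1).hasDerivAt.const_add (f (0, q.2))).hasFDerivAt
    refine this.congr_fderiv ?_
    ext; simp [Function.HasUncurry.uncurry]
  · refine Filter.Eventually.of_forall fun q => ?_
    have h1 := (hf.hasFDerivAt_slice 0 q.2).add ((hg.clm (I_comm q.1)).hasFDerivAt_slice 0 q.2)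
    have e : (fun x => f (0, x) + ∫ s in (0:ℝ)..q.1, g (s, x)) = (fun x => f (0, x)) + fun x => (Iker d q.1).op g (0, x) := by
      ext x; simp [I_apply]
    show HasFDerivAt (fun x => f (0, x) + ∫ s in (0:ℝ)..q.1, g (s, x)) _ _
    rw [e]
    refine h1.congr_fderiv ?_
    rw [← Finset.sum_add_distrib]
    refine Finset.sum_congr rfl fun i _ => ?_
    rw [← add_smul, D_clm hg (I_comm _), I_apply]
  · apply Continuous.continuousAt
    exact g.continuous.smul continuous_const
  · apply Continuous.continuousAt
    show Continuous fun q : ℝ × (Fin d → ℝ) => ∑ i, (MKV.D i f (0, q.2) + ∫ s in (0:ℝ)..q.1, MKV.D i g (s, q.2)) •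
      ContinuousLinearMap.proj (R := ℝ) (φ := fun _ : Fin d => ℝ) i
    refine continuous_finsetSum _ fun i _ => Continuous.smul (Continuous.add ?_ (I_joint_cont _)) continuous_const
    exact (MKV.D i f).continuous.comp (by fun_prop)

lemma R.contDiffOn {T : ℝ} (hT : 0 < T) {n : ℕ} {f : X d} (h : R T n f) :
    ContDiffOn ℝ n (fun p : Pt d => f p) (Icc 0 T ×ˢ (univ : Set (Fin d → ℝ))) := by
  have hu : UniqueDiffOn ℝ (Icc 0 T ×ˢ (univ : Set (Fin d → ℝ))) := (uniqueDiffOn_Icc hT).prod uniqueDiffOn_univ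
  induction n generalizing f with
  | zero => exact contDiffOn_zero.2 f.continuous.continuousOn
  | succ n ih =>
    have hm := h.mono
    obtain ⟨h1, g, h2, h3⟩ := h
    rw [show ((n + 1 : ℕ) : WithTop ℕ∞) = n + 1 by norm_cast, contDiffOn_succ_iff_hasFDerivWithinAt_of_uniqueDiffOn hu]
    refine ⟨fun h => by simp at h, _, ?_, fun p hp => h3.hasFDerivWithinAt h1 h2.sm p hp⟩
    have e : ∀ p, ((g p • ContinuousLinearMap.id ℝ ℝ).coprod
        (∑ i, (MKV.D i f p) • ContinuousLinearMap.proj (R := ℝ) (φ := fun _ : Fin d => ℝ) i)) =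
        g p • ContinuousLinearMap.fst ℝ ℝ (Fin d → ℝ) + ∑ i, (MKV.D i f p) •
        (ContinuousLinearMap.proj (R := ℝ) (φ := fun _ : Fin d => ℝ) i).comp (ContinuousLinearMap.snd ℝ ℝ (Fin d → ℝ)) := by
      intro p
      apply ContinuousLinearMap.ext
      rintro ⟨a, b⟩
      simp
    simp only [e]
    refine ((ih h2).smul contDiffOn_const).add (ContDiffOn.sum fun i _ => ((ih (hm.D i)).smul contDiffOn_const))

end MKV

end

section
set_option linter.unusedVariables false
open scoped Topology ContDiff NNReal
namespace MKV
variable {d : ℕ}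

attribute [local instance] instMeasureSpaceUnitAddCircle
attribute [local instance] instIsAddHaarMeasureUnitAddCircleVolume
attribute [local instance] instIsProbabilityMeasureUnitAddCircleVolume

/-- the torus -/
abbrev TT (d : ℕ) := UnitAddTorus (Fin d)

/-- canonical representative -/
def rep (z : TT d) : Fin d → ℝ := fun i => (AddCircle.equivIoc (1:ℝ) 0 (z i)).1

/-- projection -/
def prj (x : Fin d → ℝ) : TT d := fun i => (x i : UnitAddCircle)

lemma rep_mp : MeasurePreserving (rep (d := d)) volume (volume.restrict (cube d)) := by
  have h1 := UnitAddTorus.measurePreserving_equivPiIoc (d := Fin d) (fun _ => (0:ℝ))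
  have h2 : MeasurePreserving (Subtype.val : {x : Fin d → ℝ // ∀ i, x i ∈ Ioc (0:ℝ) (0 + 1)} → Fin d → ℝ)
      (Measure.comap Subtype.val volume) (volume.restrict {x : Fin d → ℝ | ∀ i, x i ∈ Ioc (0:ℝ) (0 + 1)}) := by
    refine ⟨measurable_subtype_coe, ?_⟩
    exact map_comap_subtype_coe (MeasurableSet.univ_pi' (fun i => measurableSet_Ioc)) _
  have h3 := h2.comp h1
  have h4 : (volume.restrict {x : Fin d → ℝ | ∀ i, x i ∈ Ioc (0:ℝ) (0 + 1)}) = volume.restrict (cube d) := by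
    apply Measure.restrict_congr_set
    have := Measure.univ_pi_Ioc_ae_eq_Icc (μ := fun _ : Fin d => (volume : Measure ℝ)) (f := 0) (g := 1)
    have e : {x : Fin d → ℝ | ∀ i, x i ∈ Ioc (0:ℝ) (0 + 1)} = Set.pi univ fun i => Ioc ((0 : Fin d → ℝ) i) ((1 : Fin d → ℝ) i) := by
      ext x; simp [Set.mem_pi]
    rw [e]
    exact this
  rw [h4] at h3
  exact h3

lemma rep_me : MeasurableEmbedding (rep (d := d)) := by
  have := (MeasurableEmbedding.subtype_coe (s := {x : Fin d → ℝ | ∀ i, x i ∈ Ioc (0:ℝ) (0 + 1)}) (MeasurableSet.univ_pi' (fun i => measurableSet_Ioc))).comp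
    (UnitAddTorus.measurableEquivPiIoc (ι := Fin d) (fun _ => (0:ℝ))).measurableEmbedding
  exact this

lemma int_cube {E : Type*} [NormedAddCommGroup E] [NormedSpace ℝ E] (f : (Fin d → ℝ) → E) : ∫ x in cube d, f x = ∫ z : TT d, f (rep z) :=
  (rep_mp.integral_comp rep_me f).symm

lemma prj_rep (z : TT d) : prj (rep z) = z := by
  ext i
  exact (AddCircle.equivIoc (1:ℝ) 0).symm_apply_apply (z i)

lemma prj_add (x y : Fin d → ℝ) : prj (x + y) = prj x + prj y := rfl
lemma prj_sub (x y : Fin d → ℝ) : prj (x - y) = prj x - prj y := rfl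

lemma per_eq {E : Type*} {f : (Fin d → ℝ) → E} (hf : Per f) {x y : Fin d → ℝ} (h : prj x = prj y) : f x = f y := by
  have : ∀ i, ∃ n : ℤ, x i = y i + n := by
    intro i
    have h1 := congrFun h i
    simp only [prj] at h1
    have h2 := (QuotientAddGroup.eq).1 h1
    obtain ⟨n, hn⟩ := AddSubgroup.mem_zmultiples_iff.1 h2
    refine ⟨-n, ?_⟩
    simp at hn ⊢; linarith
  choose n hn using this
  rw [show x = y + fun i => (n i : ℝ) from funext hn, hf]

lemma int_add {E : Type*} [NormedAddCommGroup E] [NormedSpace ℝ E] {f : (Fin d → ℝ) → E} (hf : Per f) (h : Fin d → ℝ) :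
    ∫ x in cube d, f (x + h) = ∫ x in cube d, f x := by
  rw [int_cube, int_cube, ← integral_add_right_eq_self (fun z : TT d => f (rep z)) (prj h)]
  congr 1; ext z
  apply per_eq hf
  rw [prj_rep, prj_add, prj_rep]

instance negInv : (volume : Measure (TT d)).IsNegInvariant := by
  have : (volume : Measure UnitAddCircle).IsNegInvariant := inferInstance
  infer_instance

lemma tconv_eq {k g : (Fin d → ℝ) → ℝ} (hk : Per k) (hg : Per g) (x : Fin d → ℝ) :
    tconv k g x = ∫ y in cube d, k y * g (x - y) := by
  unfold tconv
  rw [int_cube, int_cube, ← integral_sub_left_eq_self (fun z : TT d => k (rep z) * g (x - rep z)) _ (prj x)]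
  congr 1; ext z
  congr 1
  · apply per_eq hk
    rw [prj_rep, prj_sub, prj_rep]
  · apply per_eq hg
    rw [prj_rep, prj_sub, prj_rep]; abel

/-- integral over the cube at time `s` -/
def intC (s : ℝ) : X d →L[ℝ] ℝ :=
  (ev (s, 0)).comp (Kker (d := d) (fun _ => 1) (integrableOn_const (by exact isCompact_cube.measure_lt_top.ne))).op

lemma intC_apply (s : ℝ) (w : X d) (hw : Per fun x => w (s, x)) : intC s w = ∫ x in cube d, w (s, x) := by
  show ∫ y in cube d, 1 * w (s, 0 - y) = _
  have := tconv_eq (k := fun _ => 1) (g := fun x => w (s, x)) (fun _ _ => rfl) hw 0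
  rw [← this]
  unfold tconv
  simp

lemma int_D (s : ℝ) {w : X d} (hw : Sm w) (hp : ∀ n : Fin d → ℤ, tau (fun i => (n i : ℝ)) w = w) (b : Fin d) :
    ∫ x in cube d, D b w (s, x) = 0 := by
  have hD : Per fun x => D b w (s, x) := by
    have := Per.pdv (tau_per hp s) b
    intro n x
    have h2 := this n x
    rwa [hw.pdv_eq, hw.pdv_eq] at h2
  rw [← intC_apply s _ hD]
  have h1 : HasFDerivAt (fun h => intC s (tau h w)) ((intC s).comp (fderiv ℝ (fun h => tau h w) 0)) 0 :=
    (intC s).hasFDerivAt.comp 0 (hw.differentiable 0).hasFDerivAt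
  have h2 : (fun h => intC s (tau h w)) = fun _ => intC s w := by
    ext h
    rw [intC_apply s w (tau_per hp s), intC_apply]
    · exact int_add (tau_per hp s) h
    · apply tau_per
      intro n
      rw [tau_tau, add_comm, ← tau_tau, hp]
  rw [h2] at h1
  have h3 := h1.unique (hasFDerivAt_const _ _)
  have h4 := DFunLike.congr_fun h3 (Pi.single b 1)
  exact h4

lemma Kop_eq {k : (Fin d → ℝ) → ℝ} (hk : IntegrableOn k (cube d)) (hkp : Per k) {u : X d} (s : ℝ)
    (hu : Per fun x => u (s, x)) (x : Fin d → ℝ) : (Kker k hk).op u (s, x) = tconv k (fun x => u (s, x)) x := by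
  rw [tconv_eq hkp hu]; rfl

lemma pX_per (φ : (Fin d → ℝ) → ℝ) (hφ : SP φ) (n : Fin d → ℤ) : tau (fun i => (n i : ℝ)) (pX φ hφ) = pX φ hφ := by
  ext p; exact hφ.2 n p.2

lemma D_per {w : X d} (hp : ∀ n : Fin d → ℤ, tau (fun i => (n i : ℝ)) w = w) (b : Fin d) (hw : Sm w) (n : Fin d → ℤ) :
    tau (fun i => (n i : ℝ)) (D b w) = D b w := by
  have hc : Comm (tau (d := d) (fun i => (n i : ℝ))) := fun h w => by rw [tau_tau, tau_tau, add_comm]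
  rw [← D_clm hw hc, hp]

lemma weak_slice (K : (Fin d → ℝ) → (Fin d → ℝ)) (hk : ∀ b, IntegrableOn (fun y => K y b) (cube d))
    (hkp : Per K) (hdiv : DistDivFree K) {u : X d} (hu : Sm u) (hp : ∀ n : Fin d → ℤ, tau (fun i => (n i : ℝ)) u = u)
    (φ : (Fin d → ℝ) → ℝ) (hφ : SP φ) (s : ℝ) :
    ∫ x in cube d, (Lap u - ∑ b, (Kker _ (hk b)).op u * D b u) (s, x) * φ x =
    ∫ x in cube d, u (s, x) * ((∑ α, tconv (fun y => K y α) (fun x => u (s, x)) x * pdv α φ x)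
            + ∑ α, pdv α (pdv α φ) x) := by
  set P := pX φ hφ
  have hP : Sm P := pX_sm φ hφ
  set c : Fin d → X d := fun b => (Kker _ (hk b)).op u with hc
  have hcs : ∀ b, Sm (c b) := fun b => hu.clm (K_comm _ _)
  have hcp : ∀ b, ∀ n : Fin d → ℤ, tau (fun i => (n i : ℝ)) (c b) = c b := fun b n => by
    rw [hc]; simp only; rw [← K_comm, hp]
  set W : Fin d → X d := fun b => D b u * P + -(u * D b P) + -(c b * u * P) with hW
  have hWs : ∀ b, Sm (W b) := fun b => (((hu.dd b).mul hP).add (hu.mul (hP.dd b)).neg).add (((hcs b).mul hu).mul hP).neg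
  have hWp : ∀ b, ∀ n : Fin d → ℤ, tau (fun i => (n i : ℝ)) (W b) = W b := fun b n => by
    simp only [hW, map_add, map_neg, tau_mul, hp, hcp, D_per hp b hu, pX_per, D_per (pX_per φ hφ) b hP, P]
  have hdc : ∑ b, D b (c b) = 0 := by
    rw [← div_free K hk hdiv hu hp]
    exact Finset.sum_congr rfl fun b _ => D_clm hu (K_comm _ _) b
  have hDW : ∀ b, D b (W b) = (D b (D b u) * P - u * D b (D b P)) - (D b (c b) * u * P + c b * D b u * P + c b * u * D b P) := by
    intro b
    simp only [hW]
    rw [D_add (((hu.dd b).mul hP).add (hu.mul (hP.dd b)).neg) (((hcs b).mul hu).mul hP).neg,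
      D_add ((hu.dd b).mul hP) (hu.mul (hP.dd b)).neg, D_neg, D_neg, D_mul (hu.dd b) hP, D_mul hu (hP.dd b),
      D_mul ((hcs b).mul hu) hP, D_mul (hcs b) hu]
    ext p
    simp
    ring
  have e0 : (Lap u - ∑ b, c b * D b u) * P = u * (∑ b, c b * D b P + Lap P) + ∑ b, D b (W b) := by
    have : ∑ b, D b (W b) = ∑ b, D b (W b) + (∑ b, D b (c b)) * (u * P) := by rw [hdc]; ext; simp
    rw [this]
    ext p
    simp only [hDW, Lap, BoundedContinuousFunction.add_apply, BoundedContinuousFunction.mul_apply, BoundedContinuousFunction.sub_apply,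
      BoundedContinuousFunction.sum_apply, Finset.sum_sub_distrib, Finset.sum_add_distrib, Finset.mul_sum, Finset.sum_mul, sub_mul, mul_add]
    simp only [mul_assoc, mul_left_comm, mul_comm]
    ring
  have hb : ∀ w : X d, IntegrableOn (fun x => w (s, x)) (cube d) := fun w =>
    (w.continuous.comp (by fun_prop : Continuous fun x : Fin d → ℝ => (s, x))).continuousOn.integrableOn_compact isCompact_cube
  have e1 : ∀ x, (Lap u - ∑ b, c b * D b u) (s, x) * φ x = u (s, x) * ((∑ α, tconv (fun y => K y α) (fun x => u (s, x)) x * pdv α φ x)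
            + ∑ α, pdv α (pdv α φ) x) + (∑ b, D b (W b)) (s, x) := by
    intro x
    have := DFunLike.congr_fun e0 (s, x)
    simp only [BoundedContinuousFunction.add_apply, BoundedContinuousFunction.mul_apply, BoundedContinuousFunction.sub_apply,
      BoundedContinuousFunction.sum_apply, Lap] at this ⊢
    refine this.trans ?_
    congr 2
    congr 1
    · refine Finset.sum_congr rfl fun b _ => ?_
      congr 1
      · exact Kop_eq (hk b) (fun n x => by simp only [hkp n x]) s (tau_per hp s) x
      · simp only [P, D_pX]; rfl
    · refine Finset.sum_congr rfl fun b _ => ?_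
      simp only [P, D_pX]; rfl
  have e2 : ∀ x, u (s, x) * ((∑ α, tconv (fun y => K y α) (fun x => u (s, x)) x * pdv α φ x)
            + ∑ α, pdv α (pdv α φ) x) = (Lap u - ∑ b, c b * D b u) (s, x) * φ x - (∑ b, D b (W b)) (s, x) := fun x => by
    rw [e1]; ring
  simp only [e2]
  have hI : IntegrableOn (fun x => (Lap u - ∑ b, c b * D b u) (s, x) * φ x) (cube d) := hb ((Lap u - ∑ b, c b * D b u) * P)
  rw [integral_sub hI (hb _)]
  simp only [BoundedContinuousFunction.sum_apply]
  rw [integral_finsetSum _ fun b _ => hb _]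
  simp only [int_D s (hWs _) (hWp _), Finset.sum_const_zero, sub_zero]
  rfl

lemma weak_form {T : ℝ} (K : (Fin d → ℝ) → (Fin d → ℝ)) (hk : ∀ b, IntegrableOn (fun y => K y b) (cube d))
    (hkp : Per K) (hdiv : DistDivFree K) {u : X d} (hu : Sm u) (hp : ∀ n : Fin d → ℤ, tau (fun i => (n i : ℝ)) u = u)
    (hR : Rel T u (Lap u - ∑ b, (Kker _ (hk b)).op u * D b u))
    (φ : (Fin d → ℝ) → ℝ) (hφ : SP φ) (t : ℝ) (ht : 0 ≤ t) (htT : t ≤ T) :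
    (∫ x in cube d, u (t, x) * φ x) - (∫ x in cube d, u (0, x) * φ x)
      = ∫ s in (0:ℝ)..t, ∫ x in cube d, u (s, x) *
          ((∑ α, tconv (fun y => K y α) (fun x => u (s, x)) x * pdv α φ x)
            + ∑ α, pdv α (pdv α φ) x) := by
  simp only [← weak_slice K hk hkp hdiv hu hp φ hφ]
  set g := (Lap u - ∑ b, (Kker _ (hk b)).op u * D b u)
  have hb : ∀ (w : X d) s, IntegrableOn (fun x => w (s, x) * φ x) (cube d) := fun w s =>
    ((w.continuous.comp (by fun_prop : Continuous fun x : Fin d → ℝ => (s, x))).mul hφ.1.continuous).continuousOn.integrableOn_compact isCompact_cube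
  rw [← integral_sub (hb u t) (hb u 0), intervalIntegral.integral_of_le ht]
  rw [integral_integral_swap (f := fun s x => g (s, x) * φ x)]
  · congr 1; ext x
    rw [← intervalIntegral.integral_of_le ht, intervalIntegral.integral_mul_const, ← sub_mul, Rel_iff.1 hR t ht htT x]
    ring
  · rw [Measure.prod_restrict]
    refine IntegrableOn.mono_set (t := Icc 0 t ×ˢ cube d) ?_ (prod_mono Ioc_subset_Icc_self subset_rfl)
    have : Continuous (Function.uncurry fun s x => g (s, x) * φ x) :=
      (g.continuous.comp (by fun_prop)).mul (hφ.1.continuous.comp (by fun_prop))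
    exact this.continuousOn.integrableOn_compact (isCompact_Icc.prod isCompact_cube)

end MKV

end

section
set_option linter.unusedVariables false
open scoped Topology ContDiff NNReal
namespace MKV
variable {d : ℕ}
attribute [local instance] instMeasureSpaceUnitAddCircle
attribute [local instance] instIsAddHaarMeasureUnitAddCircleVolume
attribute [local instance] instIsProbabilityMeasureUnitAddCircleVolume

/-- phase -/
def ph (n : Fin d → ℤ) (x : Fin d → ℝ) : ℝ := 2 * π * ∑ i, (n i : ℝ) * x i

/-- cosine coefficient -/
def Cn (n : Fin d → ℤ) (f : (Fin d → ℝ) → ℝ) : ℝ := ∫ x in cube d, f x * Real.cos (ph n x)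
/-- sine coefficient -/
def Sn (n : Fin d → ℤ) (f : (Fin d → ℝ) → ℝ) : ℝ := ∫ x in cube d, f x * Real.sin (ph n x)

lemma ph_contDiff (n : Fin d → ℤ) : ContDiff ℝ ∞ (ph n) := by
  unfold ph
  fun_prop

lemma ph_per (n m : Fin d → ℤ) (x : Fin d → ℝ) : ph n (x + fun i => (m i : ℝ)) = ph n x + ((∑ i, n i * m i : ℤ) : ℝ) * (2 * π) := by
  unfold ph
  simp only [Pi.add_apply, mul_add, Finset.sum_add_distrib]
  push_cast
  ring

lemma cos_SP (n : Fin d → ℤ) : SP fun x => Real.cos (ph n x) := by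
  refine ⟨Real.contDiff_cos.comp (ph_contDiff n), fun m x => ?_⟩
  simp only [ph_per]
  exact Real.cos_add_int_mul_two_pi _ _

lemma sin_SP (n : Fin d → ℤ) : SP fun x => Real.sin (ph n x) := by
  refine ⟨Real.contDiff_sin.comp (ph_contDiff n), fun m x => ?_⟩
  simp only [ph_per]
  exact Real.sin_add_int_mul_two_pi _ _

lemma ph_deriv (n : Fin d → ℤ) (a : Fin d) (x : Fin d → ℝ) : fderiv ℝ (ph n) x (Pi.single a 1) = 2 * π * n a := by
  have h : HasFDerivAt (ph n) ((2 * π) • ∑ i, (n i : ℝ) • (ContinuousLinearMap.proj i : (Fin d → ℝ) →L[ℝ] ℝ)) x := by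
    unfold ph
    refine HasFDerivAt.const_mul (HasFDerivAt.fun_sum fun i _ => ?_) _
    exact (ContinuousLinearMap.proj (R := ℝ) (φ := fun _ : Fin d => ℝ) i).hasFDerivAt.const_mul _
  rw [h.fderiv]
  simp [Pi.single_apply]

lemma pdv_cos (n : Fin d → ℤ) (a : Fin d) : pdv a (fun x => Real.cos (ph n x)) = fun x => -(2 * π * n a) * Real.sin (ph n x) := by
  ext x
  unfold pdv
  have h := (ph_contDiff n).differentiable (by simp) x
  rw [(h.hasFDerivAt.cos).fderiv]
  simp [ph_deriv]; ring

lemma pdv_sin (n : Fin d → ℤ) (a : Fin d) : pdv a (fun x => Real.sin (ph n x)) = fun x => (2 * π * n a) * Real.cos (ph n x) := by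
  ext x
  unfold pdv
  have h := (ph_contDiff n).differentiable (by simp) x
  rw [(h.hasFDerivAt.sin).fderiv]
  simp [ph_deriv]; ring

/-- bounded measurable periodic function -/
def BM (M : ℝ) (f : (Fin d → ℝ) → ℝ) : Prop :=
  Per f ∧ AEStronglyMeasurable f (volume.restrict (cube d)) ∧ ∀ x, |f x| ≤ M

instance finC : IsFiniteMeasure (volume.restrict (cube d)) := ⟨by simpa using isCompact_cube.measure_lt_top⟩

lemma BM.integrable {M : ℝ} {f : (Fin d → ℝ) → ℝ} (h : BM M f) : IntegrableOn f (cube d) :=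
  Integrable.of_bound h.2.1 M (Filter.Eventually.of_forall h.2.2)

/-- lift to the torus -/
def lf (f : (Fin d → ℝ) → ℝ) (z : TT d) : ℂ := (f (rep z) : ℂ)

lemma lf_integrable {f : (Fin d → ℝ) → ℝ} (h : IntegrableOn f (cube d)) : Integrable (lf f) volume := by
  have : Integrable (fun z : TT d => f (rep z)) volume := (rep_mp.integrable_comp_emb rep_me).2 h
  exact this.ofReal

lemma mF_rep (n : Fin d → ℤ) (z : TT d) : UnitAddTorus.mFourier (-n) z = (Real.cos (ph n (rep z)) : ℂ) - Complex.I * (Real.sin (ph n (rep z)) : ℂ) := by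
  conv_lhs => rw [← prj_rep z]
  show ∏ i, fourier ((-n) i) ((rep z i : ℝ) : UnitAddCircle) = _
  simp only [fourier_coe_apply]
  rw [← Complex.exp_sum]
  have : ∑ i, 2 * (π:ℂ) * Complex.I * (((-n) i : ℤ) : ℂ) * (rep z i : ℂ) / ((1:ℝ):ℂ) = -((ph n (rep z) : ℝ) : ℂ) * Complex.I := by
    unfold ph
    push_cast
    rw [Finset.mul_sum, neg_mul, Finset.sum_mul, ← Finset.sum_neg_distrib]
    refine Finset.sum_congr rfl fun i _ => ?_
    simp; ring
  rw [this, Complex.exp_mul_I]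
  simp only [Complex.cos_neg, Complex.sin_neg, ← Complex.ofReal_cos, ← Complex.ofReal_sin]
  ring

lemma int_mul_bdd {f φ : (Fin d → ℝ) → ℝ} (hf : IntegrableOn f (cube d)) (hφ : Continuous φ) (C : ℝ) (hC : ∀ x, |φ x| ≤ C) :
    IntegrableOn (fun x => f x * φ x) (cube d) :=
  Integrable.mul_bdd (c := C) hf hφ.aestronglyMeasurable (Filter.Eventually.of_forall hC)

lemma coeff_eq {f : (Fin d → ℝ) → ℝ} (h : IntegrableOn f (cube d)) (n : Fin d → ℤ) :
    UnitAddTorus.mFourierCoeff (lf f) n = (Cn n f : ℂ) - Complex.I * (Sn n f : ℂ) := by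
  unfold UnitAddTorus.mFourierCoeff
  simp only [mF_rep, lf, smul_eq_mul]
  have h1 : IntegrableOn (fun x => ((f x * Real.cos (ph n x) : ℝ) : ℂ)) (cube d) :=
    (int_mul_bdd h (cos_SP n).1.continuous 1 fun x => Real.abs_cos_le_one _).ofReal
  have h2 : IntegrableOn (fun x => ((f x * Real.sin (ph n x) : ℝ) : ℂ)) (cube d) :=
    (int_mul_bdd h (sin_SP n).1.continuous 1 fun x => Real.abs_sin_le_one _).ofReal
  rw [← int_cube (fun x => ((Real.cos (ph n x) : ℂ) - Complex.I * (Real.sin (ph n x) : ℂ)) * (f x : ℂ))]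
  unfold Cn Sn
  rw [← integral_complex_ofReal, ← integral_complex_ofReal, ← integral_const_mul, ← integral_sub h1 (h2.const_mul _)]
  congr 1; ext x
  push_cast
  ring

lemma lf_memLp {M : ℝ} {f : (Fin d → ℝ) → ℝ} (h : BM M f) : MemLp (lf f) 2 volume := by
  refine MemLp.of_bound (lf_integrable h.integrable).1 M (Filter.Eventually.of_forall fun z => ?_)
  simpa [lf] using h.2.2 (rep z)

lemma parseval {M N : ℝ} {f g : (Fin d → ℝ) → ℝ} (hf : BM M f) (hg : BM N g) :
    HasSum (fun n => Cn n f * Cn n g + Sn n f * Sn n g) (∫ x in cube d, f x * g x) := by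
  have h := UnitAddTorus.hasSum_prod_mFourierCoeff ((lf_memLp hf).toLp _) ((lf_memLp hg).toLp _)
  have e : ∀ {M : ℝ} {f : (Fin d → ℝ) → ℝ} (hf : BM M f) n, UnitAddTorus.mFourierCoeff ((lf_memLp hf).toLp _) n = (Cn n f : ℂ) - Complex.I * (Sn n f : ℂ) := by
    intro M f hf n
    rw [← coeff_eq hf.integrable]
    refine integral_congr_ae ?_
    filter_upwards [(lf_memLp hf).coeFn_toLp] with z hz
    rw [hz]
  have h' : HasSum (fun n => (starRingEnd ℂ) ((Cn n f : ℂ) - Complex.I * (Sn n f : ℂ)) * ((Cn n g : ℂ) - Complex.I * (Sn n g : ℂ)))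
    (∫ t, (starRingEnd ℂ) ((lf_memLp hf).toLp _ t) * ((lf_memLp hg).toLp _ t)) := by
    refine HasSum.congr_fun h fun n => ?_
    rw [← e hf n, ← e hg n]
  replace h := h'
  have h2 := Complex.hasSum_re h
  convert h2 using 1
  · ext n; simp
  · have : ∫ t, (starRingEnd ℂ) ((lf_memLp hf).toLp _ t) * ((lf_memLp hg).toLp _ t) = ∫ z : TT d, ((f (rep z) * g (rep z) : ℝ) : ℂ) := by
      refine integral_congr_ae ?_
      filter_upwards [(lf_memLp hf).coeFn_toLp, (lf_memLp hg).coeFn_toLp] with z hz hz'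
      rw [hz, hz']
      simp [lf]
    rw [this, integral_complex_ofReal, Complex.ofReal_re, int_cube (fun x => f x * g x)]

lemma lf_tconv {k f : (Fin d → ℝ) → ℝ} (hk : Per k) (hf : Per f) (z : TT d) :
    lf (tconv k f) z = convolution (lf k) (lf f) (ContinuousLinearMap.mul ℂ ℂ) volume z := by
  unfold lf convolution
  rw [tconv_eq hk hf, int_cube (fun y => k y * f (rep z - y)), ← integral_complex_ofReal]
  congr 1; ext w
  simp only [ContinuousLinearMap.mul_apply', Complex.ofReal_mul]
  congr 2
  apply per_eq hf
  rw [prj_rep, prj_sub, prj_rep, prj_rep]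

lemma BM.tconv {M : ℝ} {k f : (Fin d → ℝ) → ℝ} (hk : IntegrableOn k (cube d)) (hkp : Per k) (hf : BM M f) :
    BM ((∫ y in cube d, |k y|) * M) (tconv k f) := by
  refine ⟨fun n x => ?_, ?_, fun x => ?_⟩
  · unfold _root_.tconv
    congr 1; ext y
    rw [← hkp n (x - y)]
    congr 2; ring
  · have h1 : AEStronglyMeasurable (convolution (lf k) (lf f) (ContinuousLinearMap.mul ℂ ℂ) volume) volume :=
      ((lf_integrable hk).integrable_convolution (ContinuousLinearMap.mul ℂ ℂ) (lf_integrable hf.integrable)).1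
    have h2 : AEStronglyMeasurable (fun z : TT d => MKV.lf (_root_.tconv k f) z) volume := by
      simpa only [lf_tconv hkp hf.1] using h1
    have h3 : AEStronglyMeasurable (fun z : TT d => (_root_.tconv k f) (rep z)) volume := by
      simpa [lf] using Complex.continuous_re.comp_aestronglyMeasurable h2
    exact (rep_mp.aestronglyMeasurable_comp_iff rep_me).1 h3
  · rw [tconv_eq hkp hf.1, ← integral_mul_const]
    refine (abs_integral_le_integral_abs).trans ?_
    refine integral_mono_of_nonneg (Filter.Eventually.of_forall fun y => abs_nonneg _) (hk.abs.mul_const _) (Filter.Eventually.of_forall fun y => ?_)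
    simp only [abs_mul]
    exact mul_le_mul_of_nonneg_left (hf.2.2 _) (abs_nonneg _)

lemma coeff_tconv {M : ℝ} {k f : (Fin d → ℝ) → ℝ} (hk : IntegrableOn k (cube d)) (hkp : Per k) (hf : BM M f) (n : Fin d → ℤ) :
    Cn n (tconv k f) = Cn n k * Cn n f - Sn n k * Sn n f ∧ Sn n (tconv k f) = Cn n k * Sn n f + Sn n k * Cn n f := by
  have h1 := coeff_eq (BM.tconv hk hkp hf).integrable n
  have h2 := coeff_eq hk n
  have h3 := coeff_eq hf.integrable n
  have key : UnitAddTorus.mFourierCoeff (lf (tconv k f)) n = UnitAddTorus.mFourierCoeff (lf k) n * UnitAddTorus.mFourierCoeff (lf f) n := by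
    have hi : ∀ {g : (Fin d → ℝ) → ℝ}, IntegrableOn g (cube d) → Integrable (fun z : TT d => UnitAddTorus.mFourier (-n) z • lf g z) volume := fun {g} hg => by
      refine Integrable.bdd_mul (c := 1) (lf_integrable hg) (UnitAddTorus.mFourier (-n)).continuous.aestronglyMeasurable (Filter.Eventually.of_forall fun z => ?_)
      exact ((UnitAddTorus.mFourier (-n)).norm_coe_le_norm z).trans UnitAddTorus.mFourier_norm.le
    have := integral_convolution (ContinuousLinearMap.mul ℂ ℂ) (hi hk) (hi hf.integrable)
    unfold UnitAddTorus.mFourierCoeff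
    rw [ContinuousLinearMap.mul_apply'] at this
    rw [← this]
    congr 1; ext z
    rw [lf_tconv hkp hf.1]
    unfold convolution
    rw [smul_eq_mul, ← integral_const_mul]
    congr 1; ext w
    simp only [ContinuousLinearMap.mul_apply', smul_eq_mul]
    have : UnitAddTorus.mFourier (-n) z = UnitAddTorus.mFourier (-n) w * UnitAddTorus.mFourier (-n) (z - w) := by
      conv_lhs => rw [← add_sub_cancel w z]
      simp only [UnitAddTorus.mFourier, ContinuousMap.coe_mk, Pi.add_apply, ← Finset.prod_mul_distrib]
      refine Finset.prod_congr rfl fun i _ => ?_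
      have := AddCircle.toCircle_add ((-n) i • w i) ((-n) i • (z i - w i))
      rw [← smul_add] at this
      simp only [fourier_apply, Pi.sub_apply, this, Circle.coe_mul]
    rw [this]; ring
  rw [h1, h2, h3] at key
  have r := congrArg Complex.re key
  have i := congrArg Complex.im key
  simp at r i
  constructor <;> linarith

lemma coeff_bd {f φ : (Fin d → ℝ) → ℝ} (hf : IntegrableOn f (cube d)) (C : ℝ) (hφ : ∀ x, |φ x| ≤ C) :
    |∫ x in cube d, f x * φ x| ≤ (∫ y in cube d, |f y|) * C := by
  rw [← integral_mul_const]
  refine (abs_integral_le_integral_abs).trans ?_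
  refine integral_mono_of_nonneg (Filter.Eventually.of_forall fun y => abs_nonneg _) (hf.abs.mul_const _) (Filter.Eventually.of_forall fun y => ?_)
  simp only [abs_mul]
  exact mul_le_mul_of_nonneg_left (hφ _) (abs_nonneg _)

lemma tconv_L2 {M : ℝ} {k f : (Fin d → ℝ) → ℝ} (hk : IntegrableOn k (cube d)) (hkp : Per k) (hf : BM M f) :
    ∫ x in cube d, tconv k f x * tconv k f x ≤ 2 * (∫ y in cube d, |k y|) ^ 2 * ∫ x in cube d, f x * f x := by
  have h1 := parseval (BM.tconv hk hkp hf) (BM.tconv hk hkp hf)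
  have h2 := (parseval hf hf).mul_left (2 * (∫ y in cube d, |k y|) ^ 2)
  refine hasSum_le (fun n => ?_) h1 h2
  obtain ⟨e1, e2⟩ := coeff_tconv hk hkp hf n
  rw [e1, e2]
  have b1 : Cn n k ^ 2 ≤ (∫ y in cube d, |k y|) ^ 2 := by
    have := coeff_bd hk 1 (fun x => Real.abs_cos_le_one (ph n x))
    rw [mul_one] at this
    exact sq_le_sq' (abs_le.1 this).1 (abs_le.1 this).2
  have b2 : Sn n k ^ 2 ≤ (∫ y in cube d, |k y|) ^ 2 := by
    have := coeff_bd hk 1 (fun x => Real.abs_sin_le_one (ph n x))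
    rw [mul_one] at this
    exact sq_le_sq' (abs_le.1 this).1 (abs_le.1 this).2
  have := mul_le_mul_of_nonneg_right (add_le_add b1 b2) (show 0 ≤ Cn n f ^ 2 + Sn n f ^ 2 by positivity)
  nlinarith

end MKV

end

section
set_option linter.unusedVariables false
open scoped Topology ContDiff NNReal
namespace MKV
variable {d : ℕ}

lemma meas_prim (q : ℝ → ℝ) (T : ℝ) : AEStronglyMeasurable (fun t => ∫ s in (0:ℝ)..t, q s) (volume.restrict (Icc 0 T)) := by
  classical
  set A : Set ℝ := {t | 0 ≤ t ∧ IntervalIntegrable q volume 0 t} with hA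
  have hdown : ∀ t ∈ A, ∀ s, 0 ≤ s → s ≤ t → s ∈ A := by
    intro t ht s hs hst
    refine ⟨hs, ht.2.mono_set ?_⟩
    rw [uIcc_of_le hs, uIcc_of_le ht.1]
    exact Icc_subset_Icc_right hst
  have hord : A.OrdConnected := ⟨fun x hx y hy z hz => hdown y hy z (hx.1.trans hz.1) hz.2⟩
  have hAm : MeasurableSet A := hord.measurableSet
  set G : ℝ → ℝ := fun t => ∫ s in (0:ℝ)..t, q s with hG
  have hcont : ContinuousOn G A := by
    intro t ht
    have hc : ∀ t' ∈ A, ContinuousOn G (Icc 0 t') := fun t' ht' => by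
      have := intervalIntegral.continuousOn_primitive_interval' ht'.2 left_mem_uIcc
      rwa [uIcc_of_le ht'.1] at this
    by_cases h : ∃ t' ∈ A, t < t'
    · obtain ⟨t', ht', htt⟩ := h
      refine ((hc t' ht') t ⟨ht.1, htt.le⟩).mono_of_mem_nhdsWithin ?_
      have : Iio t' ∈ 𝓝 t := Iio_mem_nhds htt
      filter_upwards [mem_nhdsWithin_of_mem_nhds this, self_mem_nhdsWithin] with s hs hsA
      exact ⟨hsA.1, (mem_Iio.1 hs).le⟩
    · push Not at h
      exact ((hc t ht) t ⟨ht.1, le_rfl⟩).mono fun s hs => ⟨hs.1, h s hs⟩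
  have h1 : AEStronglyMeasurable (A.indicator G) volume :=
    (aestronglyMeasurable_indicator_iff hAm).2 (hcont.aestronglyMeasurable hAm)
  refine (h1.mono_measure Measure.restrict_le_self).congr ?_
  refine (ae_restrict_iff' measurableSet_Icc).2 (Filter.Eventually.of_forall fun t ht => ?_)
  by_cases h : t ∈ A
  · simp [h, hG]
  · simp only [h, not_false_eq_true, indicator_of_notMem]
    symm
    apply intervalIntegral.integral_undef
    intro hh
    exact h ⟨ht.1, hh⟩

lemma sq_prim (h : ℝ → ℝ) (t : ℝ) (ht : 0 ≤ t) (hi : IntervalIntegrable h volume 0 t) :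
    (∫ s in (0:ℝ)..t, h s) ^ 2 = ∫ s in (0:ℝ)..t, 2 * (h s * ∫ r in (0:ℝ)..s, h r) := by
  have hac := hi.absolutelyContinuousOnInterval_intervalIntegral left_mem_uIcc
  have := hac.integral_deriv_mul_eq_sub hac
  simp only [intervalIntegral.integral_same, mul_zero, sub_zero] at this
  rw [sq, ← this]
  apply intervalIntegral.integral_congr_ae
  filter_upwards [hi.ae_hasDerivAt_integral] with x hx hx'
  have hx2 := hx (uIoc_subset_uIcc hx') 0 left_mem_uIcc
  rw [hx2.deriv]; ring

lemma energy {T : ℝ} (A : ℝ → ℝ) (m : Fin d → ℝ) (p : Fin d → ℝ → ℝ)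
    (hp : ∀ a, IntervalIntegrable (p a) volume 0 T) (hp2 : ∀ a, IntervalIntegrable (fun s => p a s ^ 2) volume 0 T)
    (hAi : IntervalIntegrable A volume 0 T)
    (hA : ∀ t, 0 ≤ t → t ≤ T → A t = ∫ s in (0:ℝ)..t, (∑ a, m a * p a s - (∑ a, m a ^ 2) * A s))
    (t : ℝ) (ht : 0 ≤ t) (htT : t ≤ T) : A t ^ 2 ≤ ∫ s in (0:ℝ)..t, ∑ a, p a s ^ 2 := by
  have hsub : uIcc 0 t ⊆ uIcc 0 T := by
    rw [uIcc_of_le ht, uIcc_of_le (ht.trans htT)]; exact Icc_subset_Icc_right htT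
  set h := fun s => (∑ a, m a * p a s - (∑ a, m a ^ 2) * A s) with hh
  have hi : IntervalIntegrable h volume 0 t := by
    refine IntervalIntegrable.mono_set ?_ hsub
    have h1 : IntervalIntegrable (∑ a, fun s => m a * p a s) volume 0 T := IntervalIntegrable.sum _ fun a _ => (hp a).const_mul _
    have h2 := h1.sub (hAi.const_mul (∑ a, m a ^ 2))
    refine h2.congr (fun s _ => ?_)
    simp [hh]
  rw [hA t ht htT, sq_prim _ t ht hi]
  refine intervalIntegral.integral_mono_on ht ?_ ?_ ?_
  · refine IntervalIntegrable.const_mul ?_ _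
    exact hi.mul_continuousOn (intervalIntegral.continuousOn_primitive_interval' hi left_mem_uIcc)
  · have h1 : IntervalIntegrable (∑ a, fun s => p a s ^ 2) volume 0 T := IntervalIntegrable.sum _ fun a _ => (hp2 a)
    refine (h1.mono_set hsub).congr (fun s _ => ?_)
    simp
  · intro s hs
    rw [← hA s hs.1 (hs.2.trans htT)]
    simp only [hh, sub_mul, Finset.sum_mul, ← Finset.sum_sub_distrib, Finset.mul_sum]
    refine Finset.sum_le_sum fun a _ => ?_
    nlinarith [sq_nonneg (m a * A s - p a s), sq_nonneg (m a * A s)]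

lemma gron {T : ℝ} (N : ℝ → ℝ) (B C : ℝ) (hC : 0 ≤ C) (hi : IntervalIntegrable N volume 0 T)
    (hB : ∀ t, 0 ≤ t → t ≤ T → N t ≤ B)
    (hN : ∀ t, 0 ≤ t → t ≤ T → N t ≤ C * ∫ s in (0:ℝ)..t, N s) (t : ℝ) (ht : 0 ≤ t) (htT : t ≤ T) : N t ≤ 0 := by
  have key : ∀ k : ℕ, ∀ t, 0 ≤ t → t ≤ T → N t ≤ B * ((C * t) ^ k / k.factorial) := by
    intro k
    induction k with
    | zero => intro t ht htT; simpa using hB t ht htT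
    | succ k ih =>
      intro t ht htT
      refine (hN t ht htT).trans ?_
      have h1 : ∫ s in (0:ℝ)..t, N s ≤ ∫ s in (0:ℝ)..t, B * C ^ k / k.factorial * s ^ k := by
        refine intervalIntegral.integral_mono_on ht (hi.mono_set ?_) (Continuous.intervalIntegrable (by fun_prop) _ _) ?_
        · rw [uIcc_of_le ht, uIcc_of_le (ht.trans htT)]; exact Icc_subset_Icc_right htT
        · intro s hs
          refine (ih s hs.1 (hs.2.trans htT)).trans (le_of_eq ?_)
          rw [mul_pow]; ring
      refine (mul_le_mul_of_nonneg_left h1 hC).trans (le_of_eq ?_)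
      rw [intervalIntegral.integral_const_mul, integral_pow, Nat.factorial_succ]
      have : (k.factorial : ℝ) ≠ 0 := by positivity
      have : (k : ℝ) + 1 ≠ 0 := by positivity
      push_cast
      field_simp
      ring
  have h1 := (FloorSemiring.tendsto_pow_div_factorial_atTop (C * t)).const_mul B
  rw [mul_zero] at h1
  exact ge_of_tendsto' h1 fun k => key k t ht htT

end MKV

end

section
set_option linter.unusedVariables false
open scoped Topology ContDiff NNReal
namespace MKV
variable {d : ℕ}

/-- bounded weak solution on `[0,T]` -/
structure WS (T M : ℝ) (K : (Fin d → ℝ) → (Fin d → ℝ)) (σ : ℝ → (Fin d → ℝ) → ℝ) : Prop where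
  bm : ∀ t, 0 ≤ t → t ≤ T → BM M (σ t)
  weak : ∀ φ : (Fin d → ℝ) → ℝ, SP φ → ∀ t, 0 ≤ t → t ≤ T →
    (∫ x in cube d, σ t x * φ x) - (∫ x in cube d, σ 0 x * φ x)
      = ∫ s in (0:ℝ)..t, ∫ x in cube d, σ s x *
          ((∑ α, tconv (fun y => K y α) (σ s) x * pdv α φ x)
            + ∑ α, pdv α (pdv α φ) x)

lemma BM.mul {M N : ℝ} {f g : (Fin d → ℝ) → ℝ} (hf : BM M f) (hg : BM N g) : BM (M * N) fun x => f x * g x := by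
  refine ⟨fun n x => by simp only [hf.1 n x, hg.1 n x], hf.2.1.mul hg.2.1, fun x => ?_⟩
  rw [abs_mul]
  exact mul_le_mul (hf.2.2 x) (hg.2.2 x) (abs_nonneg _) ((abs_nonneg _).trans (hf.2.2 x))

lemma BM.add {M N : ℝ} {f g : (Fin d → ℝ) → ℝ} (hf : BM M f) (hg : BM N g) : BM (M + N) fun x => f x + g x := by
  refine ⟨fun n x => by simp only [hf.1 n x, hg.1 n x], hf.2.1.add hg.2.1, fun x => ?_⟩
  exact (abs_add_le _ _).trans (add_le_add (hf.2.2 x) (hg.2.2 x))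

lemma BM.sub {M N : ℝ} {f g : (Fin d → ℝ) → ℝ} (hf : BM M f) (hg : BM N g) : BM (M + N) fun x => f x - g x := by
  refine ⟨fun n x => by simp only [hf.1 n x, hg.1 n x], hf.2.1.sub hg.2.1, fun x => ?_⟩
  exact (abs_sub _ _).trans (add_le_add (hf.2.2 x) (hg.2.2 x))

lemma SP.bm {φ : (Fin d → ℝ) → ℝ} (h : SP φ) : ∃ C, BM C φ := by
  obtain ⟨C, hC⟩ := per_bdd h.1.continuous h.2
  exact ⟨C, h.2, h.1.continuous.aestronglyMeasurable, hC⟩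

lemma SP.mul {φ ψ : (Fin d → ℝ) → ℝ} (h : SP φ) (h' : SP ψ) : SP fun x => φ x * ψ x :=
  ⟨h.1.mul h'.1, fun n x => by simp only [h.2 n x, h'.2 n x]⟩

/-- nonlinear flux -/
def nl (K : (Fin d → ℝ) → (Fin d → ℝ)) (f : (Fin d → ℝ) → ℝ) (a : Fin d) (x : Fin d → ℝ) : ℝ :=
  tconv (fun y => K y a) f x * f x

/-- L1 norm of component -/
def kapL (K : (Fin d → ℝ) → (Fin d → ℝ)) (a : Fin d) : ℝ := ∫ y in cube d, |K y a|

lemma nl_bm {M : ℝ} {K : (Fin d → ℝ) → (Fin d → ℝ)} (hk : ∀ b, IntegrableOn (fun y => K y b) (cube d))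
    (hkp : Per K) {f : (Fin d → ℝ) → ℝ} (hf : BM M f) (a : Fin d) : BM (kapL K a * M * M) (nl K f a) :=
  (BM.tconv (hk a) (fun n x => by simp only [hkp n x]) hf).mul hf

lemma F_meas {T M : ℝ} {K : (Fin d → ℝ) → (Fin d → ℝ)} {σ : ℝ → (Fin d → ℝ) → ℝ} (h : WS T M K σ)
    {φ : (Fin d → ℝ) → ℝ} (hφ : SP φ) :
    AEStronglyMeasurable (fun t => ∫ x in cube d, σ t x * φ x) (volume.restrict (Icc 0 T)) := by
  refine ((meas_prim (fun s => ∫ x in cube d, σ s x *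
          ((∑ α, tconv (fun y => K y α) (σ s) x * pdv α φ x)
            + ∑ α, pdv α (pdv α φ) x)) T).add_const (∫ x in cube d, σ 0 x * φ x)).congr ?_
  refine (ae_restrict_iff' measurableSet_Icc).2 (Filter.Eventually.of_forall fun t ht => ?_)
  have := h.weak φ hφ t ht.1 ht.2
  simp only
  linarith

lemma C_meas {T M : ℝ} {K : (Fin d → ℝ) → (Fin d → ℝ)} {σ : ℝ → (Fin d → ℝ) → ℝ} (h : WS T M K σ)
    {φ : (Fin d → ℝ) → ℝ} (hφ : SP φ) (n : Fin d → ℤ) :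
    AEStronglyMeasurable (fun t => Cn n (fun x => σ t x * φ x)) (volume.restrict (Icc 0 T)) := by
  have := F_meas h (hφ.mul (cos_SP n))
  simpa only [Cn, mul_assoc] using this

lemma S_meas {T M : ℝ} {K : (Fin d → ℝ) → (Fin d → ℝ)} {σ : ℝ → (Fin d → ℝ) → ℝ} (h : WS T M K σ)
    {φ : (Fin d → ℝ) → ℝ} (hφ : SP φ) (n : Fin d → ℤ) :
    AEStronglyMeasurable (fun t => Sn n (fun x => σ t x * φ x)) (volume.restrict (Icc 0 T)) := by
  have := F_meas h (hφ.mul (sin_SP n))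
  simpa only [Sn, mul_assoc] using this

lemma hasSum_meas {ι : Type*} [Countable ι] {T : ℝ} {f : ι → ℝ → ℝ} {g : ℝ → ℝ}
    (hf : ∀ i, AEStronglyMeasurable (f i) (volume.restrict (Icc 0 T)))
    (hs : ∀ t, 0 ≤ t → t ≤ T → HasSum (fun i => f i t) (g t)) : AEStronglyMeasurable g (volume.restrict (Icc 0 T)) := by
  refine aestronglyMeasurable_of_tendsto_ae Filter.atTop (f := fun (s : Finset ι) t => ∑ i ∈ s, f i t) (fun s => ?_) ?_
  · exact Finset.aestronglyMeasurable_fun_sum _ fun i _ => hf i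
  · exact (ae_restrict_iff' measurableSet_Icc).2 (Filter.Eventually.of_forall fun t ht => hs t ht.1 ht.2)

lemma nl_meas {T M : ℝ} {K : (Fin d → ℝ) → (Fin d → ℝ)} (hk : ∀ b, IntegrableOn (fun y => K y b) (cube d))
    (hkp : Per K) {σ : ℝ → (Fin d → ℝ) → ℝ} (h : WS T M K σ)
    {φ : (Fin d → ℝ) → ℝ} (hφ : SP φ) (a : Fin d) :
    AEStronglyMeasurable (fun t => ∫ x in cube d, nl K (σ t) a x * φ x) (volume.restrict (Icc 0 T)) := by
  obtain ⟨C, hC⟩ := hφ.bm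
  have hka : Per fun y => K y a := fun n x => by simp only [hkp n x]
  have h1 : SP (fun _ : Fin d → ℝ => (1:ℝ)) := ⟨contDiff_const, fun _ _ => rfl⟩
  have hc := fun n => C_meas h h1 n
  have hs := fun n => S_meas h h1 n
  simp only [mul_one] at hc hs
  refine hasSum_meas (ι := Fin d → ℤ) (f := fun n t =>
    (Cn n (fun y => K y a) * Cn n (fun x => σ t x) - Sn n (fun y => K y a) * Sn n (fun x => σ t x)) * Cn n (fun x => σ t x * φ x)
    + (Cn n (fun y => K y a) * Sn n (fun x => σ t x) + Sn n (fun y => K y a) * Cn n (fun x => σ t x)) * Sn n (fun x => σ t x * φ x)) (fun n => ?_) (fun t ht htT => ?_)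
  · exact ((((hc n).const_mul _).sub ((hs n).const_mul _)).mul (C_meas h hφ n)).add
      ((((hs n).const_mul _).add ((hc n).const_mul _)).mul (S_meas h hφ n))
  · have hb := h.bm t ht htT
    have := parseval (BM.tconv (hk a) hka hb) (hb.mul hC)
    simp only [nl, mul_assoc]
    refine HasSum.congr_fun this fun n => ?_
    obtain ⟨e1, e2⟩ := coeff_tconv (hk a) hka hb n
    rw [e1, e2]

lemma ii_of_bdd {T B : ℝ} (hT : 0 ≤ T) {f : ℝ → ℝ} (hf : AEStronglyMeasurable f (volume.restrict (Icc 0 T)))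
    (hB : ∀ t, 0 ≤ t → t ≤ T → |f t| ≤ B) : IntervalIntegrable f volume 0 T := by
  rw [intervalIntegrable_iff_integrableOn_Icc_of_le hT]
  exact Integrable.of_bound hf B ((ae_restrict_iff' measurableSet_Icc).2 (Filter.Eventually.of_forall fun t ht => hB t ht.1 ht.2))

lemma vol_cube : (volume (cube d)).toReal = 1 := by
  simp [cube, Real.volume_Icc_pi]

lemma BM.int_le {M : ℝ} {f : (Fin d → ℝ) → ℝ} (h : BM M f) : |∫ x in cube d, f x| ≤ M := by
  have := norm_setIntegral_le_of_norm_le_const (μ := volume) (s := cube d) (f := f) (C := M) isCompact_cube.measure_lt_top (fun x _ => h.2.2 x)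
  rw [Measure.real, vol_cube, mul_one] at this
  exact this

lemma F_ii {T M : ℝ} (hT : 0 ≤ T) {K : (Fin d → ℝ) → (Fin d → ℝ)} {σ : ℝ → (Fin d → ℝ) → ℝ} (h : WS T M K σ)
    {φ : (Fin d → ℝ) → ℝ} (hφ : SP φ) : IntervalIntegrable (fun t => ∫ x in cube d, σ t x * φ x) volume 0 T := by
  obtain ⟨C, hC⟩ := hφ.bm
  exact ii_of_bdd hT (F_meas h hφ) fun t ht htT => ((h.bm t ht htT).mul hC).int_le

lemma nl_ii {T M : ℝ} (hT : 0 ≤ T) {K : (Fin d → ℝ) → (Fin d → ℝ)} (hk : ∀ b, IntegrableOn (fun y => K y b) (cube d))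
    (hkp : Per K) {σ : ℝ → (Fin d → ℝ) → ℝ} (h : WS T M K σ)
    {φ : (Fin d → ℝ) → ℝ} (hφ : SP φ) (a : Fin d) : IntervalIntegrable (fun t => ∫ x in cube d, nl K (σ t) a x * φ x) volume 0 T := by
  obtain ⟨C, hC⟩ := hφ.bm
  exact ii_of_bdd hT (nl_meas hk hkp h hφ a) fun t ht htT => ((nl_bm hk hkp (h.bm t ht htT) a).mul hC).int_le

lemma weak2 {T M : ℝ} {K : (Fin d → ℝ) → (Fin d → ℝ)} (hk : ∀ b, IntegrableOn (fun y => K y b) (cube d))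
    (hkp : Per K) {σ : ℝ → (Fin d → ℝ) → ℝ} (h : WS T M K σ)
    {φ : (Fin d → ℝ) → ℝ} (hφ : SP φ) (t : ℝ) (ht : 0 ≤ t) (htT : t ≤ T) :
    (∫ x in cube d, σ t x * φ x) - (∫ x in cube d, σ 0 x * φ x)
      = ∫ s in (0:ℝ)..t, ∑ a, ((∫ x in cube d, nl K (σ s) a x * pdv a φ x) + ∫ x in cube d, σ s x * pdv a (pdv a φ) x) := by
  rw [h.weak φ hφ t ht htT]
  refine intervalIntegral.integral_congr fun s hs => ?_
  rw [uIcc_of_le ht] at hs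
  have hb := h.bm s hs.1 (hs.2.trans htT)
  have hi1 : ∀ a, IntegrableOn (fun x => nl K (σ s) a x * pdv a φ x) (cube d) := fun a => by
    obtain ⟨C, hC⟩ := (hφ.dv a).bm
    exact ((nl_bm hk hkp hb a).mul hC).integrable
  have hi2 : ∀ a, IntegrableOn (fun x => σ s x * pdv a (pdv a φ) x) (cube d) := fun a => by
    obtain ⟨C, hC⟩ := ((hφ.dv a).dv a).bm
    exact (hb.mul hC).integrable
  have hi3 : ∀ a, ((∫ x in cube d, nl K (σ s) a x * pdv a φ x) + ∫ x in cube d, σ s x * pdv a (pdv a φ) x)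
    = ∫ x in cube d, (nl K (σ s) a x * pdv a φ x + σ s x * pdv a (pdv a φ) x) := fun a => (integral_add (hi1 a) (hi2 a)).symm
  simp only [hi3]
  have hi4 : ∀ a, IntegrableOn (fun x => nl K (σ s) a x * pdv a φ x + σ s x * pdv a (pdv a φ) x) (cube d) :=
    fun a => (hi1 a).add (hi2 a)
  rw [← integral_finsetSum _ fun a _ => hi4 a]
  congr 1; ext x
  rw [Finset.sum_add_distrib, mul_add, Finset.mul_sum, Finset.mul_sum]
  congr 1
  refine Finset.sum_congr rfl fun a _ => ?_
  unfold nl; ring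

end MKV

end

section
set_option linter.unusedVariables false
open scoped Topology ContDiff NNReal
namespace MKV
variable {d : ℕ}
attribute [local instance] instMeasureSpaceUnitAddCircle
attribute [local instance] instIsAddHaarMeasureUnitAddCircleVolume
attribute [local instance] instIsProbabilityMeasureUnitAddCircleVolume

lemma pdv_cmul {f : (Fin d → ℝ) → ℝ} (hf : SP f) (c : ℝ) (a : Fin d) : pdv a (fun x => c * f x) = fun x => c * pdv a f x := by
  ext x
  unfold pdv
  rw [fderiv_const_mul (hf.1.differentiable (by simp) x)]
  rfl

lemma pdv_cos2 (n : Fin d → ℤ) (a : Fin d) : pdv a (pdv a (fun x => Real.cos (ph n x))) = fun x => -(2 * π * n a) ^ 2 * Real.cos (ph n x) := by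
  rw [pdv_cos, pdv_cmul (sin_SP n), pdv_sin]
  ext x; ring

lemma pdv_sin2 (n : Fin d → ℤ) (a : Fin d) : pdv a (pdv a (fun x => Real.sin (ph n x))) = fun x => -(2 * π * n a) ^ 2 * Real.sin (ph n x) := by
  rw [pdv_sin, pdv_cmul (cos_SP n), pdv_cos]
  ext x; ring

lemma Cn_sub {M N : ℝ} {f g : (Fin d → ℝ) → ℝ} (hf : BM M f) (hg : BM N g) (n : Fin d → ℤ) :
    Cn n (fun x => f x - g x) = Cn n f - Cn n g := by
  obtain ⟨C, hC⟩ := (cos_SP n).bm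
  unfold Cn
  rw [← integral_sub (hf.mul hC).integrable (hg.mul hC).integrable]
  congr 1; ext x; ring

lemma Sn_sub {M N : ℝ} {f g : (Fin d → ℝ) → ℝ} (hf : BM M f) (hg : BM N g) (n : Fin d → ℤ) :
    Sn n (fun x => f x - g x) = Sn n f - Sn n g := by
  obtain ⟨C, hC⟩ := (sin_SP n).bm
  unfold Sn
  rw [← integral_sub (hf.mul hC).integrable (hg.mul hC).integrable]
  congr 1; ext x; ring

lemma Cn_le {M : ℝ} {f : (Fin d → ℝ) → ℝ} (hf : BM M f) (n : Fin d → ℤ) : |Cn n f| ≤ M := by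
  obtain ⟨C, hC⟩ := (cos_SP n).bm
  have : BM 1 fun x => Real.cos (ph n x) := ⟨hC.1, hC.2.1, fun x => Real.abs_cos_le_one _⟩
  simpa [Cn] using (hf.mul this).int_le

lemma Sn_le {M : ℝ} {f : (Fin d → ℝ) → ℝ} (hf : BM M f) (n : Fin d → ℤ) : |Sn n f| ≤ M := by
  obtain ⟨C, hC⟩ := (sin_SP n).bm
  have : BM 1 fun x => Real.sin (ph n x) := ⟨hC.1, hC.2.1, fun x => Real.abs_sin_le_one _⟩
  simpa [Sn] using (hf.mul this).int_le

lemma ode_cos {T M : ℝ} {K : (Fin d → ℝ) → (Fin d → ℝ)} (hk : ∀ b, IntegrableOn (fun y => K y b) (cube d))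
    (hkp : Per K) {σ : ℝ → (Fin d → ℝ) → ℝ} (h : WS T M K σ) (n : Fin d → ℤ) (t : ℝ) (ht : 0 ≤ t) (htT : t ≤ T) :
    Cn n (σ t) - Cn n (σ 0) = ∫ s in (0:ℝ)..t, (∑ a, -(2 * π * n a) * Sn n (nl K (σ s) a) - (∑ a, (-(2 * π * n a)) ^ 2) * Cn n (σ s)) := by
  unfold Cn Sn
  rw [weak2 hk hkp h (cos_SP n) t ht htT]
  congr 1; ext s
  rw [Finset.sum_mul, ← Finset.sum_sub_distrib]
  refine Finset.sum_congr rfl fun a _ => ?_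
  rw [pdv_cos2, pdv_cos, ← integral_const_mul, ← integral_const_mul, sub_eq_add_neg, ← integral_neg]
  congr 2 <;> ext x <;> ring

lemma ode_sin {T M : ℝ} {K : (Fin d → ℝ) → (Fin d → ℝ)} (hk : ∀ b, IntegrableOn (fun y => K y b) (cube d))
    (hkp : Per K) {σ : ℝ → (Fin d → ℝ) → ℝ} (h : WS T M K σ) (n : Fin d → ℤ) (t : ℝ) (ht : 0 ≤ t) (htT : t ≤ T) :
    Sn n (σ t) - Sn n (σ 0) = ∫ s in (0:ℝ)..t, (∑ a, (2 * π * n a) * Cn n (nl K (σ s) a) - (∑ a, (2 * π * n a) ^ 2) * Sn n (σ s)) := by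
  unfold Cn Sn
  rw [weak2 hk hkp h (sin_SP n) t ht htT]
  congr 1; ext s
  rw [Finset.sum_mul, ← Finset.sum_sub_distrib]
  refine Finset.sum_congr rfl fun a _ => ?_
  rw [pdv_sin2, pdv_sin, ← integral_const_mul, ← integral_const_mul, sub_eq_add_neg, ← integral_neg]
  congr 2 <;> ext x <;> ring

lemma shift_int {k : (Fin d → ℝ) → ℝ} (hk : IntegrableOn k (cube d)) (hkp : Per k) (x : Fin d → ℝ) :
    IntegrableOn (fun y => k (x - y)) (cube d) := by
  refine (rep_mp.integrable_comp_emb rep_me).1 ?_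
  have h1 : Integrable (fun z : TT d => k (rep z)) volume := (rep_mp.integrable_comp_emb rep_me).2 hk
  refine (h1.comp_sub_left (prj x)).congr (Filter.Eventually.of_forall fun z => ?_)
  apply per_eq hkp
  rw [prj_rep, prj_sub, prj_rep]

lemma tconv_sub {M N : ℝ} {k f g : (Fin d → ℝ) → ℝ} (hk : IntegrableOn k (cube d)) (hkp : Per k) (hf : BM M f) (hg : BM N g) (x : Fin d → ℝ) :
    tconv k (fun x => f x - g x) x = tconv k f x - tconv k g x := by
  unfold tconv
  have hi : ∀ {M : ℝ} {f : (Fin d → ℝ) → ℝ}, BM M f → IntegrableOn (fun y => k (x - y) * f y) (cube d) := fun {M f} hf =>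
    Integrable.mul_bdd (c := M) (shift_int hk hkp x) hf.2.1 (Filter.Eventually.of_forall hf.2.2)
  rw [← integral_sub (hi hf) (hi hg)]
  congr 1; ext y; ring

lemma D_L2 {M : ℝ} (hM : 0 ≤ M) {K : (Fin d → ℝ) → (Fin d → ℝ)} (hk : ∀ b, IntegrableOn (fun y => K y b) (cube d))
    (hkp : Per K) {f g : (Fin d → ℝ) → ℝ} (hf : BM M f) (hg : BM M g) (a : Fin d) :
    ∫ x in cube d, (nl K f a x - nl K g a x) * (nl K f a x - nl K g a x) ≤ 6 * kapL K a ^ 2 * M ^ 2 * ∫ x in cube d, (f x - g x) * (f x - g x) := by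
  have hka : Per fun y => K y a := fun n x => by simp only [hkp n x]
  have hδ := hf.sub hg
  have hc := BM.tconv (hk a) hka hδ
  have h1 := tconv_L2 (hk a) hka hδ
  have hD := (nl_bm hk hkp hf a).sub (nl_bm hk hkp hg a)
  have hcf := BM.tconv (hk a) hka hf
  have h2 : ∫ x in cube d, (nl K f a x - nl K g a x) * (nl K f a x - nl K g a x) ≤
      ∫ x in cube d, ((2 * kapL K a ^ 2 * M ^ 2) * ((f x - g x) * (f x - g x))
        + (2 * M ^ 2) * (tconv (fun y => K y a) (fun x => f x - g x) x * tconv (fun y => K y a) (fun x => f x - g x) x)) := by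
    refine integral_mono (hD.mul hD).integrable (((hδ.mul hδ).integrable.const_mul _).add ((hc.mul hc).integrable.const_mul _)) fun x => ?_
    simp only [nl]
    have e := tconv_sub (hk a) hka hf hg x
    rw [e]
    set P := tconv (fun y => K y a) f x
    set Q := tconv (fun y => K y a) g x
    have hP : P ^ 2 ≤ (kapL K a * M) ^ 2 := sq_le_sq' (abs_le.1 (hcf.2.2 x)).1 (abs_le.1 (hcf.2.2 x)).2
    have hG : g x ^ 2 ≤ M ^ 2 := sq_le_sq' (abs_le.1 (hg.2.2 x)).1 (abs_le.1 (hg.2.2 x)).2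
    have i1 := mul_le_mul_of_nonneg_right hP (sq_nonneg (f x - g x))
    have i2 := mul_le_mul_of_nonneg_right hG (sq_nonneg (P - Q))
    nlinarith [sq_nonneg (P * (f x - g x) - (P - Q) * g x)]
  refine h2.trans ?_
  rw [integral_add ((hδ.mul hδ).integrable.const_mul _) ((hc.mul hc).integrable.const_mul _), integral_const_mul, integral_const_mul]
  have h3 := mul_le_mul_of_nonneg_left h1 (show 0 ≤ 2 * M ^ 2 by positivity)
  change _ ≤ 2 * M ^ 2 * (2 * kapL K a ^ 2 * _) at h3
  linarith

lemma sub_ode {T t : ℝ} (ht : 0 ≤ t) (htT : t ≤ T) (m : Fin d → ℝ) (c : ℝ) (p q : Fin d → ℝ → ℝ) (A B : ℝ → ℝ)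
    (hp : ∀ a, IntervalIntegrable (p a) volume 0 T) (hq : ∀ a, IntervalIntegrable (q a) volume 0 T)
    (hA : IntervalIntegrable A volume 0 T) (hB : IntervalIntegrable B volume 0 T) :
    (∫ s in (0:ℝ)..t, (∑ a, m a * p a s - c * A s)) - (∫ s in (0:ℝ)..t, (∑ a, m a * q a s - c * B s))
    = ∫ s in (0:ℝ)..t, (∑ a, m a * (p a s - q a s) - c * (A s - B s)) := by
  have hsub : uIcc 0 t ⊆ uIcc 0 T := by
    rw [uIcc_of_le ht, uIcc_of_le (ht.trans htT)]; exact Icc_subset_Icc_right htT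
  have key : ∀ (p : Fin d → ℝ → ℝ) (A : ℝ → ℝ), (∀ a, IntervalIntegrable (p a) volume 0 T) → IntervalIntegrable A volume 0 T →
      IntervalIntegrable (fun s => ∑ a, m a * p a s - c * A s) volume 0 t := by
    intro p A hp hA
    refine IntervalIntegrable.mono_set ?_ hsub
    have h1 : IntervalIntegrable (∑ a, fun s => m a * p a s) volume 0 T := IntervalIntegrable.sum _ fun a _ => (hp a).const_mul _
    have h2 := h1.sub (hA.const_mul c)
    refine h2.congr (fun s _ => ?_)
    simp
  rw [← intervalIntegral.integral_sub (key p A hp hA) (key q B hq hB)]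
  congr 1; ext s
  simp only [mul_sub, Finset.sum_sub_distrib]
  ring

theorem uniq {T M : ℝ} (hT : 0 ≤ T) (hM : 0 ≤ M) {K : (Fin d → ℝ) → (Fin d → ℝ)} (hk : ∀ b, IntegrableOn (fun y => K y b) (cube d))
    (hkp : Per K) {σ ρ : ℝ → (Fin d → ℝ) → ℝ} (hσ : WS T M K σ) (hρ : WS T M K ρ) (h0 : σ 0 = ρ 0)
    (t : ℝ) (ht : 0 ≤ t) (htT : t ≤ T) : ∀ᵐ x ∂(volume.restrict (cube d)), σ t x = ρ t x := by
  have hδ : ∀ t, 0 ≤ t → t ≤ T → BM (M + M) (fun x => σ t x - ρ t x) := fun t ht htT => (hσ.bm t ht htT).sub (hρ.bm t ht htT)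
  set N : ℝ → ℝ := fun t => ∫ x in cube d, (σ t x - ρ t x) * (σ t x - ρ t x) with hN
  have h1 : SP (fun _ : Fin d → ℝ => (1:ℝ)) := ⟨contDiff_const, fun _ _ => rfl⟩
  have hsum := fun t ht htT => parseval (hδ t ht htT) (hδ t ht htT)
  have eC : ∀ n t, 0 ≤ t → t ≤ T → Cn n (fun x => σ t x - ρ t x) = Cn n (σ t) - Cn n (ρ t) :=
    fun n t ht htT => Cn_sub (hσ.bm t ht htT) (hρ.bm t ht htT) n
  have eS : ∀ n t, 0 ≤ t → t ≤ T → Sn n (fun x => σ t x - ρ t x) = Sn n (σ t) - Sn n (ρ t) :=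
    fun n t ht htT => Sn_sub (hσ.bm t ht htT) (hρ.bm t ht htT) n
  have iC : ∀ n, IntervalIntegrable (fun t => Cn n (σ t) - Cn n (ρ t)) volume 0 T := fun n =>
    (F_ii hT hσ (cos_SP n)).sub (F_ii hT hρ (cos_SP n))
  have iS : ∀ n, IntervalIntegrable (fun t => Sn n (σ t) - Sn n (ρ t)) volume 0 T := fun n =>
    (F_ii hT hσ (sin_SP n)).sub (F_ii hT hρ (sin_SP n))
  have iDC : ∀ n a, IntervalIntegrable (fun t => Cn n (nl K (σ t) a) - Cn n (nl K (ρ t) a)) volume 0 T := fun n a =>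
    (nl_ii hT hk hkp hσ (cos_SP n) a).sub (nl_ii hT hk hkp hρ (cos_SP n) a)
  have iDS : ∀ n a, IntervalIntegrable (fun t => Sn n (nl K (σ t) a) - Sn n (nl K (ρ t) a)) volume 0 T := fun n a =>
    (nl_ii hT hk hkp hσ (sin_SP n) a).sub (nl_ii hT hk hkp hρ (sin_SP n) a)
  have toM : ∀ {f : ℝ → ℝ}, IntervalIntegrable f volume 0 T → AEStronglyMeasurable f (volume.restrict (Icc 0 T)) := fun {f} hf =>
    ((intervalIntegrable_iff_integrableOn_Icc_of_le hT).1 hf).1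
  have bC : ∀ n a t, 0 ≤ t → t ≤ T → |Cn n (nl K (σ t) a) - Cn n (nl K (ρ t) a)| ≤ kapL K a * M * M + kapL K a * M * M := fun n a t ht htT =>
    (abs_sub _ _).trans (add_le_add (Cn_le (nl_bm hk hkp (hσ.bm t ht htT) a) n) (Cn_le (nl_bm hk hkp (hρ.bm t ht htT) a) n))
  have bS : ∀ n a t, 0 ≤ t → t ≤ T → |Sn n (nl K (σ t) a) - Sn n (nl K (ρ t) a)| ≤ kapL K a * M * M + kapL K a * M * M := fun n a t ht htT =>
    (abs_sub _ _).trans (add_le_add (Sn_le (nl_bm hk hkp (hσ.bm t ht htT) a) n) (Sn_le (nl_bm hk hkp (hρ.bm t ht htT) a) n))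
  have iDC2 : ∀ n a, IntervalIntegrable (fun t => (Cn n (nl K (σ t) a) - Cn n (nl K (ρ t) a)) ^ 2) volume 0 T := fun n a =>
    ii_of_bdd hT ((toM (iDC n a)).pow 2) (B := (kapL K a * M * M + kapL K a * M * M) ^ 2) fun t ht htT => by
      rw [abs_pow]; exact pow_le_pow_left₀ (abs_nonneg _) (bC n a t ht htT) 2
  have iDS2 : ∀ n a, IntervalIntegrable (fun t => (Sn n (nl K (σ t) a) - Sn n (nl K (ρ t) a)) ^ 2) volume 0 T := fun n a =>
    ii_of_bdd hT ((toM (iDS n a)).pow 2) (B := (kapL K a * M * M + kapL K a * M * M) ^ 2) fun t ht htT => by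
      rw [abs_pow]; exact pow_le_pow_left₀ (abs_nonneg _) (bS n a t ht htT) 2
  have EC : ∀ n t, 0 ≤ t → t ≤ T → (Cn n (σ t) - Cn n (ρ t)) ^ 2 ≤ ∫ s in (0:ℝ)..t, ∑ a, (Sn n (nl K (σ s) a) - Sn n (nl K (ρ s) a)) ^ 2 := by
    intro n
    refine energy (fun t => Cn n (σ t) - Cn n (ρ t)) (fun a => -(2 * π * n a)) (fun a s => Sn n (nl K (σ s) a) - Sn n (nl K (ρ s) a))
      (iDS n) (iDS2 n) (iC n) fun t ht htT => ?_
    have e1 := ode_cos hk hkp hσ n t ht htT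
    have e2 := ode_cos hk hkp hρ n t ht htT
    have e3 := sub_ode ht htT (fun a => -(2 * π * n a)) (∑ a, (-(2 * π * n a)) ^ 2) (fun a s => Sn n (nl K (σ s) a)) (fun a s => Sn n (nl K (ρ s) a))
      (fun s => Cn n (σ s)) (fun s => Cn n (ρ s)) (nl_ii hT hk hkp hσ (sin_SP n)) (nl_ii hT hk hkp hρ (sin_SP n)) (F_ii hT hσ (cos_SP n)) (F_ii hT hρ (cos_SP n))
    rw [← e1, ← e2, h0] at e3
    rw [← e3]; ring
  have ES : ∀ n t, 0 ≤ t → t ≤ T → (Sn n (σ t) - Sn n (ρ t)) ^ 2 ≤ ∫ s in (0:ℝ)..t, ∑ a, (Cn n (nl K (σ s) a) - Cn n (nl K (ρ s) a)) ^ 2 := by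
    intro n
    refine energy (fun t => Sn n (σ t) - Sn n (ρ t)) (fun a => (2 * π * n a)) (fun a s => Cn n (nl K (σ s) a) - Cn n (nl K (ρ s) a))
      (iDC n) (iDC2 n) (iS n) fun t ht htT => ?_
    have e1 := ode_sin hk hkp hσ n t ht htT
    have e2 := ode_sin hk hkp hρ n t ht htT
    have e3 := sub_ode ht htT (fun a => (2 * π * n a)) (∑ a, (2 * π * n a) ^ 2) (fun a s => Cn n (nl K (σ s) a)) (fun a s => Cn n (nl K (ρ s) a))
      (fun s => Sn n (σ s)) (fun s => Sn n (ρ s)) (nl_ii hT hk hkp hσ (cos_SP n)) (nl_ii hT hk hkp hρ (cos_SP n)) (F_ii hT hσ (sin_SP n)) (F_ii hT hρ (sin_SP n))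
    rw [← e1, ← e2, h0] at e3
    rw [← e3]; ring
  have hNm : AEStronglyMeasurable N (volume.restrict (Icc 0 T)) := by
    refine hasSum_meas (ι := Fin d → ℤ) (f := fun n t => (Cn n (σ t) - Cn n (ρ t)) * (Cn n (σ t) - Cn n (ρ t)) + (Sn n (σ t) - Sn n (ρ t)) * (Sn n (σ t) - Sn n (ρ t))) (fun n => ?_) fun t ht htT => ?_
    · exact ((toM (iC n)).mul (toM (iC n))).add ((toM (iS n)).mul (toM (iS n)))
    · refine HasSum.congr_fun (hsum t ht htT) fun n => ?_
      rw [eC n t ht htT, eS n t ht htT]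
  have hNb : ∀ t, 0 ≤ t → t ≤ T → |N t| ≤ (M + M) * (M + M) := fun t ht htT => ((hδ t ht htT).mul (hδ t ht htT)).int_le
  have hNi : IntervalIntegrable N volume 0 T := ii_of_bdd hT hNm hNb
  set C := ∑ a, 6 * kapL K a ^ 2 * M ^ 2 with hC
  have hC0 : 0 ≤ C := Finset.sum_nonneg fun a _ => by positivity
  have main : ∀ t, 0 ≤ t → t ≤ T → N t ≤ C * ∫ s in (0:ℝ)..t, N s := by
    intro t ht htT
    have hsub : uIcc 0 t ⊆ uIcc 0 T := by
      rw [uIcc_of_le ht, uIcc_of_le (ht.trans htT)]; exact Icc_subset_Icc_right htT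
    refine hasSum_le_of_sum_le (hsum t ht htT) fun F => ?_
    have iS' : ∀ n, IntervalIntegrable (fun s => ∑ a, (Sn n (nl K (σ s) a) - Sn n (nl K (ρ s) a)) ^ 2) volume 0 t := fun n => by
      have : IntervalIntegrable (∑ a, fun s => (Sn n (nl K (σ s) a) - Sn n (nl K (ρ s) a)) ^ 2) volume 0 t := IntervalIntegrable.sum _ fun a _ => (iDS2 n a).mono_set hsub
      exact this.congr fun s _ => by simp
    have iC' : ∀ n, IntervalIntegrable (fun s => ∑ a, (Cn n (nl K (σ s) a) - Cn n (nl K (ρ s) a)) ^ 2) volume 0 t := fun n => by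
      have : IntervalIntegrable (∑ a, fun s => (Cn n (nl K (σ s) a) - Cn n (nl K (ρ s) a)) ^ 2) volume 0 t := IntervalIntegrable.sum _ fun a _ => (iDC2 n a).mono_set hsub
      exact this.congr fun s _ => by simp
    have s1 : ∑ n ∈ F, (Cn n (fun x => σ t x - ρ t x) * Cn n (fun x => σ t x - ρ t x) + Sn n (fun x => σ t x - ρ t x) * Sn n (fun x => σ t x - ρ t x))
        ≤ ∑ n ∈ F, ∫ s in (0:ℝ)..t, ((∑ a, (Sn n (nl K (σ s) a) - Sn n (nl K (ρ s) a)) ^ 2) + ∑ a, (Cn n (nl K (σ s) a) - Cn n (nl K (ρ s) a)) ^ 2) := by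
      refine Finset.sum_le_sum fun n _ => ?_
      rw [eC n t ht htT, eS n t ht htT, intervalIntegral.integral_add (iS' n) (iC' n)]
      have := EC n t ht htT
      have := ES n t ht htT
      nlinarith
    refine s1.trans ?_
    rw [← intervalIntegral.integral_finsetSum fun n _ => (iS' n).add (iC' n), ← intervalIntegral.integral_const_mul]
    refine intervalIntegral.integral_mono_on ht ?_ ((hNi.mono_set hsub).const_mul C) fun s hs => ?_
    · have : IntervalIntegrable (∑ n ∈ F, fun s => ((∑ a, (Sn n (nl K (σ s) a) - Sn n (nl K (ρ s) a)) ^ 2) + ∑ a, (Cn n (nl K (σ s) a) - Cn n (nl K (ρ s) a)) ^ 2)) volume 0 t :=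
        IntervalIntegrable.sum _ fun n _ => (iS' n).add (iC' n)
      exact this.congr fun s _ => by simp
    · have hs1 := hs.1
      have hs2 := hs.2.trans htT
      simp only [← Finset.sum_add_distrib]
      rw [Finset.sum_comm, hC, Finset.sum_mul]
      refine Finset.sum_le_sum fun a _ => ?_
      refine le_trans ?_ (D_L2 hM hk hkp (hσ.bm s hs1 hs2) (hρ.bm s hs1 hs2) a)
      have b1 := nl_bm hk hkp (hσ.bm s hs1 hs2) a
      have b2 := nl_bm hk hkp (hρ.bm s hs1 hs2) a
      have hp := parseval (b1.sub b2) (b1.sub b2)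
      refine le_trans (le_of_eq ?_) (sum_le_hasSum F (fun n _ => ?_) hp)
      · refine Finset.sum_congr rfl fun n _ => ?_
        rw [Cn_sub b1 b2, Sn_sub b1 b2]; ring
      · nlinarith [sq_nonneg (Cn n (fun x => nl K (σ s) a x - nl K (ρ s) a x)), sq_nonneg (Sn n (fun x => nl K (σ s) a x - nl K (ρ s) a x))]
  have hz := gron N _ C hC0 hNi (fun t ht htT => (abs_le.1 (hNb t ht htT)).2) main t ht htT
  have hz0 : N t = 0 := le_antisymm hz (integral_nonneg fun x => mul_self_nonneg _)
  have := (integral_eq_zero_iff_of_nonneg (fun x => mul_self_nonneg _) ((hδ t ht htT).mul (hδ t ht htT)).integrable).1 hz0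
  filter_upwards [this] with x hx
  have := mul_self_eq_zero.1 hx
  linarith

end MKV

end

section
set_option linter.unusedVariables false
open scoped Topology ContDiff NNReal
namespace MKV
variable {d : ℕ}

lemma cube_closure : cube d ⊆ closure (interior (cube d)) := by
  have h : (interior (cube d)).Nonempty := by
    refine ⟨fun _ => 1/2, ?_⟩
    rw [cube, ← Set.pi_univ_Icc, interior_pi_set Set.finite_univ]
    intro i _
    simp only [Pi.zero_apply, Pi.one_apply, interior_Icc]
    constructor <;> norm_num
  have hc : Convex ℝ (cube d) := convex_Icc 0 1
  rw [hc.closure_interior_eq_closure_of_nonempty_interior h]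
  exact subset_closure

/-- Everything we need from the solution on the time interval `[0,T]`. -/
structure Sol (T lam : ℝ) (K : (Fin d → ℝ) → (Fin d → ℝ)) (f : (Fin d → ℝ) → ℝ) (u : X d) : Prop where
  init : ∀ x, u (0, x) = f x
  per : ∀ t, Per fun x => u (t, x)
  bd : ∀ t, 0 ≤ t → t ≤ T → ∀ x, 1 / lam ≤ u (t, x) ∧ u (t, x) ≤ lam
  smooth : ContDiffOn ℝ ∞ (fun p : Pt d => u p) (Icc 0 T ×ˢ univ)
  weak : ∀ φ : (Fin d → ℝ) → ℝ, SP φ → ∀ t, 0 ≤ t → t ≤ T →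
    (∫ x in cube d, u (t, x) * φ x) - (∫ x in cube d, u (0, x) * φ x)
      = ∫ s in (0:ℝ)..t, ∫ x in cube d, u (s, x) *
          ((∑ α, tconv (fun y => K y α) (fun x => u (s, x)) x * pdv α φ x)
            + ∑ α, pdv α (pdv α φ) x)

lemma exists_sol (K : (Fin d → ℝ) → (Fin d → ℝ)) (hk : ∀ b, IntegrableOn (fun y => K y b) (cube d))
    (hkp : Per K) (hdiv : DistDivFree K) (lam : ℝ) (hl : 1 < lam) (T : ℝ) (hT : 0 < T)
    (f : (Fin d → ℝ) → ℝ) (hf : SP f) (hb : ∀ x, 1 / lam ≤ f x ∧ f x ≤ lam) :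
    ∃ u : X d, Sol T lam K f u := by
  obtain ⟨u, hu, hp, hbd, he⟩ := solve3 K hk hdiv lam hl T hT.le f hf hb
  have h0 : ∀ x, u (0, x) = f x := fun x => by
    have := he 0 le_rfl hT.le x
    simpa using this
  have hR : Rel T u (Lap u - ∑ b, (Kker _ (hk b)).op u * D b u) := by
    rw [Rel_iff]
    intro t ht htT x
    rw [h0]
    exact he t ht htT x
  refine ⟨u, h0, tau_per hp, hbd, ?_, weak_form K hk hkp hdiv hu hp hR⟩
  exact contDiffOn_infty.2 fun n => R.contDiffOn hT (R_all hu hk hR n)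

lemma Sol.cont (u : X d) (t : ℝ) : Continuous fun x : Fin d → ℝ => u (t, x) :=
  u.continuous.comp (by fun_prop)

lemma Sol.ws {T lam : ℝ} {K : (Fin d → ℝ) → (Fin d → ℝ)} {f : (Fin d → ℝ) → ℝ} {u : X d} (h : Sol T lam K f u)
    (hl : 1 < lam) {T' M : ℝ} (hT' : T' ≤ T) (hM : lam ≤ M) : WS T' M K (fun t x => u (t, x)) where
  bm t ht htT := ⟨h.per t, (Sol.cont u t).aestronglyMeasurable, fun x => by
    obtain ⟨h1, h2⟩ := h.bd t ht (htT.trans hT') x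
    have : 0 < 1 / lam := by positivity
    rw [abs_of_nonneg (by linarith)]; linarith⟩
  weak φ hφ t ht htT := h.weak φ hφ t ht (htT.trans hT')

lemma Sol.agree {T S lam : ℝ} {K : (Fin d → ℝ) → (Fin d → ℝ)} (hk : ∀ b, IntegrableOn (fun y => K y b) (cube d))
    (hkp : Per K) {f : (Fin d → ℝ) → ℝ} {u v : X d} (hl : 1 < lam)
    (hu : Sol T lam K f u) (hv : Sol S lam K f v) (t : ℝ) (ht : 0 ≤ t) (h1 : t ≤ T) (h2 : t ≤ S) (x : Fin d → ℝ) :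
    u (t, x) = v (t, x) := by
  have h := uniq ht (by linarith : 0 ≤ lam) hk hkp (hu.ws hl h1 le_rfl) (hv.ws hl h2 le_rfl)
    (by ext x; simp only [hu.init, hv.init]) t ht le_rfl
  have he := Measure.eqOn_of_ae_eq h (Sol.cont u t).continuousOn (Sol.cont v t).continuousOn cube_closure
  obtain ⟨k, hx⟩ := exists_cube x
  have a := hu.per t k x
  have b := hv.per t k x
  have c := he hx
  simp only at a b c
  rw [← a, ← b, c]

theorem main (K : (Fin d → ℝ) → (Fin d → ℝ)) (hK_L1 : IntegrableOn K (cube d)) (hkp : Per K)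
    (hdiv : DistDivFree K) (lam : ℝ) (hl : 1 < lam) 
    (f : (Fin d → ℝ) → ℝ) (hf : SP f) (hb : ∀ x, 1 / lam ≤ f x ∧ f x ≤ lam) :
    ∃ ρ : ℝ → (Fin d → ℝ) → ℝ,
      ρ 0 = f ∧
      WeakMKV K ρ ∧
      ContDiffOn ℝ (⊤ : ℕ∞) (fun p : ℝ × (Fin d → ℝ) => ρ p.1 p.2) (Set.Ici 0 ×ˢ Set.univ) ∧
      (∀ t, 0 ≤ t → Per (ρ t)) ∧
      (∀ t, 0 ≤ t → ∀ x, 1 / lam ≤ ρ t x ∧ ρ t x ≤ lam) ∧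
      (∀ σ : ℝ → (Fin d → ℝ) → ℝ, σ 0 = f → WeakMKV K σ →
        (∀ t, 0 ≤ t → Per (σ t)) →
        (∀ t, 0 ≤ t → AEStronglyMeasurable (σ t) (volume.restrict (cube d))) →
        (∃ M, ∀ t, 0 ≤ t → ∀ x, |σ t x| ≤ M) →
        ∀ t, 0 ≤ t → ∀ᵐ x ∂(volume.restrict (cube d)), σ t x = ρ t x) := by
  have hk : ∀ b, IntegrableOn (fun y => K y b) (cube d) := fun b => Integrable.eval hK_L1 b
  choose U hU using fun n : ℕ => exists_sol K hk hkp hdiv lam hl (n + 1 : ℝ) (by positivity) f hf hb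
  have key : ∀ (n : ℕ) (t : ℝ), 0 ≤ t → t ≤ n + 1 → ∀ x, U ⌈t⌉₊ (t, x) = U n (t, x) := fun n t ht htn x =>
    Sol.agree hk hkp hl (hU _) (hU n) t ht (by linarith [Nat.le_ceil t]) htn x
  have hc : ∀ t : ℝ, t ≤ (⌈t⌉₊ : ℝ) + 1 := fun t => by linarith [Nat.le_ceil t]
  refine ⟨fun t x => U ⌈t⌉₊ (t, x), ?_, ?_, ?_, ?_, ?_, ?_⟩
  · ext x; exact (hU _).init x
  · intro φ h1 h2 t ht
    have h := (hU ⌈t⌉₊).weak φ ⟨h1, h2⟩ t ht (hc t)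
    have e : ∀ s, 0 ≤ s → s ≤ t → (fun x => U ⌈s⌉₊ (s, x)) = fun x => U ⌈t⌉₊ (s, x) := fun s hs hst =>
      funext fun x => key _ s hs (hst.trans (hc t)) x
    have e0 : ∀ x, U ⌈(0:ℝ)⌉₊ (0, x) = U ⌈t⌉₊ (0, x) := fun x => by rw [(hU _).init, (hU _).init]
    simp only [e0]
    rw [h]
    refine intervalIntegral.integral_congr fun s hs => ?_
    rw [uIcc_of_le ht] at hs
    have := e s hs.1 hs.2
    simp only [this, funext_iff.1 this]
  · rintro ⟨t, x⟩ ⟨ht, -⟩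
    simp only [mem_Ici] at ht
    have h := (hU ⌈t⌉₊).smooth (t, x) ⟨⟨ht, hc t⟩, mem_univ _⟩
    have hlt : t < (⌈t⌉₊ : ℝ) + 1 := by linarith [Nat.le_ceil t]
    have h2 : ContDiffWithinAt ℝ ∞ (fun p : ℝ × (Fin d → ℝ) => U ⌈p.1⌉₊ (p.1, p.2)) (Icc 0 ((⌈t⌉₊ : ℝ) + 1) ×ˢ univ) (t, x) :=
      h.congr (fun p hp => key _ p.1 hp.1.1 hp.1.2 p.2) rfl
    refine h2.mono_of_mem_nhdsWithin ?_
    have : (Iio ((⌈t⌉₊ : ℝ) + 1) ×ˢ univ : Set (ℝ × (Fin d → ℝ))) ∈ 𝓝 (t, x) :=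
      (isOpen_Iio.prod isOpen_univ).mem_nhds ⟨hlt, mem_univ _⟩
    filter_upwards [mem_nhdsWithin_of_mem_nhds this, self_mem_nhdsWithin] with p hp hq
    exact ⟨⟨hq.1, le_of_lt hp.1⟩, mem_univ _⟩
  · intro t ht; exact (hU _).per t
  · intro t ht x; exact (hU _).bd t ht (hc t) x
  · rintro σ h0 hw hp hm ⟨M, hM⟩ t ht
    have h := uniq (M := max M lam) (K := K) ht (le_max_of_le_right (by linarith)) hk hkp (σ := σ)
      ⟨fun s hs _ => ⟨hp s hs, hm s hs, fun x => (hM s hs x).trans (le_max_left _ _)⟩,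
        fun φ hφ s hs _ => hw φ hφ.1 hφ.2 s hs⟩ ((hU ⌈t⌉₊).ws hl (hc t) (le_max_right _ _))
      (by rw [h0]; ext x; exact ((hU _).init x).symm) t ht le_rfl
    exact h

end MKV

end

/-- well-posedness of the nonlinear McKean–Vlasov equation, Theorem 2:
under the assumptions on `K` (in `L¹`, divergence free, `K = ∇·V` with `V ∈ L^∞`),
for a smooth initial probability density `μ₀` on `T^d` with `1/λ ≤ μ₀ ≤ λ`, the
equation `∂_t ρ = −∇·((K∗ρ)ρ) + Δρ`, `ρ(0) = μ₀`, has a unique bounded solution; this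
solution is smooth on `ℝ⁺ × T^d` and satisfies `1/λ ≤ ρ(t,x) ≤ λ` for all `t ≥ 0`. -/
theorem mckean_vlasov_wellposedness (d : ℕ) (hd : 2 ≤ d)
    (K : (Fin d → ℝ) → (Fin d → ℝ))
    (hK_L1 : IntegrableOn K (cube d)) (hK_per : Per K)
    (hK_div : DistDivFree K)
    (V : (Fin d → ℝ) → Fin d → Fin d → ℝ)
    (hV_per : Per V) (hV_bdd : ∃ M, ∀ x, ‖V x‖ ≤ M)
    (hKV : IsDistDivOf K V)
    (lam : ℝ) (hlam : 1 < lam)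
    (μ₀ : (Fin d → ℝ) → ℝ)
    (hμ₀_smooth : ContDiff ℝ (⊤ : ℕ∞) μ₀) (hμ₀_per : Per μ₀)
    (hμ₀_bounds : ∀ x, 1 / lam ≤ μ₀ x ∧ μ₀ x ≤ lam)
    (hμ₀_prob : ∫ x in cube d, μ₀ x = 1) :
    ∃ ρ : ℝ → (Fin d → ℝ) → ℝ,
      ρ 0 = μ₀ ∧
      WeakMKV K ρ ∧
      ContDiffOn ℝ (⊤ : ℕ∞) (fun p : ℝ × (Fin d → ℝ) => ρ p.1 p.2) (Set.Ici 0 ×ˢ Set.univ) ∧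
      (∀ t, 0 ≤ t → Per (ρ t)) ∧
      (∀ t, 0 ≤ t → ∀ x, 1 / lam ≤ ρ t x ∧ ρ t x ≤ lam) ∧
      (∀ σ : ℝ → (Fin d → ℝ) → ℝ, σ 0 = μ₀ → WeakMKV K σ →
        (∀ t, 0 ≤ t → Per (σ t)) →
        (∀ t, 0 ≤ t → AEStronglyMeasurable (σ t) (volume.restrict (cube d))) →
        (∃ M, ∀ t, 0 ≤ t → ∀ x, |σ t x| ≤ M) →
        ∀ t, 0 ≤ t → ∀ᵐ x ∂(volume.restrict (cube d)), σ t x = ρ t x) := by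
  exact MKV.main K hK_L1 hK_per hK_div lam hlam μ₀ ⟨hμ₀_smooth, hμ₀_per⟩ hμ₀_bounds

end
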